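/- arXiv:1009.4826 — 3 statements merged into one kernel-verified Lean document; each statement's English description precedes it below -/
import Mathlib

section
/- Let U be an n×n unimodular integer matrix, d a positive integer, and 2 ≤ k ≤ n. Then the set of x ∈ ℤ^n such that gcd((Ux)_{n−k+1}, ..., (Ux)_n) = d has natural density (ζ(k)·d^k)^{-1}. -/
open Filter

/-- Real value of the Riemann zeta function at a natural number argument. -/
noncomputable def zetaR (k : ℕ) : ℝ := ∑' n : ℕ, (1 : ℝ) / (n + 1 : ℝ) ^ k

open scoped Classical in
/-- Number of points of `S` in the cube `∏ i, [z i - B, z i + B)`. -/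
noncomputable def cubeCount {k : ℕ} (S : Set (Fin k → ℤ)) (z : Fin k → ℤ) (B : ℕ) : ℕ :=
  (Finset.filter (fun x => x ∈ S)
    (Fintype.piFinset fun i => Finset.Ico (z i - (B : ℤ)) (z i + (B : ℤ)))).card

/-- Natural density in `ℤ^k`: the limit of counts in cubes of side `2B`, for every center. -/
def HasDensity {k : ℕ} (S : Set (Fin k → ℤ)) (δ : ℝ) : Prop :=
  ∀ z : Fin k → ℤ,
    Tendsto (fun B : ℕ => (cubeCount S z B : ℝ) / (2 * (B : ℝ)) ^ k) atTop (nhds δ)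

lemma aux_moebius_tsum (k : ℕ) (hk : 2 ≤ k) :
    zetaR k * ∑' j : ℕ, (ArithmeticFunction.moebius j : ℝ) * (1 / (j : ℝ) ^ k) = 1 := by
  have hs : 1 < ((k : ℂ)).re := by
    simp only [Complex.natCast_re]; exact_mod_cast hk
  have h := LSeries_one_mul_Lseries_moebius hs
  have h1 : LSeries 1 (k : ℂ) = ((zetaR k : ℝ) : ℂ) := by
    rw [LSeries_one_eq_riemannZeta hs, zeta_eq_tsum_one_div_nat_add_one_cpow hs, zetaR,
      Complex.ofReal_tsum]
    refine tsum_congr fun n => ?_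
    push_cast
    rw [Complex.cpow_natCast]
  have h2 : LSeries (fun n => ((ArithmeticFunction.moebius n : ℤ) : ℂ)) (k : ℂ) =
      ((∑' j : ℕ, (ArithmeticFunction.moebius j : ℝ) * (1 / (j : ℝ) ^ k) : ℝ) : ℂ) := by
    rw [LSeries, Complex.ofReal_tsum]
    refine tsum_congr fun n => ?_
    rcases eq_or_ne n 0 with rfl | hn
    · simp
    · rw [LSeries.term_of_ne_zero hn]
      push_cast
      rw [Complex.cpow_natCast]
      ring
  rw [h1, h2] at h
  exact_mod_cast h

open scoped Classical in
lemma aux_pointwise (g d : ℕ) (hd : 1 ≤ d) :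
    HasSum (fun j : ℕ => (ArithmeticFunction.moebius j : ℝ) *
      (if j * d ∣ g ∧ g ≠ 0 then (1 : ℝ) else 0)) (if g = d then 1 else 0) := by
  by_cases h : d ∣ g ∧ g ≠ 0
  · obtain ⟨⟨e, rfl⟩, hg⟩ := h
    have he : e ≠ 0 := by rintro rfl; simp at hg
    have key : ∑ j ∈ e.divisors, (ArithmeticFunction.moebius j : ℝ) *
        (if j * d ∣ d * e ∧ d * e ≠ 0 then (1 : ℝ) else 0) = if d * e = d then 1 else 0 := by
      have := congrArg (fun f => (f : ArithmeticFunction ℤ) e)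
        ArithmeticFunction.coe_zeta_mul_moebius
      simp only [ArithmeticFunction.coe_zeta_mul_apply, ArithmeticFunction.one_apply] at this
      have h3 : (d * e = d) ↔ e = 1 := by
        constructor
        · intro h; exact Nat.eq_of_mul_eq_mul_left hd (by simpa using h)
        · rintro rfl; simp
      simp only [h3]
      have h4 : (if e = 1 then (1 : ℝ) else 0) = ((if e = 1 then 1 else 0 : ℤ) : ℝ) := by
        split_ifs <;> simp
      rw [h4, ← this]
      push_cast
      refine Finset.sum_congr rfl fun j hj => ?_
      rw [if_pos, mul_one]
      refine ⟨?_, hg⟩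
      rw [mul_comm]
      exact mul_dvd_mul_left d (Nat.dvd_of_mem_divisors hj)
    rw [← key]
    apply hasSum_sum_of_ne_finset_zero
    intro j hj
    rw [if_neg, mul_zero]
    rintro ⟨h1, -⟩
    apply hj
    rw [Nat.mem_divisors]
    refine ⟨?_, he⟩
    rw [mul_comm] at h1
    exact Nat.dvd_of_mul_dvd_mul_left hd h1
  · have h1 : ∀ j, ¬ (j * d ∣ g ∧ g ≠ 0) := fun j hj =>
      h ⟨(Dvd.intro_left j rfl).trans hj.1, hj.2⟩
    have h2 : g ≠ d := by
      rintro rfl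
      exact h ⟨dvd_rfl, by omega⟩
    simp only [h1, h2, if_false, mul_zero]
    exact hasSum_zero

open scoped Classical in
lemma aux_abstract {X : Type*} (box : ℕ → Finset X) (G : X → ℕ) (N : ℕ → ℝ) (hN : ∀ B, 0 ≤ N B)
    (k : ℕ) (hk : 2 ≤ k)
    (h1 : ∀ m : ℕ, 1 ≤ m → Tendsto (fun B => (((box B).filter fun x => m ∣ G x).card : ℝ) / N B)
      atTop (nhds (1 / (m : ℝ) ^ k)))
    (C : ℝ) (h2 : ∀ m : ℕ, 1 ≤ m → ∀ B : ℕ, 1 ≤ B →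
      (((box B).filter fun x => m ∣ G x ∧ G x ≠ 0).card : ℝ) / N B ≤ C * (1 / (m : ℝ) ^ k))
    (d : ℕ) (hd : 1 ≤ d) :
    Tendsto (fun B => (((box B).filter fun x => G x = d).card : ℝ) / N B)
      atTop (nhds (1 / (zetaR k * (d : ℝ) ^ k))) := by
  have hpow : Tendsto (fun m : ℕ => 1 / (m : ℝ) ^ k) atTop (nhds 0) := by
    simp only [one_div]
    exact (tendsto_pow_atTop (by omega)).comp tendsto_natCast_atTop_atTop |>.inv_tendsto_atTop
  have h0 : Tendsto (fun B => (((box B).filter fun x => G x = 0).card : ℝ) / N B)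
      atTop (nhds 0) := by
    rw [Metric.tendsto_atTop']
    intro ε hε
    obtain ⟨m, hm, hm1⟩ := ((hpow.eventually_lt_const hε).and (eventually_ge_atTop 1)).exists
    obtain ⟨B0, hB0⟩ := eventually_atTop.1 ((h1 m hm1).eventually_lt_const hm)
    refine ⟨B0, fun B hB => ?_⟩
    rw [Real.dist_eq, sub_zero, abs_of_nonneg (div_nonneg (Nat.cast_nonneg _) (hN B))]
    refine lt_of_le_of_lt ?_ (hB0 B hB.le)
    refine div_le_div_of_nonneg_right ?_ (hN B)
    exact_mod_cast Finset.card_le_card (Finset.monotone_filter_right _ (fun x _ hx => by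
      simp [hx]))
  have h3 : ∀ m : ℕ, 1 ≤ m →
      Tendsto (fun B => (((box B).filter fun x => m ∣ G x ∧ G x ≠ 0).card : ℝ) / N B)
      atTop (nhds (1 / (m : ℝ) ^ k)) := by
    intro m hm
    have := (h1 m hm).sub h0
    rw [sub_zero] at this
    refine this.congr fun B => ?_
    rw [← sub_div]
    congr 1
    rw [sub_eq_iff_eq_add]
    norm_cast
    rw [← Finset.card_union_of_disjoint]
    · congr 1
      ext x
      simp only [Finset.mem_filter, Finset.mem_union]
      by_cases hx : G x = 0 <;> simp [hx]
    · rw [Finset.disjoint_filter]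
      tauto
  have hsum : ∀ B, (((box B).filter fun x => G x = d).card : ℝ) / N B =
      ∑' j : ℕ, (ArithmeticFunction.moebius j : ℝ) *
        ((((box B).filter fun x => j * d ∣ G x ∧ G x ≠ 0).card : ℝ) / N B) := by
    intro B
    have := (hasSum_sum (s := box B) fun x _ => aux_pointwise (G x) d hd).div_const (N B)
    rw [Finset.sum_boole] at this
    rw [← this.tsum_eq]
    refine tsum_congr fun j => ?_
    rw [← Finset.mul_sum, Finset.sum_boole, mul_div_assoc]
  simp only [hsum]
  have hlim : 1 / (zetaR k * (d : ℝ) ^ k) =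
      ∑' j : ℕ, (ArithmeticFunction.moebius j : ℝ) * (1 / ((j * d : ℕ) : ℝ) ^ k) := by
    have hm := aux_moebius_tsum k hk
    have hz : zetaR k ≠ 0 := left_ne_zero_of_mul_eq_one hm
    have hd' : (d : ℝ) ^ k ≠ 0 := by positivity
    have : ∀ j : ℕ, (ArithmeticFunction.moebius j : ℝ) * (1 / ((j * d : ℕ) : ℝ) ^ k) =
      (ArithmeticFunction.moebius j : ℝ) * (1 / (j : ℝ) ^ k) * (1 / (d : ℝ) ^ k) := by
      intro j
      push_cast
      rw [mul_pow, mul_assoc, one_div_mul_one_div]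
    simp only [this]
    rw [tsum_mul_right, eq_one_div_of_mul_eq_one_right hm, one_div_mul_one_div]
  rw [hlim]
  have hC : Summable fun j : ℕ => C * (1 / (j : ℝ) ^ k) :=
    (Real.summable_one_div_nat_pow.2 (by omega)).mul_left C
  have hC2 : Summable fun j : ℕ => C * (1 / ((j * d : ℕ) : ℝ) ^ k) :=
    hC.comp_injective (i := fun j => j * d) (fun a b h => Nat.eq_of_mul_eq_mul_right hd h)
  refine tendsto_tsum_of_dominated_convergence hC2 ?_ ?_
  · intro j
    rcases Nat.eq_zero_or_pos j with rfl | hj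
    · simp
    · exact (h3 (j * d) (Nat.mul_pos hj hd)).const_mul _
  · filter_upwards [eventually_ge_atTop 1] with B hB j
    rcases Nat.eq_zero_or_pos j with rfl | hj
    · have : k ≠ 0 := by omega
      simp [this]
    · rw [norm_mul, Real.norm_eq_abs, Real.norm_eq_abs,
        abs_of_nonneg (div_nonneg (Nat.cast_nonneg _) (hN B))]
      refine le_trans ?_ (h2 (j * d) (Nat.mul_pos hj hd) B hB)
      refine mul_le_of_le_one_left (div_nonneg (Nat.cast_nonneg _) (hN B)) ?_
      exact_mod_cast ArithmeticFunction.abs_moebius_le_one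

lemma aux_card_zero (n k m : ℕ) [NeZero m] :
    (Finset.univ.filter fun y : Fin n → ZMod m => ∀ i : Fin n, n - k ≤ (i : ℕ) → y i = 0).card =
      m ^ (n - k) := by
  have : (Finset.univ.filter fun y : Fin n → ZMod m => ∀ i : Fin n, n - k ≤ (i : ℕ) → y i = 0) =
      Fintype.piFinset fun i : Fin n => if n - k ≤ (i : ℕ) then {0} else Finset.univ := by
    ext y
    simp only [Finset.mem_filter, Finset.mem_univ, true_and, Fintype.mem_piFinset]
    refine forall_congr' fun i => ?_
    split_ifs with h <;> simp [h]
  rw [this, Fintype.card_piFinset]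
  have h2 : ∀ i : Fin n, (if n - k ≤ (i : ℕ) then ({0} : Finset (ZMod m)) else Finset.univ).card =
      if (i : ℕ) < n - k then m else 1 := by
    intro i
    by_cases h : n - k ≤ (i : ℕ)
    · simp [h, not_lt.2 h]
    · simp [h, not_le.1 h, ZMod.card]
  simp only [h2]
  rw [Finset.prod_ite, Finset.prod_const_one, mul_one, Finset.prod_const]
  congr 1
  rw [Fin.card_filter_val_lt]
  omega

lemma aux_card_res (n k m : ℕ) [NeZero m] (V : Matrix (Fin n) (Fin n) (ZMod m))
    (hV : IsUnit V.det) :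
    (Finset.univ.filter fun y : Fin n → ZMod m =>
      ∀ i : Fin n, n - k ≤ (i : ℕ) → V.mulVec y i = 0).card = m ^ (n - k) := by
  rw [← aux_card_zero n k m]
  refine Finset.card_nbij' (fun y => V.mulVec y) (fun y => V⁻¹.mulVec y) ?_ ?_ ?_ ?_
  · intro y hy
    simpa using hy
  · intro y hy
    simpa [Matrix.mulVec_mulVec, Matrix.mul_nonsing_inv V hV] using hy
  · intro y hy
    simp [Matrix.mulVec_mulVec, Matrix.nonsing_inv_mul V hV]
  · intro y hy
    simp [Matrix.mulVec_mulVec, Matrix.mul_nonsing_inv V hV]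

lemma aux_Ico_card (m q : ℕ) (hm : 1 ≤ m) (a v : ℤ) :
    ((Finset.Ico a (a + q * m)).filter fun x => x ≡ v [ZMOD m]).card = q := by
  have hm' : (0 : ℤ) < m := by exact_mod_cast hm
  have h := Int.Ico_filter_modEq_card a (a + q * m) hm' v
  have h2 : (((a + q * m : ℤ) : ℚ) - v) / ((m : ℤ) : ℚ) = (a - v) / ((m : ℤ) : ℚ) + (q : ℕ) := by
    have : (m : ℚ) ≠ 0 := by positivity
    push_cast
    field_simp
    ring
  rw [h2, Int.ceil_add_natCast] at h
  have : (0 : ℤ) ≤ q := by positivity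
  simpa using h

lemma aux_box_card (n k m q : ℕ) (hm : 1 ≤ m) (U : Matrix (Fin n) (Fin n) ℤ)
    (hU : U.det = 1 ∨ U.det = -1) (a : Fin n → ℤ) :
    ((Fintype.piFinset fun i => Finset.Ico (a i) (a i + q * m)).filter fun x =>
      ∀ i : Fin n, n - k ≤ (i : ℕ) → (m : ℤ) ∣ U.mulVec x i).card = m ^ (n - k) * q ^ n := by
  have : NeZero m := ⟨by omega⟩
  set V : Matrix (Fin n) (Fin n) (ZMod m) := (Int.castRingHom (ZMod m)).mapMatrix U with hVdef
  have hV : IsUnit V.det := by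
    rw [hVdef, ← RingHom.map_det]
    rcases hU with h | h <;> simp [h]
  have hcast : ∀ (x : Fin n → ℤ) (i : Fin n),
      ((U.mulVec x i : ℤ) : ZMod m) = V.mulVec (fun j => (x j : ZMod m)) i := by
    intro x i
    simp [Matrix.mulVec, dotProduct, hVdef]
  rw [Finset.card_eq_sum_card_fiberwise (f := fun x j => ((x j : ℤ) : ZMod m))
    (t := Finset.univ.filter fun y : Fin n → ZMod m =>
      ∀ i : Fin n, n - k ≤ (i : ℕ) → V.mulVec y i = 0)]
  · rw [← aux_card_res n k m V hV]
    refine Finset.sum_const_nat ?_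
    intro y hy
    have hy' := (Finset.mem_filter.1 hy).2
    have : (((Fintype.piFinset fun i => Finset.Ico (a i) (a i + q * m)).filter fun x =>
      ∀ i : Fin n, n - k ≤ (i : ℕ) → (m : ℤ) ∣ U.mulVec x i).filter
        fun x => (fun j => ((x j : ℤ) : ZMod m)) = y) =
      Fintype.piFinset fun i => (Finset.Ico (a i) (a i + q * m)).filter
        fun x => x ≡ (y i).val [ZMOD m] := by
      have hz : ∀ (x : ℤ) (w : ZMod m), x ≡ w.val [ZMOD m] ↔ (x : ZMod m) = w := by
        intro x w
        rw [← ZMod.intCast_eq_intCast_iff]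
        simp
      ext x
      simp only [Finset.mem_filter, Fintype.mem_piFinset, hz]
      constructor
      · rintro ⟨⟨h1, h2⟩, h3⟩ i
        exact ⟨h1 i, congrFun h3 i⟩
      · intro h
        have h3 : (fun j => ((x j : ℤ) : ZMod m)) = y := funext fun i => (h i).2
        refine ⟨⟨fun i => (h i).1, fun i hi => ?_⟩, h3⟩
        rw [← ZMod.intCast_zmod_eq_zero_iff_dvd, hcast, h3]
        exact hy' i hi
    rw [this, Fintype.card_piFinset]
    simp only [aux_Ico_card m q hm]
    simp
  · intro x hx
    have hx' := (Finset.mem_filter.1 hx).2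
    simp only [Finset.coe_filter, Finset.mem_univ, true_and, Set.mem_ofPred_eq]
    intro i hi
    rw [← hcast, ZMod.intCast_zmod_eq_zero_iff_dvd]
    exact hx' i hi

lemma aux_bounds (n k m : ℕ) (hm : 1 ≤ m) (U : Matrix (Fin n) (Fin n) ℤ)
    (hU : U.det = 1 ∨ U.det = -1) (z : Fin n → ℤ) (B : ℕ) :
    m ^ (n - k) * (2 * B / m) ^ n ≤
      ((Fintype.piFinset fun i => Finset.Ico (z i - (B : ℤ)) (z i + (B : ℤ))).filter fun x =>
        ∀ i : Fin n, n - k ≤ (i : ℕ) → (m : ℤ) ∣ U.mulVec x i).card ∧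
    ((Fintype.piFinset fun i => Finset.Ico (z i - (B : ℤ)) (z i + (B : ℤ))).filter fun x =>
        ∀ i : Fin n, n - k ≤ (i : ℕ) → (m : ℤ) ∣ U.mulVec x i).card ≤
      m ^ (n - k) * (2 * B / m + 1) ^ n := by
  have e1 : 2 * B / m * m ≤ 2 * B := Nat.div_mul_le_self _ _
  have e2 : 2 * B < (2 * B / m + 1) * m := by
    have := Nat.lt_div_mul_add (a := 2 * B) (b := m) (by omega)
    linarith
  constructor
  · rw [← aux_box_card n k m (2 * B / m) hm U hU (fun i => z i - B)]
    refine Finset.card_le_card (Finset.filter_subset_filter _ ?_)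
    refine Fintype.piFinset_subset _ _ fun i => Finset.Ico_subset_Ico le_rfl ?_
    have : ((2 * B / m : ℕ) : ℤ) * m ≤ 2 * B := by exact_mod_cast e1
    linarith
  · rw [← aux_box_card n k m (2 * B / m + 1) hm U hU (fun i => z i - B)]
    refine Finset.card_le_card (Finset.filter_subset_filter _ ?_)
    refine Fintype.piFinset_subset _ _ fun i => Finset.Ico_subset_Ico le_rfl ?_
    have : (2 * B : ℤ) < ((2 * B / m + 1 : ℕ) : ℤ) * m := by exact_mod_cast e2
    linarith

lemma aux_tendsto (n k m : ℕ) (hkn : k ≤ n) (hm : 1 ≤ m) (U : Matrix (Fin n) (Fin n) ℤ)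
    (hU : U.det = 1 ∨ U.det = -1) (z : Fin n → ℤ) :
    Tendsto (fun B : ℕ =>
      (((Fintype.piFinset fun i => Finset.Ico (z i - (B : ℤ)) (z i + (B : ℤ))).filter fun x =>
        ∀ i : Fin n, n - k ≤ (i : ℕ) → (m : ℤ) ∣ U.mulVec x i).card : ℝ) / (2 * (B : ℝ)) ^ n)
      atTop (nhds (1 / (m : ℝ) ^ k)) := by
  have hm0 : (0 : ℝ) < m := by exact_mod_cast hm
  have hinv : Tendsto (fun B : ℕ => 1 / (2 * (B : ℝ))) atTop (nhds 0) := by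
    simp only [one_div]
    exact (tendsto_natCast_atTop_atTop.const_mul_atTop (by norm_num)).inv_tendsto_atTop
  have hlo : Tendsto (fun B : ℕ => ((2 * B / m : ℕ) : ℝ) / (2 * (B : ℝ))) atTop
      (nhds (1 / (m : ℝ))) := by
    have hl : Tendsto (fun B : ℕ => 1 / (m : ℝ) - 1 / (2 * (B : ℝ))) atTop
        (nhds (1 / (m : ℝ))) := by
      simpa using hinv.const_sub (1 / (m : ℝ))
    refine tendsto_of_tendsto_of_tendsto_of_le_of_le' hl tendsto_const_nhds ?_ ?_
    · filter_upwards [eventually_ge_atTop 1] with B hB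
      have hB0 : (0 : ℝ) < B := by exact_mod_cast hB
      have e2 : 2 * B < (2 * B / m + 1) * m := by
        have := Nat.lt_div_mul_add (a := 2 * B) (b := m) (by omega)
        linarith
      have e3 : (2 * B : ℝ) < (((2 * B / m : ℕ) : ℝ) + 1) * m := by exact_mod_cast e2
      rw [sub_le_iff_le_add, ← add_div, div_le_div_iff₀ hm0 (by positivity)]
      linarith
    · filter_upwards [eventually_ge_atTop 1] with B hB
      have hB0 : (0 : ℝ) < B := by exact_mod_cast hB
      have e3 : ((2 * B / m : ℕ) : ℝ) * m ≤ 2 * B := by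
        exact_mod_cast Nat.div_mul_le_self (2 * B) m
      rw [div_le_div_iff₀ (by positivity) hm0]
      linarith
  have hhi : Tendsto (fun B : ℕ => (((2 * B / m + 1 : ℕ) : ℝ)) / (2 * (B : ℝ))) atTop
      (nhds (1 / (m : ℝ))) := by
    have := hlo.add hinv
    rw [add_zero] at this
    refine this.congr fun B => ?_
    push_cast
    rw [add_div]
  have hval : (m : ℝ) ^ (n - k) * (1 / (m : ℝ)) ^ n = 1 / (m : ℝ) ^ k := by
    obtain ⟨r, rfl⟩ := Nat.exists_eq_add_of_le hkn
    rw [Nat.add_sub_cancel_left, pow_add, one_div, inv_pow, inv_pow]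
    field_simp
  have hl2 := (hlo.pow n).const_mul ((m : ℝ) ^ (n - k))
  have hh2 := (hhi.pow n).const_mul ((m : ℝ) ^ (n - k))
  rw [hval] at hl2 hh2
  refine tendsto_of_tendsto_of_tendsto_of_le_of_le hl2 hh2 ?_ ?_
  · intro B
    simp only
    rw [div_pow, ← mul_div_assoc]
    refine div_le_div_of_nonneg_right ?_ (by positivity)
    exact_mod_cast (aux_bounds n k m hm U hU z B).1
  · intro B
    simp only
    rw [div_pow, ← mul_div_assoc]
    refine div_le_div_of_nonneg_right ?_ (by positivity)
    exact_mod_cast (aux_bounds n k m hm U hU z B).2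

lemma aux_mulVec_bound (n : ℕ) (U : Matrix (Fin n) (Fin n) ℤ) (z : Fin n → ℤ) :
    ∃ K : ℕ, ∀ B : ℕ, 1 ≤ B →
      ∀ x ∈ Fintype.piFinset fun i => Finset.Ico (z i - (B : ℤ)) (z i + (B : ℤ)),
      ∀ i, (U.mulVec x i).natAbs ≤ K * B := by
  refine ⟨∑ i, ∑ j, (U i j).natAbs * ((z j).natAbs + 1), fun B hB x hx i => ?_⟩
  rw [Fintype.mem_piFinset] at hx
  calc (U.mulVec x i).natAbs ≤ ∑ j, (U i j * x j).natAbs := by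
        simp only [Matrix.mulVec, dotProduct]
        exact Int.natAbs_sum_le _ _
    _ ≤ ∑ j, (U i j).natAbs * ((z j).natAbs + 1) * B := by
        refine Finset.sum_le_sum fun j _ => ?_
        rw [Int.natAbs_mul, mul_assoc]
        refine Nat.mul_le_mul_left _ ?_
        have h1 := Finset.mem_Ico.1 (hx j)
        have h2 : (x j).natAbs ≤ (z j).natAbs + B := by omega
        nlinarith [Nat.zero_le (z j).natAbs]
    _ = (∑ j, (U i j).natAbs * ((z j).natAbs + 1)) * B := by rw [Finset.sum_mul]
    _ ≤ _ := by
        refine Nat.mul_le_mul_right _ ?_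
        exact Finset.single_le_sum (f := fun i => ∑ j, (U i j).natAbs * ((z j).natAbs + 1))
          (fun _ _ => Nat.zero_le _) (Finset.mem_univ i)

/-- Proposition: for unimodular `U` and `2 ≤ k ≤ n`, the set of `x` with
`gcd` of the last `k` coordinates of `Ux` equal to `d` has density `1/(ζ(k)·d^k)`. -/
theorem unimodular_gcd_last_coords_density (n k : ℕ) (hk2 : 2 ≤ k) (hkn : k ≤ n)
    (U : Matrix (Fin n) (Fin n) ℤ) (hU : U.det = 1 ∨ U.det = -1) (d : ℕ) (hd : 1 ≤ d) :
    HasDensity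
      {x : Fin n → ℤ |
        (Finset.univ.filter fun i : Fin n => n - k ≤ (i : ℕ)).gcd (U.mulVec x) = (d : ℤ)}
      (1 / (zetaR k * (d : ℝ) ^ k)) := by
  intro z
  set F := (Finset.univ.filter fun i : Fin n => n - k ≤ (i : ℕ)) with hF
  have hdvd : ∀ (x : Fin n → ℤ) (m : ℕ), m ∣ (F.gcd (U.mulVec x)).natAbs ↔
      ∀ i : Fin n, n - k ≤ (i : ℕ) → (m : ℤ) ∣ U.mulVec x i := by
    intro x m
    rw [← Int.natCast_dvd, Finset.dvd_gcd_iff]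
    simp [hF]
  have hiff : ∀ x : Fin n → ℤ,
      F.gcd (U.mulVec x) = (d : ℤ) ↔ (F.gcd (U.mulVec x)).natAbs = d := by
    intro x
    have h : 0 ≤ F.gcd (U.mulVec x) := by
      rw [← Finset.normalize_gcd, ← Int.abs_eq_normalize]
      positivity
    omega
  obtain ⟨K, hK⟩ := aux_mulVec_bound n U z
  have main := aux_abstract
    (fun B : ℕ => Fintype.piFinset fun i => Finset.Ico (z i - (B : ℤ)) (z i + (B : ℤ)))
    (fun x => (F.gcd (U.mulVec x)).natAbs) (fun B : ℕ => (2 * (B : ℝ)) ^ n)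
    (fun B => by positivity) k hk2 ?_ (((2 + K : ℝ) / 2) ^ n) ?_ d hd
  · refine main.congr fun B => ?_
    simp only [cubeCount, Set.mem_ofPred_eq, hiff]
  · intro m hm
    refine (aux_tendsto n k m hkn hm U hU z).congr fun B => ?_
    simp only [hdvd]
  · intro m hm B hB
    have hm0 : (0 : ℝ) < m := by exact_mod_cast hm
    have hB0 : (0 : ℝ) < B := by exact_mod_cast hB
    by_cases hex : ∃ x ∈ Fintype.piFinset fun i => Finset.Ico (z i - (B : ℤ)) (z i + (B : ℤ)),
        m ∣ (F.gcd (U.mulVec x)).natAbs ∧ (F.gcd (U.mulVec x)).natAbs ≠ 0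
    · obtain ⟨x, hx, hmx, hx0⟩ := hex
      have hmK : m ≤ K * B := by
        have : ∃ i ∈ F, U.mulVec x i ≠ 0 := by
          by_contra! hcon
          exact hx0 (by rw [Int.natAbs_eq_zero, Finset.gcd_eq_zero_iff]; exact hcon)
        obtain ⟨i, hi, hi0⟩ := this
        refine le_trans ?_ (hK B hB x hx i)
        refine Nat.le_of_dvd (Int.natAbs_pos.2 hi0) ?_
        rw [← Int.natCast_dvd]
        exact (hdvd x m).1 hmx i (by simpa [hF] using hi)
      have hmK' : (m : ℝ) ≤ K * B := by exact_mod_cast hmK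
      have hq : ((2 * B / m + 1 : ℕ) : ℝ) ≤ (2 + K) * B / m := by
        have e3 : ((2 * B / m : ℕ) : ℝ) * m ≤ 2 * B := by
          exact_mod_cast Nat.div_mul_le_self (2 * B) m
        rw [le_div_iff₀ hm0]
        push_cast
        linarith
      rw [div_le_iff₀ (by positivity)]
      have hc := (aux_bounds n k m hm U hU z B).2
      calc _ ≤ ((m ^ (n - k) * (2 * B / m + 1) ^ n : ℕ) : ℝ) := by
            refine Nat.cast_le.2 (le_trans (Finset.card_le_card ?_) hc)
            intro y hy
            rw [Finset.mem_filter] at hy ⊢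
            exact ⟨hy.1, (hdvd y m).1 hy.2.1⟩
        _ = (m : ℝ) ^ (n - k) * ((2 * B / m + 1 : ℕ) : ℝ) ^ n := by
            rw [Nat.cast_mul, Nat.cast_pow, Nat.cast_pow]
        _ ≤ (m : ℝ) ^ (n - k) * ((2 + K) * B / m) ^ n := by gcongr
        _ = ((2 + K : ℝ) / 2) ^ n * (1 / (m : ℝ) ^ k) * (2 * (B : ℝ)) ^ n := by
            have h1 : (m : ℝ) ^ n = m ^ (n - k) * m ^ k := by
              rw [← pow_add, Nat.sub_add_cancel hkn]
            rw [div_pow, div_pow, mul_pow, mul_pow, h1]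
            field_simp
    · push Not at hex
      rw [Finset.filter_eq_empty_iff.2]
      · simp only [Finset.card_empty, Nat.cast_zero, zero_div]
        positivity
      · rintro x hx ⟨h1, h2⟩
        exact h2 (hex x hx h1)
end

section
/- Let n ≥ 2 and let d_1,...,d_k be positive integers with k ≤ m if m < n and k < n otherwise. The natural density of n×m integer matrices A whose HNF has diagonal beginning with (d_1, d_2, ..., d_k) equals (ζ(n)·ζ(n−1)·...·ζ(n−k+1) · d_1^n · d_2^{n−1} · ... · d_k^{n−k+1})^{-1}. -/
open Filter

open scoped Classical in
/-- Number of matrices of `S` in the cube of side `2B` centered at `z`. -/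
noncomputable def matCubeCount {n m : ℕ} (S : Set (Matrix (Fin n) (Fin m) ℤ))
    (z : Matrix (Fin n) (Fin m) ℤ) (B : ℕ) : ℕ :=
  (Finset.filter (fun A : Fin n → Fin m → ℤ => Matrix.of A ∈ S)
    (Fintype.piFinset fun i =>
      Fintype.piFinset fun l => Finset.Ico (z i l - (B : ℤ)) (z i l + (B : ℤ)))).card

/-- Natural density of a set of `n × m` integer matrices, via counting in cubes
of side `2B` and arbitrary center, normalized by `(2B)^(nm)`. -/
def HasMatDensity {n m : ℕ} (S : Set (Matrix (Fin n) (Fin m) ℤ)) (δ : ℝ) : Prop :=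
  ∀ z : Matrix (Fin n) (Fin m) ℤ,
    Tendsto (fun B : ℕ => (matCubeCount S z B : ℝ) / (2 * (B : ℝ)) ^ (n * m))
      atTop (nhds δ)

/-- `H` is in Hermite normal form with `r` nonzero rows and pivot columns `j`. -/
def IsHNFWith {n m : ℕ} (H : Matrix (Fin n) (Fin m) ℤ) (r : ℕ) (hr : r ≤ n)
    (j : Fin r → Fin m) : Prop :=
  StrictMono j ∧
  (∀ i : Fin n, r ≤ (i : ℕ) → ∀ l, H i l = 0) ∧
  (∀ i : Fin r, 0 < H (Fin.castLE hr i) (j i)) ∧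
  (∀ i : Fin r, ∀ l : Fin m, (l : ℕ) < (j i : ℕ) → H (Fin.castLE hr i) l = 0) ∧
  (∀ i : Fin r, ∀ k : Fin n, (k : ℕ) < (i : ℕ) →
    0 ≤ H k (j i) ∧ H k (j i) < H (Fin.castLE hr i) (j i))

/-- `H` is in Hermite normal form. -/
def IsHNF {n m : ℕ} (H : Matrix (Fin n) (Fin m) ℤ) : Prop :=
  ∃ (r : ℕ) (hr : r ≤ n) (j : Fin r → Fin m), IsHNFWith H r hr j

/-- A square integer matrix is unimodular if its determinant is `±1`. -/
def IsUnimodular {n : ℕ} (U : Matrix (Fin n) (Fin n) ℤ) : Prop :=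
  U.det = 1 ∨ U.det = -1

/-- `H` is the Hermite normal form of `A`: `H` is in HNF and `A = U * H`
for some unimodular `U`. -/
def IsHNFOf {n m : ℕ} (H A : Matrix (Fin n) (Fin m) ℤ) : Prop :=
  IsHNF H ∧ ∃ U : Matrix (Fin n) (Fin n) ℤ, IsUnimodular U ∧ A = U * H


section Density
open Finset Filter Topology

variable {ι : Type} [Fintype ι] [DecidableEq ι]

noncomputable def zbox (z : ι → ℤ) (B : ℕ) : Finset (ι → ℤ) :=
  Fintype.piFinset fun i => Finset.Ico (z i - (B : ℤ)) (z i + (B : ℤ))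

open scoped Classical in
noncomputable def cnt (S : Set (ι → ℤ)) (z : ι → ℤ) (B : ℕ) : ℕ :=
  ((zbox z B).filter (fun f => f ∈ S)).card

def HasD (S : Set (ι → ℤ)) (δ : ℝ) : Prop :=
  ∀ z : ι → ℤ, Tendsto (fun B : ℕ => (cnt S z B : ℝ) / (2 * (B : ℝ)) ^ Fintype.card ι)
    atTop (𝓝 δ)

lemma zbox_card (z : ι → ℤ) (B : ℕ) : (zbox z B).card = (2 * B) ^ Fintype.card ι := by
  unfold zbox
  rw [Fintype.card_piFinset]
  have : ∀ i, (Finset.Ico (z i - (B : ℤ)) (z i + (B : ℤ))).card = 2 * B := by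
    intro i; rw [Int.card_Ico]; omega
  simp [this]

lemma cnt_univ (z : ι → ℤ) (B : ℕ) : cnt (Set.univ) z B = (2 * B) ^ Fintype.card ι := by
  classical
  rw [← zbox_card z B]; unfold cnt; simp

lemma hasD_univ : HasD (Set.univ : Set (ι → ℤ)) 1 := by
  intro z
  refine tendsto_const_nhds.congr' ?_
  filter_upwards [eventually_gt_atTop 0] with B hB
  rw [cnt_univ]
  push_cast
  rw [div_self]
  positivity

lemma cnt_mono {S T : Set (ι → ℤ)} (h : S ⊆ T) (z B) : cnt S z B ≤ cnt T z B := by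
  classical
  unfold cnt
  apply Finset.card_le_card
  intro f hf
  simp only [Finset.mem_filter] at hf ⊢
  exact ⟨hf.1, h hf.2⟩

lemma cnt_union_le (S T : Set (ι → ℤ)) (z B) : cnt (S ∪ T) z B ≤ cnt S z B + cnt T z B := by
  classical
  unfold cnt
  refine le_trans (Finset.card_le_card ?_) (Finset.card_union_le _ _)
  intro f hf
  simp only [Finset.mem_filter, Finset.mem_union, Set.mem_union] at hf ⊢
  tauto

lemma cnt_biUnion_le {κ : Type*} (s : Finset κ) (S : κ → Set (ι → ℤ)) (z B) :
    cnt (⋃ a ∈ s, S a) z B ≤ ∑ a ∈ s, cnt (S a) z B := by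
  classical
  unfold cnt
  refine le_trans (Finset.card_le_card ?_) (Finset.card_biUnion_le)
  intro f hf
  simp only [Finset.mem_filter, Finset.mem_biUnion, Set.mem_iUnion] at hf ⊢
  obtain ⟨h1, a, ha, h2⟩ := hf
  exact ⟨a, ha, h1, h2⟩

lemma cnt_biUnion {κ : Type*} (s : Finset κ) (S : κ → Set (ι → ℤ))
    (hd : ∀ a ∈ s, ∀ b ∈ s, a ≠ b → Disjoint (S a) (S b)) (z B) :
    cnt (⋃ a ∈ s, S a) z B = ∑ a ∈ s, cnt (S a) z B := by
  classical
  unfold cnt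
  rw [← Finset.card_biUnion]
  · congr 1
    ext f
    simp only [Finset.mem_filter, Finset.mem_biUnion, Set.mem_iUnion]
    constructor
    · rintro ⟨h1, a, ha, h2⟩
      exact ⟨a, ha, h1, h2⟩
    · rintro ⟨a, ha, h1, h2⟩
      exact ⟨h1, a, ha, h2⟩
  · intro a ha b hb hab
    change Disjoint _ _
    rw [Finset.disjoint_left]
    intro f h1 h2
    simp only [Finset.mem_filter] at h1 h2
    exact Set.disjoint_left.mp (hd a ha b hb hab) h1.2 h2.2

lemma HasD.biUnion {κ : Type*} (s : Finset κ) (S : κ → Set (ι → ℤ)) (δ : κ → ℝ)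
    (hd : ∀ a ∈ s, ∀ b ∈ s, a ≠ b → Disjoint (S a) (S b))
    (h : ∀ a ∈ s, HasD (S a) (δ a)) : HasD (⋃ a ∈ s, S a) (∑ a ∈ s, δ a) := by
  intro z
  have := tendsto_finsetSum s (fun a ha => h a ha z)
  refine this.congr ?_
  intro B
  rw [cnt_biUnion s S hd]
  push_cast
  rw [Finset.sum_div]

lemma cnt_translate (S : Set (ι → ℤ)) (v z : ι → ℤ) (B) :
    cnt {f | f - v ∈ S} z B = cnt S (z - v) B := by
  classical
  unfold cnt
  refine Finset.card_bij (fun f _ => f - v) ?_ ?_ ?_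
  · intro f hf
    simp only [Finset.mem_filter, zbox, Fintype.mem_piFinset, Finset.mem_Ico, Set.mem_ofPred_eq,
      Pi.sub_apply] at hf ⊢
    refine ⟨fun i => ?_, hf.2⟩
    have := hf.1 i
    omega
  · intro f _ g _ h
    exact sub_left_injective h
  · intro g hg
    simp only [Finset.mem_filter, zbox, Fintype.mem_piFinset, Finset.mem_Ico, Set.mem_ofPred_eq,
      Pi.sub_apply] at hg ⊢
    refine ⟨g + v, ⟨⟨fun i => ?_, by simpa using hg.2⟩, by simp⟩⟩
    have := hg.1 i
    simp only [Pi.add_apply]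
    omega

lemma HasD.translate {S : Set (ι → ℤ)} {δ : ℝ} (h : HasD S δ) (v : ι → ℤ) :
    HasD {f | f - v ∈ S} δ := by
  intro z
  simp_rw [cnt_translate]
  exact h (z - v)

lemma card_modEq_abs (M : ℕ) (hM : 0 < M) (v z : ℤ) (B : ℕ) :
    |(((Finset.Ico (z - (B : ℤ)) (z + (B : ℤ))).filter
      (fun x => x ≡ v [ZMOD M])).card : ℝ) - 2 * B / M| ≤ 1 := by
  have hM' : (0 : ℤ) < M := by exact_mod_cast hM
  have hMq : (0 : ℚ) < M := by exact_mod_cast hM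
  have h := Int.Ico_filter_modEq_card (z - (B : ℤ)) (z + (B : ℤ)) hM' v
  set c := ((Finset.Ico (z - (B : ℤ)) (z + (B : ℤ))).filter (fun x => x ≡ v [ZMOD M])).card
  have e1 := Int.ceil_lt_add_one ((((z + (B : ℤ) : ℤ) : ℚ) - v) / ((M : ℤ) : ℚ))
  have e2 := Int.le_ceil ((((z + (B : ℤ) : ℤ) : ℚ) - v) / ((M : ℤ) : ℚ))
  have e3 := Int.ceil_lt_add_one ((((z - (B : ℤ) : ℤ) : ℚ) - v) / ((M : ℤ) : ℚ))
  have e4 := Int.le_ceil ((((z - (B : ℤ) : ℤ) : ℚ) - v) / ((M : ℤ) : ℚ))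
  have hmono : ⌈(((z - (B : ℤ) : ℤ) : ℚ) - v) / ((M : ℤ) : ℚ)⌉ ≤
      ⌈(((z + (B : ℤ) : ℤ) : ℚ) - v) / ((M : ℤ) : ℚ)⌉ := by
    apply Int.ceil_mono
    have hMq' : (0 : ℚ) < ((M : ℤ) : ℚ) := by exact_mod_cast hM
    gcongr
    omega
  rw [max_eq_left (by omega)] at h
  have hq : |(c : ℚ) - 2 * B / M| ≤ 1 := by
    have hc : (c : ℚ) = (⌈(((z + (B : ℤ) : ℤ) : ℚ) - v) / ((M : ℤ) : ℚ)⌉ : ℚ) -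
      (⌈(((z - (B : ℤ) : ℤ) : ℚ) - v) / ((M : ℤ) : ℚ)⌉ : ℚ) := by exact_mod_cast h
    have hd : (((z + (B : ℤ) : ℤ) : ℚ) - v) / ((M : ℤ) : ℚ) -
      (((z - (B : ℤ) : ℤ) : ℚ) - v) / ((M : ℤ) : ℚ) = 2 * B / M := by
      push_cast; field_simp; ring
    rw [hc, ← hd, abs_le]
    constructor <;> linarith
  have := (Rat.cast_le (K := ℝ)).mpr hq
  push_cast at this
  exact this

lemma card_modEq_tendsto (M : ℕ) (hM : 0 < M) (v z : ℤ) :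
    Tendsto (fun B : ℕ =>
      (((Finset.Ico (z - (B : ℤ)) (z + (B : ℤ))).filter (fun x => x ≡ v [ZMOD M])).card : ℝ)
        / (2 * (B : ℝ))) atTop (𝓝 (1 / (M : ℝ))) := by
  have hM' : (0 : ℤ) < M := by exact_mod_cast hM
  have hMq : (0 : ℚ) < M := by exact_mod_cast hM
  have hMr : (0 : ℝ) < M := by exact_mod_cast hM
  have key := card_modEq_abs M hM v z
  have h1 : Tendsto (fun B : ℕ => (1 : ℝ) / (2 * (B : ℝ))) atTop (𝓝 0) := by
    have := tendsto_one_div_atTop_nhds_zero_nat (𝕜 := ℝ)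
    have h2 := this.const_mul (1/2 : ℝ)
    rw [mul_zero] at h2
    refine h2.congr fun B => ?_
    by_cases hB : (B : ℝ) = 0
    · simp [hB]
    · field_simp
  rw [tendsto_iff_dist_tendsto_zero]
  refine squeeze_zero' (Eventually.of_forall fun _ => dist_nonneg) ?_ h1
  filter_upwards [eventually_gt_atTop 0] with B hB
  have hB' : (0 : ℝ) < B := by exact_mod_cast hB
  rw [Real.dist_eq]
  have : (((Finset.Ico (z - (B : ℤ)) (z + (B : ℤ))).filter
      (fun x => x ≡ v [ZMOD M])).card : ℝ) / (2 * (B : ℝ)) - 1 / M =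
      ((((Finset.Ico (z - (B : ℤ)) (z + (B : ℤ))).filter
      (fun x => x ≡ v [ZMOD M])).card : ℝ) - 2 * B / M) / (2 * B) := by
    field_simp
  rw [this, abs_div, abs_of_pos (show (0 : ℝ) < 2 * B by positivity)]
  gcongr
  exact key B

lemma hasD_residue (M : ℕ) (hM : 0 < M) (v : ι → ℤ) :
    HasD {f | ∀ i, f i ≡ v i [ZMOD M]} ((1 / (M : ℝ)) ^ Fintype.card ι) := by
  classical
  intro z
  have := tendsto_finsetProd (Finset.univ : Finset ι)
    (fun i _ => card_modEq_tendsto M hM (v i) (z i))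
  simp only [Finset.prod_const, Finset.card_univ] at this
  refine this.congr fun B => ?_
  rw [Finset.prod_div_distrib, Finset.prod_const, Finset.card_univ]
  congr 1
  rw [← Nat.cast_prod, ← Fintype.card_piFinset]
  congr 1
  unfold cnt
  congr 1
  ext f
  simp only [zbox, Fintype.mem_piFinset, Finset.mem_filter, Set.mem_ofPred_eq]
  exact forall_and

lemma hasD_periodic (M : ℕ) (hM : 0 < M) (S : Set (ι → ℤ))
    (hS : ∀ f g : ι → ℤ, (∀ i, f i ≡ g i [ZMOD M]) → f ∈ S → g ∈ S) :
    ∃ δ, HasD S δ := by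
  classical
  have : NeZero M := ⟨hM.ne'⟩
  let R : Finset (ι → ZMod M) := Finset.univ.filter
    (fun r => (fun i => ((r i).val : ℤ)) ∈ S)
  have hSeq : S = ⋃ r ∈ R, {f : ι → ℤ | ∀ i, f i ≡ ((r i).val : ℤ) [ZMOD M]} := by
    ext f
    simp only [Set.mem_iUnion, Set.mem_ofPred_eq, exists_prop, R, Finset.mem_filter,
      Finset.mem_univ, true_and]
    constructor
    · intro hf
      have : ∀ i, f i ≡ (((f i : ZMod M)).val : ℤ) [ZMOD M] := by
        intro i
        rw [← ZMod.intCast_eq_intCast_iff]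
        simp
      exact ⟨fun i => (f i : ZMod M), hS _ _ this hf, this⟩
    · rintro ⟨r, hr, h⟩
      exact hS _ _ (fun i => (h i).symm) hr
  rw [hSeq]
  refine ⟨_, HasD.biUnion R _ (fun _ => (1 / (M : ℝ)) ^ Fintype.card ι) ?_
    (fun r _ => hasD_residue M hM _)⟩
  intro a _ b _ hab
  rw [Set.disjoint_left]
  intro f h1 h2
  apply hab
  funext i
  have h := (h1 i).symm.trans (h2 i)
  rw [← ZMod.intCast_eq_intCast_iff] at h
  simpa using h

/-- Density of a coset of a finite index subgroup. -/
lemma hasD_coset (K : AddSubgroup (ι → ℤ)) (hK : K.index ≠ 0) (v : ι → ℤ) :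
    HasD {f | f - v ∈ K} (1 / (K.index : ℝ)) := by
  classical
  have : K.FiniteIndex := ⟨hK⟩
  have : Fintype ((ι → ℤ) ⧸ K) := Fintype.ofFinite _
  have hper : ∀ f g : ι → ℤ, (∀ i, f i ≡ g i [ZMOD (K.index : ℕ)]) → f ∈ (K : Set (ι → ℤ)) →
      g ∈ (K : Set (ι → ℤ)) := by
    intro f g h hf
    choose w hw using fun i => (h i).dvd
    have : g = f + K.index • w := by
      funext i
      have := hw i
      rw [Pi.add_apply, Pi.smul_apply, nsmul_eq_mul]
      linarith
    rw [this]
    exact K.add_mem hf (K.nsmul_index_mem w)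
  obtain ⟨δ, hδ⟩ := hasD_periodic K.index (Nat.pos_of_ne_zero hK) (K : Set (ι → ℤ)) hper
  have hu : (Set.univ : Set (ι → ℤ)) = ⋃ q ∈ (Finset.univ : Finset ((ι → ℤ) ⧸ K)),
      {f : ι → ℤ | f - q.out ∈ (K : Set (ι → ℤ))} := by
    ext f
    simp only [Set.mem_univ, Finset.mem_univ, Set.iUnion_true, Set.mem_iUnion, Set.mem_ofPred_eq,
      true_iff]
    refine ⟨(f : (ι → ℤ) ⧸ K), ?_⟩
    have : ((Quotient.out (f : (ι → ℤ) ⧸ K) : ι → ℤ) : (ι → ℤ) ⧸ K) = f := Quotient.out_eq' _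
    rw [QuotientAddGroup.eq] at this
    rw [sub_eq_neg_add]; exact this
  have h1 := HasD.biUnion (Finset.univ : Finset ((ι → ℤ) ⧸ K))
    (fun q => {f : ι → ℤ | f - q.out ∈ (K : Set (ι → ℤ))}) (fun _ => δ) (by
      intro a _ b _ hab
      rw [Set.disjoint_left]
      intro f h1 h2
      apply hab
      rw [← Quotient.out_eq' a, ← Quotient.out_eq' b]
      apply QuotientAddGroup.eq.mpr
      have := K.sub_mem h1 h2
      have e : -Quotient.out a + Quotient.out b = f - Quotient.out a - (f - Quotient.out b) := by
        abel
      rw [e]; exact this) (fun q _ => hδ.translate _)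
  rw [← hu] at h1
  have h2 := tendsto_nhds_unique (h1 0) (hasD_univ 0)
  have h3 : δ = 1 / (K.index : ℝ) := by
    rw [Finset.sum_const, Finset.card_univ, ← Nat.card_eq_fintype_card] at h2
    have h4 : (K.index : ℝ) * δ = 1 := by rw [← h2, nsmul_eq_mul]; rfl
    have : (K.index : ℝ) ≠ 0 := by exact_mod_cast hK
    field_simp; linarith
  rw [← h3]
  exact hδ.translate v

/-- Density of the image, under an injective endomorphism, of a preimage of a set in a finite
group. -/
lemma hasD_image {G : Type*} [AddCommGroup G] [Finite G] (π : (ι → ℤ) →+ G)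
    (hπ : Function.Surjective π) (φ : (ι → ℤ) →+ (ι → ℤ)) (hφ : Function.Injective φ)
    (hI : φ.range.index ≠ 0) (R : Set G) :
    HasD (φ '' (π ⁻¹' R)) ((Nat.card R : ℝ) / (Nat.card G * φ.range.index)) := by
  classical
  have : Fintype G := Fintype.ofFinite _
  let K := π.ker.map φ
  have hker : π.ker.index = Nat.card G := by
    rw [AddSubgroup.index_ker, AddMonoidHom.range_eq_top.mpr hπ]; exact AddSubgroup.card_top
  have hKi : K.index = Nat.card G * φ.range.index := by
    rw [← hker]; exact AddSubgroup.index_map_of_injective _ hφ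
  have hK0 : K.index ≠ 0 := by
    rw [hKi]; exact mul_ne_zero Nat.card_pos.ne' hI
  choose s hs using hπ
  have hset : φ '' (π ⁻¹' R) = ⋃ g ∈ R.toFinset, {f | f - φ (s g) ∈ K} := by
    ext f
    simp only [Set.mem_iUnion, Set.mem_image, Set.mem_preimage, Set.mem_toFinset,
      Set.mem_ofPred_eq, exists_prop, K, AddSubgroup.mem_map, AddMonoidHom.mem_ker]
    constructor
    · rintro ⟨x, hx, rfl⟩
      exact ⟨π x, hx, x - s (π x), by simp [hs], by simp⟩
    · rintro ⟨g, hg, y, hy, h⟩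
      exact ⟨y + s g, by simp [hy, hs, hg], by simp [h]⟩
  rw [hset]
  have := HasD.biUnion R.toFinset (fun g => {f | f - φ (s g) ∈ K}) (fun _ => 1 / (K.index : ℝ)) (by
      intro a _ b _ hab
      rw [Set.disjoint_left]
      intro f h1 h2
      apply hab
      have h3 := K.sub_mem h2 h1
      obtain ⟨y, hy, h4⟩ := h3
      have h5 : φ y = φ (s a - s b) := by rw [h4, map_sub]; abel
      have h6 := hφ h5
      have h7 : π y = 0 := hy
      rw [h6, map_sub, hs, hs] at h7
      exact sub_eq_zero.mp h7) (fun g _ => hasD_coset K hK0 _)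
  convert this using 1
  rw [Finset.sum_const, hKi, Set.toFinset_card, Nat.card_eq_fintype_card (α := R), nsmul_eq_mul]
  push_cast
  ring

/-- Sandwich. -/
lemma hasD_sandwich (S : Set (ι → ℤ)) (U V : ℕ → Set (ι → ℤ)) (δ : ℕ → ℝ) (δ' : ℝ)
    (hU : ∀ T, HasD (U T) (δ T)) (hδ : Tendsto δ atTop (𝓝 δ'))
    (hSU : ∀ T, S ⊆ U T) (hUV : ∀ T, U T ⊆ S ∪ V T)
    (hV : ∀ ε > 0, ∀ z, ∃ T0, ∀ T ≥ T0, ∀ᶠ B : ℕ in atTop,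
      (cnt (V T) z B : ℝ) ≤ ε * (2 * (B : ℝ)) ^ Fintype.card ι) : HasD S δ' := by
  intro z
  rw [Metric.tendsto_atTop']
  intro ε hε
  obtain ⟨T0, hT0⟩ := hV (ε / 4) (by positivity) z
  obtain ⟨T1, hT1⟩ := (Metric.tendsto_atTop.mp hδ) (ε / 4) (by positivity)
  let T := max T0 T1
  have e1 := hT0 T (le_max_left _ _)
  have e2 := hT1 T (le_max_right _ _)
  have e3 := (Metric.tendsto_nhds.mp (hU T z)) (ε / 4) (by positivity)
  have := (e1.and (e3.and (eventually_gt_atTop 0)))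
  obtain ⟨N, hN⟩ := eventually_atTop.mp this
  refine ⟨N, fun B hB => ?_⟩
  obtain ⟨h1, h2, h3⟩ := hN B hB.le
  have hB' : (0 : ℝ) < (2 * (B : ℝ)) ^ Fintype.card ι := by
    have : (0 : ℝ) < B := by exact_mod_cast h3
    positivity
  have a1 : (cnt S z B : ℝ) / (2 * (B : ℝ)) ^ Fintype.card ι ≤
      (cnt (U T) z B : ℝ) / (2 * (B : ℝ)) ^ Fintype.card ι := by
    gcongr
    exact cnt_mono (hSU T) z B
  have a2 : (cnt (U T) z B : ℝ) / (2 * (B : ℝ)) ^ Fintype.card ι ≤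
      (cnt S z B : ℝ) / (2 * (B : ℝ)) ^ Fintype.card ι + ε / 4 := by
    have : (cnt (U T) z B : ℝ) ≤ cnt S z B + cnt (V T) z B := by
      exact_mod_cast (cnt_mono (hUV T) z B).trans (cnt_union_le _ _ _ _)
    rw [div_add' _ _ _ hB'.ne']
    gcongr
    linarith
  rw [Real.dist_eq, abs_lt] at *
  constructor <;> linarith [e2.1, e2.2, h2.1, h2.2]

/-- Counting with extra free coordinates. -/
lemma cnt_comap {κ : Type} [Fintype κ] [DecidableEq κ] (e : ι → κ) (he : Function.Injective e)
    (S : Set (ι → ℤ)) (z : κ → ℤ) (B : ℕ) :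
    cnt {f : κ → ℤ | f ∘ e ∈ S} z B =
      cnt S (z ∘ e) B * (2 * B) ^ (Fintype.card κ - Fintype.card ι) := by
  classical
  unfold cnt
  rw [Finset.card_eq_sum_card_fiberwise (f := fun f : κ → ℤ => f ∘ e)
    (t := (zbox (z ∘ e) B).filter (fun f => f ∈ S))]
  · rw [Finset.sum_const_nat (m := (2 * B) ^ (Fintype.card κ - Fintype.card ι))]
    intro g hg
    have : (((zbox z B).filter (fun f => f ∈ {f : κ → ℤ | f ∘ e ∈ S})).filter
        (fun f => f ∘ e = g)) = Fintype.piFinset (fun x => if h : ∃ i, e i = x then {g h.choose}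
          else Finset.Ico (z x - (B : ℤ)) (z x + (B : ℤ))) := by
      ext f
      simp only [Finset.mem_filter, zbox, Fintype.mem_piFinset, Set.mem_ofPred_eq] at hg ⊢
      constructor
      · rintro ⟨⟨h1, h2⟩, h3⟩ x
        split_ifs with h
        · rw [Finset.mem_singleton, ← h3]
          simp only [Function.comp]
          rw [h.choose_spec]
        · exact h1 x
      · intro h
        have h3 : f ∘ e = g := by
          funext i
          have := h (e i)
          have hx : ∃ j, e j = e i := ⟨i, rfl⟩
          rw [dif_pos hx, Finset.mem_singleton] at this
          simp only [Function.comp]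
          rw [this, he hx.choose_spec]
        refine ⟨⟨fun x => ?_, h3 ▸ hg.2⟩, h3⟩
        by_cases hx : ∃ i, e i = x
        · obtain ⟨i, rfl⟩ := hx
          have := hg.1 i
          rw [← h3] at this
          exact this
        · have := h x
          rwa [dif_neg hx] at this
    rw [this, Fintype.card_piFinset]
    have h2 : ∀ x, (if h : ∃ i, e i = x then {g h.choose}
          else Finset.Ico (z x - (B : ℤ)) (z x + (B : ℤ))).card =
          if x ∈ Finset.univ.image e then 1 else 2 * B := by
      intro x
      by_cases hx : ∃ i, e i = x
      · rw [dif_pos hx, if_pos (by simpa using hx)]; simp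
      · rw [dif_neg hx, if_neg (by simpa using hx), Int.card_Ico]; omega
    rw [Finset.prod_congr rfl (fun x _ => h2 x), Finset.prod_ite, Finset.prod_const_one, one_mul,
      Finset.prod_const]
    congr 1
    rw [← Finset.card_image_of_injective (Finset.univ : Finset ι) he |>.trans (Finset.card_univ),
      ← Finset.card_compl]
    congr 1
    ext x; simp
  · intro f hf
    simp only [Finset.coe_filter, zbox, Fintype.mem_piFinset, Set.mem_ofPred_eq,
      Function.comp] at hf ⊢
    exact ⟨fun i => hf.1 (e i), hf.2⟩

lemma HasD.comap {κ : Type} [Fintype κ] [DecidableEq κ] (e : ι → κ) (he : Function.Injective e)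
    {S : Set (ι → ℤ)} {δ : ℝ} (h : HasD S δ) : HasD {f : κ → ℤ | f ∘ e ∈ S} δ := by
  intro z
  refine (h (z ∘ e)).congr' ?_
  filter_upwards [eventually_gt_atTop 0] with B hB
  have hB' : (0 : ℝ) < B := by exact_mod_cast hB
  rw [cnt_comap e he]
  have hc := Fintype.card_le_of_injective e he
  have : (2 * (B : ℝ)) ^ Fintype.card κ = (2 * (B : ℝ)) ^ Fintype.card ι *
    (2 * (B : ℝ)) ^ (Fintype.card κ - Fintype.card ι) := by
    rw [← pow_add]; congr 1; omega
  rw [this]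
  push_cast
  rw [mul_div_mul_right]
  positivity

end Density

section Tail
open Finset Filter Topology

lemma card_big_primes (B C K N : ℕ) (hN : N ≠ 0) (hB : 1 ≤ B) (hCB : C ≤ B)
    (h : N ≤ C * B ^ K) :
    (N.primeFactors.filter (fun p => 2 * B < p)).card ≤ K + 1 := by
  set s := N.primeFactors.filter (fun p => 2 * B < p)
  have h1 : (2 * B) ^ s.card ≤ ∏ p ∈ s, p := by
    rw [← Finset.prod_const]
    apply Finset.prod_le_prod'
    intro p hp
    exact (Finset.mem_filter.mp hp).2.le
  have h2 : ∏ p ∈ s, p ≤ N := by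
    apply Nat.le_of_dvd (Nat.pos_of_ne_zero hN)
    refine (Finset.prod_dvd_prod_of_subset s N.primeFactors _ (Finset.filter_subset _ _)).trans ?_
    exact Nat.prod_primeFactors_dvd N
  have h3 : N ≤ (2 * B) ^ (K + 1) := by
    calc N ≤ C * B ^ K := h
      _ ≤ B * B ^ K := by gcongr
      _ = B ^ (K + 1) := by ring
      _ ≤ (2 * B) ^ (K + 1) := by gcongr; omega
  exact (Nat.pow_le_pow_iff_right (by omega : 1 < 2 * B)).mp (h1.trans (h2.trans h3))

lemma card_lin_cong (p : ℕ) (hp : p.Prime) (m t y0 : ℤ) (hm : ¬ (p : ℤ) ∣ m) (B : ℕ) :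
    (((Finset.Ico (y0 - (B : ℤ)) (y0 + B)).filter (fun y => (p : ℤ) ∣ m * y + t)).card : ℝ)
      ≤ 2 * B / p + 1 := by
  set Y := (Finset.Ico (y0 - (B : ℤ)) (y0 + B)).filter (fun y => (p : ℤ) ∣ m * y + t)
  rcases Y.eq_empty_or_nonempty with h | ⟨y1, hy1⟩
  · rw [h]; simp; positivity
  · have hsub : Y ⊆ (Finset.Ico (y0 - (B : ℤ)) (y0 + B)).filter (fun y => y ≡ y1 [ZMOD p]) := by
      intro y hy
      simp only [Y, Finset.mem_filter] at hy hy1 ⊢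
      refine ⟨hy.1, ?_⟩
      have h1 : (p : ℤ) ∣ m * (y1 - y) := by
        have := dvd_sub hy1.2 hy.2
        have e : m * y1 + t - (m * y + t) = m * (y1 - y) := by ring
        rwa [e] at this
      exact Int.modEq_iff_dvd.mpr (((Nat.prime_iff_prime_int.mp hp).dvd_or_dvd h1).resolve_left hm)
    have h1 : (Y.card : ℝ) ≤ _ := Nat.cast_le.mpr (Finset.card_le_card hsub)
    have h2 := (abs_le.mp (card_modEq_abs p hp.pos y1 y0 B)).2
    linarith

open scoped Classical in
noncomputable def pairSet (T : ℕ) (m s t x0 y0 : ℤ) (B : ℕ) : Finset (ℤ × ℤ) :=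
  ((Finset.Ico (x0 - (B : ℤ)) (x0 + B)) ×ˢ (Finset.Ico (y0 - (B : ℤ)) (y0 + B))).filter
    (fun q => ∃ p : ℕ, p.Prime ∧ T < p ∧ ¬ (p : ℤ) ∣ m ∧ (p : ℤ) ∣ m * q.1 + s ∧
      (p : ℤ) ∣ m * q.2 + t)

lemma pair_bound (T K C : ℕ) (hT : 0 < T) (m s t x0 y0 : ℤ) (B : ℕ) (hB : 1 ≤ B) (hCB : C ≤ B)
    (hbd : ∀ x ∈ Finset.Ico (x0 - (B : ℤ)) (x0 + B), (m * x + s).natAbs ≤ C * B ^ K) :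
    ((pairSet T m s t x0 y0 B).card : ℝ) ≤ 4 * (2 * B) ^ 2 / T + 2 * B * (K + 2) := by
  classical
  set X := Finset.Ico (x0 - (B : ℤ)) (x0 + B) with hX
  set Y := Finset.Ico (y0 - (B : ℤ)) (y0 + B) with hY
  have hXc : X.card = 2 * B := by rw [hX, Int.card_Ico]; omega
  have hYc : Y.card = 2 * B := by rw [hY, Int.card_Ico]; omega
  have hBr : (1 : ℝ) ≤ B := by exact_mod_cast hB
  by_cases hm : m = 0
  · have : pairSet T m s t x0 y0 B = ∅ := by
      unfold pairSet
      rw [Finset.filter_eq_empty_iff]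
      rintro q _ ⟨p, _, _, h, _⟩
      exact h (hm ▸ dvd_zero _)
    rw [this]; simp; positivity
  let P1 := (Finset.Ioc T (2 * B)).filter (fun p : ℕ => p.Prime ∧ ¬ (p : ℤ) ∣ m)
  let F1 := P1.biUnion (fun p => (X.filter (fun x => (p : ℤ) ∣ m * x + s)) ×ˢ
    (Y.filter (fun y => (p : ℤ) ∣ m * y + t)))
  let F2 := (X.filter (fun x => m * x + s = 0)) ×ˢ Y
  let F3 := (X.filter (fun x => m * x + s ≠ 0)).biUnion (fun x =>
    (((m * x + s).natAbs.primeFactors.filter (fun p => 2 * B < p)).filter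
      (fun p : ℕ => ¬ (p : ℤ) ∣ m)).biUnion (fun p =>
      ({x} : Finset ℤ) ×ˢ (Y.filter (fun y => (p : ℤ) ∣ m * y + t))))
  have hsub : pairSet T m s t x0 y0 B ⊆ F1 ∪ (F2 ∪ F3) := by
    rintro ⟨x, y⟩ hq
    simp only [pairSet, Finset.mem_filter, Finset.mem_product] at hq
    obtain ⟨⟨hx, hy⟩, p, hp, hTp, hpm, h1, h2⟩ := hq
    simp only [Finset.mem_union]
    by_cases hp2 : p ≤ 2 * B
    · left
      simp only [F1, P1, Finset.mem_biUnion, Finset.mem_filter, Finset.mem_product, Finset.mem_Ioc]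
      exact ⟨p, ⟨⟨hTp, hp2⟩, hp, hpm⟩, ⟨hx, h1⟩, hy, h2⟩
    · right
      by_cases h0 : m * x + s = 0
      · left
        simp only [F2, Finset.mem_filter, Finset.mem_product]
        exact ⟨⟨hx, h0⟩, hy⟩
      · right
        simp only [F3, Finset.mem_biUnion, Finset.mem_filter, Finset.mem_product,
          Finset.mem_singleton, Nat.mem_primeFactors]
        exact ⟨x, ⟨hx, h0⟩, p, ⟨⟨⟨hp, Int.natCast_dvd.mp h1, by simpa using h0⟩, by omega⟩, hpm⟩,
          rfl, hy, h2⟩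
  have hF1 : (F1.card : ℝ) ≤ 4 * (2 * B) ^ 2 / T := by
    have e1 : (F1.card : ℝ) ≤ ∑ p ∈ P1, 4 * (2 * (B : ℝ)) ^ 2 * ((p : ℝ) ^ 2)⁻¹ := by
      have : (F1.card : ℝ) ≤ ((∑ p ∈ P1, ((X.filter (fun x => (p : ℤ) ∣ m * x + s)) ×ˢ
        (Y.filter (fun y => (p : ℤ) ∣ m * y + t))).card : ℕ) : ℝ) :=
        Nat.cast_le.mpr Finset.card_biUnion_le
      refine this.trans ?_
      push_cast
      apply Finset.sum_le_sum
      intro p hp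
      simp only [P1, Finset.mem_filter, Finset.mem_Ioc] at hp
      obtain ⟨⟨hp1, hp2⟩, hp3, hp4⟩ := hp
      have hp0 : (0 : ℝ) < p := by exact_mod_cast hp3.pos
      have hp2' : (p : ℝ) ≤ 2 * B := by exact_mod_cast hp2
      have hle : 2 * (B : ℝ) / p + 1 ≤ 2 * (2 * B) / p := by
        rw [div_add_one hp0.ne']; gcongr; linarith
      have a1 := (card_lin_cong p hp3 m s x0 hp4 B).trans hle
      have a2 := (card_lin_cong p hp3 m t y0 hp4 B).trans hle
      rw [Finset.card_product]; push_cast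
      calc _ ≤ (2 * (2 * (B : ℝ)) / p) * (2 * (2 * B) / p) := by gcongr
        _ = _ := by field_simp; ring
    refine e1.trans ?_
    rw [← Finset.mul_sum]
    by_cases hTB : T ≤ 2 * B
    · have e2 : ∑ p ∈ P1, ((p : ℝ) ^ 2)⁻¹ ≤ ∑ p ∈ Finset.Ioc T (2 * B), ((p : ℝ) ^ 2)⁻¹ :=
        Finset.sum_le_sum_of_subset_of_nonneg (Finset.filter_subset _ _)
          (fun _ _ _ => by positivity)
      have e3 := sum_Ioc_inv_sq_le_sub (α := ℝ) hT.ne' hTB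
      have e4 : (0 : ℝ) ≤ ((2 * B : ℕ) : ℝ)⁻¹ := by positivity
      rw [div_eq_mul_inv]
      gcongr
      linarith
    · have : P1 = ∅ := by
        simp only [P1]; rw [Finset.Ioc_eq_empty (by omega)]; simp
      rw [this]; simp; positivity
  have hF2 : (F2.card : ℝ) ≤ 2 * B := by
    have : F2.card ≤ 1 * (2 * B) := by
      rw [Finset.card_product, hYc]
      gcongr
      rw [Finset.card_le_one]
      intro a ha b hb
      simp only [Finset.mem_filter] at ha hb
      have : m * (a - b) = 0 := by linarith [ha.2, hb.2]
      rcases mul_eq_zero.mp this with h | h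
      · exact absurd h hm
      · omega
    rw [one_mul] at this
    exact_mod_cast this
  have hF3 : (F3.card : ℝ) ≤ 2 * B * (K + 1) := by
    have : F3.card ≤ (2 * B) * (K + 1) := by
      rw [← hXc]
      refine Finset.card_biUnion_le.trans ?_
      refine (Finset.sum_le_card_nsmul _ _ (K + 1) ?_).trans ?_
      · intro x hx
        simp only [Finset.mem_filter] at hx
        refine Finset.card_biUnion_le.trans ?_
        refine (Finset.sum_le_card_nsmul _ _ 1 ?_).trans ?_
        · intro p hp
          simp only [Finset.mem_filter, Nat.mem_primeFactors] at hp
          obtain ⟨⟨⟨hp1, _⟩, hp2⟩, hp3⟩ := hp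
          rw [Finset.card_product, Finset.card_singleton, one_mul]
          have := card_lin_cong p hp1 m t y0 hp3 B
          have hp0 : (0 : ℝ) < p := by exact_mod_cast hp1.pos
          have hp2' : 2 * (B : ℝ) < p := by exact_mod_cast hp2
          have h3 : 2 * (B : ℝ) / p < 1 := by rw [div_lt_one hp0]; exact hp2'
          have h4 : ((Y.filter (fun y => (p : ℤ) ∣ m * y + t)).card : ℝ) < 2 := by linarith
          have h5 : (Y.filter (fun y => (p : ℤ) ∣ m * y + t)).card < 2 := by exact_mod_cast h4
          omega
        · rw [smul_eq_mul, mul_one]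
          refine (Finset.card_filter_le _ _).trans ?_
          exact card_big_primes B C K _ (by simpa using hx.2) hB hCB (hbd x hx.1)
      · rw [smul_eq_mul]
        gcongr
        exact Finset.filter_subset _ _
    exact_mod_cast this
  have h1 := (Finset.card_le_card hsub).trans ((Finset.card_union_le _ _).trans
    (Nat.add_le_add_left (Finset.card_union_le _ _) _))
  have h2 : ((pairSet T m s t x0 y0 B).card : ℝ) ≤ F1.card + (F2.card + F3.card) := by
    exact_mod_cast h1
  linarith

/-- Fibering over two coordinates. -/
lemma cnt_two_coords {ι : Type} [Fintype ι] [DecidableEq ι] (a b : ι) (hab : a ≠ b)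
    (E : Set (ι → ℤ)) (z : ι → ℤ) (B : ℕ) (c : ℝ)
    (h : ∀ g : ι → ℤ, ∃ F : Finset (ℤ × ℤ), ((∀ i, i ≠ a → i ≠ b → 
        g i ∈ Finset.Ico (z i - (B : ℤ)) (z i + B)) → (F.card : ℝ) ≤ c) ∧
      ∀ f ∈ E, f ∈ zbox z B → (∀ i, i ≠ a → i ≠ b → f i = g i) → (f a, f b) ∈ F) :
    (cnt E z B : ℝ) ≤ c * (2 * (B : ℝ)) ^ (Fintype.card ι - 2) := by
  classical
  let t : Finset (ι → ℤ) := Fintype.piFinset (fun i => if i = a ∨ i = b then {0} else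
    Finset.Ico (z i - (B : ℤ)) (z i + B))
  let r : (ι → ℤ) → (ι → ℤ) := fun f i => if i = a ∨ i = b then 0 else f i
  have ht : t.card = (2 * B) ^ (Fintype.card ι - 2) := by
    rw [Fintype.card_piFinset]
    have h2 : ∀ i, (if i = a ∨ i = b then {0} else
      Finset.Ico (z i - (B : ℤ)) (z i + B)).card = if i ∈ ({a, b} : Finset ι) then 1 else 2 * B := by
      intro i
      by_cases hi : i = a ∨ i = b
      · rw [if_pos hi, if_pos (by simpa using hi)]; simp
      · rw [if_neg hi, if_neg (by simpa using hi), Int.card_Ico]; omega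
    rw [Finset.prod_congr rfl (fun x _ => h2 x), Finset.prod_ite, Finset.prod_const_one, one_mul,
      Finset.prod_const]
    congr 1
    rw [← Finset.card_pair hab, ← Finset.card_compl]
    congr 1
    ext x; simp
  unfold cnt
  rw [Finset.card_eq_sum_card_fiberwise (f := r) (t := t)]
  · push_cast
    have : ∀ g ∈ t, ((((zbox z B).filter (fun f => f ∈ E)).filter (fun f => r f = g)).card : ℝ)
        ≤ c := by
      intro g hg
      obtain ⟨F, hF1, hF2⟩ := h g
      simp only [t, Fintype.mem_piFinset] at hg
      refine le_trans ?_ (hF1 ?_)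
      · rw [Nat.cast_le]
        refine Finset.card_le_card_of_injOn (fun f => (f a, f b)) ?_ ?_
        · intro f hf
          simp only [Finset.coe_filter, Finset.mem_filter, Set.mem_ofPred_eq] at hf
          obtain ⟨⟨h1, h2⟩, h3⟩ := hf
          refine hF2 f h2 h1 ?_
          intro i hi1 hi2
          rw [← h3]; simp [r, hi1, hi2]
        · intro f hf f' hf' hff
          simp only [Finset.coe_filter, Finset.mem_filter, Set.mem_ofPred_eq] at hf hf'
          simp only [Prod.mk.injEq] at hff
          funext i
          by_cases hi1 : i = a
          · rw [hi1]; exact hff.1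
          by_cases hi2 : i = b
          · rw [hi2]; exact hff.2
          have := congrFun (hf.2.trans hf'.2.symm) i
          simpa [r, hi1, hi2] using this
      · intro i hi1 hi2
        have := hg i
        rwa [if_neg (by tauto)] at this
    refine (Finset.sum_le_card_nsmul _ _ c this).trans ?_
    rw [ht, nsmul_eq_mul, mul_comm]
    push_cast
    rfl
  · intro f hf
    simp only [Finset.coe_filter, zbox, Fintype.mem_piFinset, Set.mem_ofPred_eq] at hf
    simp only [t, Finset.mem_coe, Fintype.mem_piFinset, r]
    intro i
    split_ifs with hi
    · simp
    · exact hf.1 i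
end Tail

section Bad
open Finset Filter Topology Matrix

def colMod {n k : ℕ} (p : ℕ) (A : Fin n × Fin k → ℤ) : Fin k → Fin n → ZMod p :=
  fun j i => (A (i, j) : ZMod p)

def BadSet (n k T : ℕ) : Set (Fin n × Fin k → ℤ) :=
  {A | ∃ p : ℕ, p.Prime ∧ T < p ∧ ¬ LinearIndependent (ZMod p) (colMod p A)}

lemma exists_minor {F : Type} [Field F] {n k : ℕ} (v : Fin k → Fin n → F)
    (hv : LinearIndependent F v) :
    ∃ I : Fin k → Fin n, (Matrix.of fun a b : Fin k => v b (I a)).det ≠ 0 := by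
  let C : Matrix (Fin n) (Fin k) F := Matrix.of fun i j => v j i
  have hr : C.rank = k := by
    have : C.rank = Fintype.card (Fin k) := LinearIndependent.rank_matrix (M := Cᵀ) hv ▸
      (Matrix.rank_transpose C).symm
    simpa using this
  have hsp : Module.finrank F (Submodule.span F (Set.range C.row)) = k := by
    rw [← Matrix.rank_eq_finrank_span_row, hr]
  obtain ⟨κ, a, ha, hs, hli⟩ := exists_linearIndependent' F C.row
  have : Finite κ := Finite.of_injective a ha
  have : Fintype κ := Fintype.ofFinite κ
  have hcard : Fintype.card κ = k := by
    rw [← finrank_span_eq_card hli, hs, hsp]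
  let e : Fin k ≃ κ := (Fintype.equivFinOfCardEq hcard).symm
  refine ⟨a ∘ e, ?_⟩
  have h2 : LinearIndependent F (Matrix.of fun x y : Fin k => v y ((a ∘ e) x)).row :=
    hli.comp e e.injective
  rw [Matrix.linearIndependent_rows_iff_isUnit, Matrix.isUnit_iff_isUnit_det] at h2
  exact h2.ne_zero

variable {n k : ℕ}

def subM (I : Fin k → Fin n) (A : Fin n × Fin (k + 1) → ℤ) : Matrix (Fin k) (Fin k) ℤ :=
  Matrix.of fun a b => A (I a, b.castSucc)

def offS (I : Fin k → Fin n) (j : Fin n) (A : Fin n × Fin (k + 1) → ℤ) : ℤ :=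
  - ((fun a : Fin k => A (j, a.castSucc)) ⬝ᵥ
    ((subM I A).adjugate *ᵥ (fun b => A (I b, Fin.last k))))

lemma dvd_of_span (p : ℕ) [Fact p.Prime] (I : Fin k → Fin n) (j : Fin n)
    (A : Fin n × Fin (k + 1) → ℤ)
    (h : colMod p A (Fin.last k) ∈ Submodule.span (ZMod p) (Set.range (Fin.init (colMod p A)))) :
    (p : ℤ) ∣ (subM I A).det * A (j, Fin.last k) + offS I j A := by
  rw [Submodule.mem_span_range_iff_exists_fun] at h
  obtain ⟨c, hc⟩ := h
  have hc' : ∀ i, (A (i, Fin.last k) : ZMod p) = (fun a : Fin k => (A (i, a.castSucc) : ZMod p)) ⬝ᵥ c := by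
    intro i
    have := congrFun hc i
    simp only [Finset.sum_apply, Pi.smul_apply, smul_eq_mul, colMod, Fin.init] at this
    rw [← this]
    simp only [dotProduct]
    exact Finset.sum_congr rfl fun _ _ => mul_comm _ _
  rw [← ZMod.intCast_zmod_eq_zero_iff_dvd]
  unfold offS
  rw [Int.cast_add, Int.cast_mul, Int.cast_neg]
  let f := Int.castRingHom (ZMod p)
  have e1 : (((fun a : Fin k => A (j, a.castSucc)) ⬝ᵥ
    ((subM I A).adjugate *ᵥ (fun b => A (I b, Fin.last k))) : ℤ) : ZMod p) =
    (fun a : Fin k => (A (j, a.castSucc) : ZMod p)) ⬝ᵥ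
      ((f.mapMatrix (subM I A)).adjugate *ᵥ (fun b => (A (I b, Fin.last k) : ZMod p))) := by
    change f _ = _
    rw [RingHom.map_dotProduct, ← RingHom.map_adjugate]
    congr 1
    funext a
    simp only [Function.comp]
    rw [RingHom.map_mulVec]
    rfl
  have e2 : (fun b => (A (I b, Fin.last k) : ZMod p)) = f.mapMatrix (subM I A) *ᵥ c := by
    funext b
    rw [hc']
    rfl
  have e3 : (((subM I A).det : ℤ) : ZMod p) = (f.mapMatrix (subM I A)).det := by
    change f _ = _
    rw [RingHom.map_det]
  rw [e1, e2, e3, Matrix.mulVec_mulVec, Matrix.adjugate_mul, Matrix.smul_mulVec, Matrix.one_mulVec,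
    hc' j, dotProduct_smul, smul_eq_mul]
  ring

def PairBad (T : ℕ) (I : Fin k → Fin n) (j1 j2 : Fin n) : Set (Fin n × Fin (k + 1) → ℤ) :=
  {A | ∃ p : ℕ, p.Prime ∧ T < p ∧ ¬ (p : ℤ) ∣ (subM I A).det ∧
    (p : ℤ) ∣ (subM I A).det * A (j1, Fin.last k) + offS I j1 A ∧
    (p : ℤ) ∣ (subM I A).det * A (j2, Fin.last k) + offS I j2 A}

open scoped Classical in
noncomputable def goodIdx (n k : ℕ) : Finset ((Fin k → Fin n) × Fin n × Fin n) :=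
  Finset.univ.filter (fun q => q.2.1 ≠ q.2.2 ∧ (∀ a, q.1 a ≠ q.2.1) ∧ (∀ a, q.1 a ≠ q.2.2))

def eC (n k : ℕ) : Fin n × Fin k → Fin n × Fin (k + 1) := fun x => (x.1, x.2.castSucc)

lemma eC_inj : Function.Injective (eC n k) := by
  rintro ⟨a, b⟩ ⟨c, d⟩ h
  simpa [eC] using h

lemma bad_step (hk : k + 1 < n) (T : ℕ) :
    BadSet n (k + 1) T ⊆ {A | A ∘ eC n k ∈ BadSet n k T} ∪
      ⋃ q ∈ goodIdx n k, PairBad T q.1 q.2.1 q.2.2 := by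
  classical
  rintro A ⟨p, hp, hT, hA⟩
  have : Fact p.Prime := ⟨hp⟩
  by_cases h : LinearIndependent (ZMod p) (colMod p (A ∘ eC n k))
  · right
    have hinit : Fin.init (colMod p A) = colMod p (A ∘ eC n k) := rfl
    rw [linearIndependent_finSucc', hinit, not_and, not_not] at hA
    have hs := hA h
    rw [← hinit] at hs
    obtain ⟨I, hI⟩ := exists_minor _ h
    have hcard : 1 < ((Finset.univ.image I)ᶜ : Finset (Fin n)).card := by
      rw [Finset.card_compl]
      have := Finset.card_image_le (s := Finset.univ) (f := I)
      simp at this ⊢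
      omega
    obtain ⟨j1, hj1, j2, hj2, hj⟩ := Finset.one_lt_card.mp hcard
    simp only [Finset.mem_compl, Finset.mem_image, Finset.mem_univ, true_and, not_exists]
      at hj1 hj2
    simp only [Set.mem_iUnion]
    refine ⟨(I, j1, j2), by simp [goodIdx, hj]; exact ⟨hj1, hj2⟩, p, hp, hT, ?_,
      dvd_of_span p I j1 A hs, dvd_of_span p I j2 A hs⟩
    rw [← ZMod.intCast_zmod_eq_zero_iff_dvd]
    have e3 : (((subM I A).det : ℤ) : ZMod p) = ((Int.castRingHom (ZMod p)).mapMatrix (subM I A)).det := by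
      rw [← RingHom.map_det]; rfl
    rw [e3]
    exact hI
  · left
    exact ⟨p, hp, hT, h⟩

lemma bound_lin (I : Fin k → Fin n) (j : Fin n) (A : Fin n × Fin (k + 1) → ℤ) (X : ℤ) (hX : 1 ≤ X)
    (h : ∀ a, |A (I a, Fin.last k)| ≤ X) (h' : ∀ i b, |A (i, Fin.castSucc b)| ≤ X)
    (hj : |A (j, Fin.last k)| ≤ X) :
    |(subM I A).det * A (j, Fin.last k) + offS I j A| ≤
      (k.factorial * (1 + k ^ 2)) * X ^ (k + 2) := by
  have d1 : |(subM I A).det| ≤ k.factorial * X ^ k := by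
    have := Matrix.det_le (A := subM I A) (abv := AbsoluteValue.abs) (x := X)
      (fun a b => h' _ _)
    simpa using this
  have d2 : ∀ a b, |(subM I A).adjugate a b| ≤ k.factorial * X ^ k := by
    intro a b
    rw [Matrix.adjugate_apply]
    have := Matrix.det_le (A := (subM I A).updateRow b (Pi.single a 1))
      (abv := AbsoluteValue.abs) (x := X) (fun c d => by
        by_cases hc : c = b
        · subst hc
          rw [Matrix.updateRow_self]
          by_cases hd : d = a
          · subst hd; simpa using hX
          · simp [Pi.single_eq_of_ne hd]; omega
        · rw [Matrix.updateRow_ne hc]; exact h' _ _)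
    simpa using this
  have d3 : |offS I j A| ≤ k ^ 2 * (X * (k.factorial * X ^ k * X)) := by
    unfold offS
    rw [abs_neg]
    simp only [dotProduct, Matrix.mulVec]
    calc _ ≤ ∑ a : Fin k, |A (j, a.castSucc) *
          ∑ b, (subM I A).adjugate a b * A (I b, Fin.last k)| := Finset.abs_sum_le_sum_abs _ _
      _ ≤ ∑ a : Fin k, X * (k * (k.factorial * X ^ k * X)) := by
          apply Finset.sum_le_sum
          intro a _
          rw [abs_mul]
          gcongr
          · exact h' _ _
          · calc _ ≤ ∑ b, |(subM I A).adjugate a b * A (I b, Fin.last k)| :=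
                Finset.abs_sum_le_sum_abs _ _
              _ ≤ ∑ b : Fin k, (k.factorial * X ^ k * X) := by
                apply Finset.sum_le_sum
                intro b _
                rw [abs_mul]
                gcongr
                · exact d2 a b
                · exact h b
              _ = _ := by simp
      _ = _ := by simp; ring
  calc _ ≤ |(subM I A).det * A (j, Fin.last k)| + |offS I j A| := abs_add_le _ _
    _ ≤ k.factorial * X ^ k * X + k ^ 2 * (X * (k.factorial * X ^ k * X)) := by
        rw [abs_mul]; gcongr
    _ ≤ k.factorial * X ^ k * X * X + k ^ 2 * (X * (k.factorial * X ^ k * X)) := by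
        have : k.factorial * X ^ k * X * 1 ≤ k.factorial * X ^ k * X * X := by gcongr
        linarith
    _ = _ := by ring

lemma pairBad_small (T : ℕ) (hT : 0 < T) (I : Fin k → Fin n) (j1 j2 : Fin n)
    (hq : (I, j1, j2) ∈ goodIdx n k) (z : Fin n × Fin (k + 1) → ℤ) :
    ∀ᶠ B : ℕ in atTop, (cnt (PairBad T I j1 j2) z B : ℝ) ≤
      (5 / T) * (2 * (B : ℝ)) ^ Fintype.card (Fin n × Fin (k + 1)) := by
  classical
  simp only [goodIdx, Finset.mem_filter, Finset.mem_univ, true_and] at hq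
  obtain ⟨hj, hI1, hI2⟩ := hq
  let Z : ℕ := ∑ x, (z x).natAbs
  have hZ : ∀ x, |z x| ≤ Z := by
    intro x
    have : (z x).natAbs ≤ Z := Finset.single_le_sum (f := fun x => (z x).natAbs)
      (fun _ _ => Nat.zero_le _) (Finset.mem_univ x)
    rw [Int.abs_eq_natAbs]
    exact_mod_cast this
  let C : ℕ := (k.factorial * (1 + k ^ 2)) * (Z + 1) ^ (k + 2)
  filter_upwards [eventually_ge_atTop C, eventually_ge_atTop 1,
    eventually_ge_atTop (T * (k + 4))] with B hC hB hBT
  have hent : ∀ x (y : ℤ), y ∈ Finset.Ico (z x - (B : ℤ)) (z x + B) → |y| ≤ ((Z + 1) * B : ℕ) := by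
    intro x y hy
    have h1 := hZ x
    rw [Finset.mem_Ico] at hy
    rw [abs_le] at h1 ⊢
    have : Z + B ≤ (Z + 1) * B := by nlinarith
    zify at this
    push_cast
    constructor <;> linarith [hy.1, hy.2, h1.1, h1.2]
  have hX1 : (1 : ℤ) ≤ ((Z + 1) * B : ℕ) := by
    have : 1 ≤ (Z + 1) * B := by nlinarith
    exact_mod_cast this
  have hab : ((j1, Fin.last k) : Fin n × Fin (k + 1)) ≠ (j2, Fin.last k) := by
    intro h; exact hj (Prod.mk.inj h).1
  have hmain := cnt_two_coords (j1, Fin.last k) (j2, Fin.last k) hab (PairBad T I j1 j2) z B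
    (4 * (2 * B) ^ 2 / T + 2 * B * (((k + 2 : ℕ) : ℝ) + 2)) (by
      intro g
      have hagree : ∀ f : Fin n × Fin (k + 1) → ℤ,
          (∀ i, i ≠ (j1, Fin.last k) → i ≠ (j2, Fin.last k) → f i = g i) →
          subM I f = subM I g ∧ ∀ j, offS I j f = offS I j g := by
        intro f hf
        have hc : ∀ i (b : Fin k), f (i, b.castSucc) = g (i, b.castSucc) := by
          intro i b
          apply hf
          · intro h; exact (Fin.castSucc_lt_last b).ne (Prod.mk.inj h).2
          · intro h; exact (Fin.castSucc_lt_last b).ne (Prod.mk.inj h).2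
        have hl : ∀ a, f (I a, Fin.last k) = g (I a, Fin.last k) := by
          intro a
          apply hf
          · intro h; exact hI1 a (Prod.mk.inj h).1
          · intro h; exact hI2 a (Prod.mk.inj h).1
        have hs : subM I f = subM I g := by
          ext a b; exact hc _ _
        refine ⟨hs, fun j => ?_⟩
        unfold offS
        rw [hs]
        simp only [hc, hl]
      refine ⟨pairSet T (subM I g).det (offS I j1 g) (offS I j2 g) (z (j1, Fin.last k))
        (z (j2, Fin.last k)) B, ?_, ?_⟩
      · intro hg
        refine pair_bound T (k + 2) C hT _ _ _ _ _ B hB hC ?_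
        intro x hx
        let f : Fin n × Fin (k + 1) → ℤ := Function.update g (j1, Fin.last k) x
        have hf : ∀ i, i ≠ (j1, Fin.last k) → i ≠ (j2, Fin.last k) → f i = g i := by
          intro i hi _
          simp [f, Function.update_of_ne hi]
        obtain ⟨e1, e2⟩ := hagree f hf
        have e3 : f (j1, Fin.last k) = x := by simp [f]
        have hfb : ∀ i, i ≠ (j2, Fin.last k) → |f i| ≤ ((Z + 1) * B : ℕ) := by
          intro i hi
          by_cases hi1 : i = (j1, Fin.last k)
          · rw [hi1, e3]; exact hent _ _ hx
          · rw [hf i hi1 hi]; exact hent _ _ (hg i hi1 hi)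
        have := bound_lin I j1 f ((Z + 1) * B : ℕ) hX1
          (fun a => hfb _ (fun h => hI2 a (Prod.mk.inj h).1))
          (fun i b => hfb _ (fun h => (Fin.castSucc_lt_last b).ne (Prod.mk.inj h).2))
          (hfb _ hab)
        rw [e1, e2, e3] at this
        zify
        refine this.trans (le_of_eq ?_)
        simp only [C]
        push_cast
        rw [mul_pow]
        ring
      · intro f hfE hfb hf
        obtain ⟨e1, e2⟩ := hagree f hf
        obtain ⟨p, hp, hTp, h1, h2, h3⟩ := hfE
        rw [e1] at h1
        rw [e1, e2] at h2 h3
        simp only [pairSet, Finset.mem_filter, Finset.mem_product]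
        simp only [zbox, Fintype.mem_piFinset] at hfb
        exact ⟨⟨hfb _, hfb _⟩, p, hp, hTp, h1, h2, h3⟩)
  refine hmain.trans ?_
  have hBr : (1 : ℝ) ≤ B := by exact_mod_cast hB
  have hTr : (0 : ℝ) < T := by exact_mod_cast hT
  have hBT' : (T : ℝ) * (k + 4) ≤ B := by exact_mod_cast hBT
  have hn : 2 ≤ Fintype.card (Fin n × Fin (k + 1)) := by
    have : ({(j1, Fin.last k), (j2, Fin.last k)} : Finset (Fin n × Fin (k + 1))).card ≤ _ :=
      Finset.card_le_univ _
    rwa [Finset.card_pair hab] at this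
  have hp : (2 * (B : ℝ)) ^ Fintype.card (Fin n × Fin (k + 1)) = (2 * (B : ℝ)) ^ 2 *
      (2 * (B : ℝ)) ^ (Fintype.card (Fin n × Fin (k + 1)) - 2) := by
    rw [← pow_add]; congr 1; omega
  rw [hp, ← mul_assoc]
  gcongr
  have : 2 * (B : ℝ) * (((k + 2 : ℕ) : ℝ) + 2) ≤ (2 * B) ^ 2 / T := by
    rw [le_div_iff₀ hTr]
    push_cast
    nlinarith
  have e : (5 / (T : ℝ)) * (2 * (B : ℝ)) ^ 2 = 4 * (2 * (B : ℝ)) ^ 2 / T + (2 * (B : ℝ)) ^ 2 / T := by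
    ring
  rw [e]
  linarith

lemma bad_small (n k : ℕ) (hk : k < n) : ∀ ε > (0 : ℝ), ∀ z : Fin n × Fin k → ℤ,
    ∃ T0, ∀ T ≥ T0, ∀ᶠ B : ℕ in atTop,
      (cnt (BadSet n k T) z B : ℝ) ≤ ε * (2 * (B : ℝ)) ^ Fintype.card (Fin n × Fin k) := by
  classical
  induction k with
  | zero =>
    intro ε hε z
    refine ⟨0, fun T _ => Eventually.of_forall fun B => ?_⟩
    have : BadSet n 0 T = ∅ := by
      rw [Set.eq_empty_iff_forall_notMem]
      rintro A ⟨p, _, _, h⟩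
      exact h linearIndependent_empty_type
    have h0 : cnt (BadSet n 0 T) z B = 0 := by rw [this]; unfold cnt; simp
    rw [h0]; push_cast; positivity
  | succ k ih =>
    intro ε hε z
    obtain ⟨T1, hT1⟩ := ih (by omega) (ε / 2) (by positivity) (z ∘ eC n k)
    let G : ℝ := (goodIdx n k).card
    obtain ⟨T2, hT2⟩ := exists_nat_gt (G * 5 / (ε / 2))
    refine ⟨max T1 (T2 + 1), fun T hT => ?_⟩
    have hTT1 : T1 ≤ T := le_trans (le_max_left _ _) hT
    have hTT2 : T2 + 1 ≤ T := le_trans (le_max_right _ _) hT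
    have hT0 : 0 < T := by omega
    have hTr : (0 : ℝ) < T := by exact_mod_cast hT0
    have hGT : G * (5 / T) ≤ ε / 2 := by
      have : (T2 : ℝ) ≤ T := by exact_mod_cast (by omega : T2 ≤ T)
      rw [mul_div_assoc', div_le_iff₀ hTr]
      rw [div_lt_iff₀ (by positivity)] at hT2
      nlinarith
    have hall : ∀ᶠ B : ℕ in atTop, ∀ q ∈ goodIdx n k, (cnt (PairBad T q.1 q.2.1 q.2.2) z B : ℝ) ≤
      (5 / T) * (2 * (B : ℝ)) ^ Fintype.card (Fin n × Fin (k + 1)) := by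
      rw [Filter.eventually_all_finset]
      intro q hq
      exact pairBad_small T hT0 q.1 q.2.1 q.2.2 hq z
    filter_upwards [hall, hT1 T hTT1, eventually_ge_atTop 1] with B h1 h2 hB
    have hBr : (1 : ℝ) ≤ B := by exact_mod_cast hB
    have a1 := (cnt_mono (bad_step hk T) z B).trans ((cnt_union_le _ _ _ _).trans
      (Nat.add_le_add_left (cnt_biUnion_le _ _ _ _) _))
    rw [cnt_comap _ eC_inj] at a1
    have a2 : (cnt (BadSet n (k + 1) T) z B : ℝ) ≤ (cnt (BadSet n k T) (z ∘ eC n k) B : ℝ) *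
      (2 * B) ^ (Fintype.card (Fin n × Fin (k + 1)) - Fintype.card (Fin n × Fin k)) +
      ∑ q ∈ goodIdx n k, (cnt (PairBad T q.1 q.2.1 q.2.2) z B : ℝ) := by exact_mod_cast a1
    have a3 := Finset.sum_le_card_nsmul _ _ _ h1
    rw [nsmul_eq_mul] at a3
    have hp : (2 * (B : ℝ)) ^ Fintype.card (Fin n × Fin (k + 1)) =
        (2 * (B : ℝ)) ^ Fintype.card (Fin n × Fin k) *
        (2 * (B : ℝ)) ^ (Fintype.card (Fin n × Fin (k + 1)) - Fintype.card (Fin n × Fin k)) := by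
      rw [← pow_add]; congr 1
      have := Fintype.card_le_of_injective _ (eC_inj (n := n) (k := k))
      omega
    have a4 : (cnt (BadSet n k T) (z ∘ eC n k) B : ℝ) *
      (2 * B) ^ (Fintype.card (Fin n × Fin (k + 1)) - Fintype.card (Fin n × Fin k)) ≤
      ε / 2 * (2 * (B : ℝ)) ^ Fintype.card (Fin n × Fin (k + 1)) := by
      rw [hp, ← mul_assoc]
      gcongr
    have a5 : G * ((5 / T) * (2 * (B : ℝ)) ^ Fintype.card (Fin n × Fin (k + 1))) ≤
      ε / 2 * (2 * (B : ℝ)) ^ Fintype.card (Fin n × Fin (k + 1)) := by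
      rw [← mul_assoc]; gcongr
    calc _ ≤ _ := a2
      _ ≤ _ := add_le_add a4 (a3.trans a5)
      _ = _ := by ring
end Bad

section Prim
open Finset Filter Topology Matrix Kronecker

lemma zetaR_pos (s : ℕ) (hs : 2 ≤ s) : 0 < zetaR s := by
  have hsum : Summable (fun n : ℕ => (1 : ℝ) / (n : ℝ) ^ s) :=
    Real.summable_one_div_nat_pow.mpr (by omega)
  have hsum' := (summable_nat_add_iff 1).mpr hsum
  push_cast at hsum'
  exact hsum'.tsum_pos (fun n => by positivity) 0 (by norm_num)

lemma euler_zetaR (s : ℕ) (hs : 2 ≤ s) :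
    Tendsto (fun T : ℕ => ∏ p ∈ Nat.primesBelow T, (1 - ((p : ℝ) ^ s)⁻¹)) atTop
      (𝓝 (zetaR s)⁻¹) := by
  let f : ℕ →*₀ ℝ :=
    { toFun := fun n => ((n : ℝ) ^ s)⁻¹
      map_zero' := by simp; omega
      map_one' := by simp
      map_mul' := fun a b => by push_cast; rw [mul_pow, mul_inv] }
  have hfa : ∀ n, f n = ((n : ℝ) ^ s)⁻¹ := fun n => rfl
  have hsum : Summable (fun n : ℕ => (1 : ℝ) / (n : ℝ) ^ s) :=
    Real.summable_one_div_nat_pow.mpr (by omega)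
  have hsf : Summable (fun n => f n) := by
    refine hsum.congr fun n => ?_
    rw [hfa, one_div]
  have hz : ∑' n, f n = zetaR s := by
    rw [hsf.tsum_eq_zero_add, map_zero, zero_add]
    unfold zetaR
    refine tsum_congr fun n => ?_
    rw [hfa, one_div]; push_cast; rfl
  have := EulerProduct.eulerProduct_completely_multiplicative (f := f) hsf.norm
  rw [hz] at this
  have h2 := this.inv₀ (zetaR_pos s hs).ne'
  refine h2.congr fun T => ?_
  rw [← Finset.prod_inv_distrib]
  refine Finset.prod_congr rfl fun p _ => ?_
  rw [inv_inv, hfa]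

variable {n k : ℕ}

def PrimT (n k T : ℕ) : Set (Fin n × Fin k → ℤ) :=
  {A | ∀ p : ℕ, p.Prime → p < T → LinearIndependent (ZMod p) (colMod p A)}

def PrimSet (n k : ℕ) : Set (Fin n × Fin k → ℤ) :=
  {A | ∀ p : ℕ, p.Prime → LinearIndependent (ZMod p) (colMod p A)}

abbrev ResG (n k T : ℕ) : Type := (p : {p // p ∈ Nat.primesBelow T}) → (Fin k → Fin n → ZMod p.1)

def resHom (n k T : ℕ) : (Fin n × Fin k → ℤ) →+ ResG n k T where
  toFun A := fun p => colMod p.1 A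
  map_zero' := by funext p j i; simp [colMod]
  map_add' A B := by funext p j i; simp [colMod]

instance primeFact (T : ℕ) (p : {p // p ∈ Nat.primesBelow T}) : Fact (p.1.Prime) :=
  ⟨Nat.prime_of_mem_primesBelow p.2⟩

lemma resHom_surj (n k T : ℕ) : Function.Surjective (resHom n k T) := by
  intro c
  have hco : Pairwise (Function.onFun Nat.Coprime (fun p : {p // p ∈ Nat.primesBelow T} => p.1)) := by
    intro p q hpq
    exact (Nat.coprime_primes (primeFact T p).out (primeFact T q).out).mpr
      (fun h => hpq (Subtype.ext h))
  let e := ZMod.prodEquivPi (fun p : {p // p ∈ Nat.primesBelow T} => p.1) hco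
  have key : ∀ v : (p : {p // p ∈ Nat.primesBelow T}) → ZMod p.1, ∃ x : ℤ, ∀ p, (x : ZMod p.1) = v p := by
    intro v
    obtain ⟨x, hx⟩ := ZMod.intCast_surjective (e.symm v)
    refine ⟨x, fun p => ?_⟩
    have : e (x : ZMod _) = v := by rw [hx]; exact e.apply_symm_apply v
    rw [map_intCast] at this
    exact congrFun this p
  choose X hX using fun (i : Fin n) (j : Fin k) => key (fun p => c p j i)
  refine ⟨fun x => X x.1 x.2, ?_⟩
  funext p j i
  exact hX i j p

lemma card_ratio (n k T : ℕ) (hk : k ≤ n) :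
    (Nat.card {c : ResG n k T | ∀ p, LinearIndependent (ZMod p.1) (c p)} : ℝ) /
      Nat.card (ResG n k T) =
      ∏ i : Fin k, ∏ p ∈ Nat.primesBelow T, (1 - ((p : ℝ) ^ (n - (i : ℕ)))⁻¹) := by
  have h1 : Nat.card {c : ResG n k T | ∀ p, LinearIndependent (ZMod p.1) (c p)} =
      ∏ p : {p // p ∈ Nat.primesBelow T}, ∏ i : Fin k, (p.1 ^ n - p.1 ^ (i : ℕ)) := by
    have e : {c : ResG n k T // ∀ p, LinearIndependent (ZMod p.1) (c p)} ≃
      ((p : {p // p ∈ Nat.primesBelow T}) → {s : Fin k → Fin n → ZMod p.1 //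
        LinearIndependent (ZMod p.1) s}) :=
      { toFun := fun c p => ⟨c.1 p, c.2 p⟩
        invFun := fun c => ⟨fun p => (c p).1, fun p => (c p).2⟩
        left_inv := fun c => rfl
        right_inv := fun c => rfl }
    rw [show Nat.card {c : ResG n k T | ∀ p, LinearIndependent (ZMod p.1) (c p)} = _ from
      Nat.card_congr e, Nat.card_pi]
    refine Finset.prod_congr rfl fun p _ => ?_
    have := card_linearIndependent (K := ZMod p.1) (V := Fin n → ZMod p.1) (k := k) (by simpa using hk)
    rw [this]
    simp
  have h2 : Nat.card (ResG n k T) = ∏ p : {p // p ∈ Nat.primesBelow T}, ∏ i : Fin k, p.1 ^ n := by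
    rw [Nat.card_pi]
    refine Finset.prod_congr rfl fun p _ => ?_
    simp [Nat.card_pi]
  rw [h1, h2, Finset.prod_comm]
  rw [Finset.prod_comm (s := (Finset.univ : Finset {p // p ∈ Nat.primesBelow T}))]
  push_cast
  rw [← Finset.prod_div_distrib]
  refine Finset.prod_congr rfl fun i _ => ?_
  rw [← Finset.prod_div_distrib, ← Finset.prod_coe_sort (Nat.primesBelow T)]
  refine Finset.prod_congr rfl fun p _ => ?_
  have hp := (primeFact T p).out
  have hp0 : (p.1 : ℝ) ≠ 0 := by exact_mod_cast hp.pos.ne'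
  have hi : (i : ℕ) ≤ n := by omega
  rw [Nat.cast_sub (Nat.pow_le_pow_right hp.pos hi)]
  push_cast
  have : (p.1 : ℝ) ^ n = (p.1 : ℝ) ^ (n - (i : ℕ)) * (p.1 : ℝ) ^ (i : ℕ) := by
    rw [← pow_add]; congr 1; omega
  rw [this]
  field_simp

lemma ratio_tendsto (n k : ℕ) (hk : k < n) :
    Tendsto (fun T => ∏ i : Fin k, ∏ p ∈ Nat.primesBelow T, (1 - ((p : ℝ) ^ (n - (i : ℕ)))⁻¹))
      atTop (𝓝 (∏ i : Fin k, (zetaR (n - (i : ℕ)))⁻¹)) :=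
  tendsto_finsetProd _ fun i _ => euler_zetaR _ (by omega)

/-- Right multiplication by `H`. -/
def rmul (H : Matrix (Fin k) (Fin k) ℤ) : (Fin n × Fin k → ℤ) →ₗ[ℤ] (Fin n × Fin k → ℤ) :=
  Matrix.toLin' ((1 : Matrix (Fin n) (Fin n) ℤ) ⊗ₖ Hᵀ)

lemma rmul_apply (H : Matrix (Fin k) (Fin k) ℤ) (A : Fin n × Fin k → ℤ) (i : Fin n) (j : Fin k) :
    rmul H A (i, j) = ∑ b, A (i, b) * H b j := by
  simp only [rmul, Matrix.toLin'_apply, Matrix.mulVec, dotProduct, Fintype.sum_prod_type,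
    Matrix.kroneckerMap_apply, Matrix.transpose_apply, Matrix.one_apply]
  rw [Finset.sum_eq_single i]
  · simp only [if_true, one_mul]
    exact Finset.sum_congr rfl fun _ _ => mul_comm _ _
  · intro b _ hb
    simp [Ne.symm hb]
  · simp

lemma rmul_det (H : Matrix (Fin k) (Fin k) ℤ) :
    LinearMap.det (rmul (n := n) H) = H.det ^ n := by
  unfold rmul
  rw [LinearMap.det_toLin', Matrix.det_kronecker, Matrix.det_one, Matrix.det_transpose]
  simp

lemma rmul_inj (H : Matrix (Fin k) (Fin k) ℤ) (hH : H.det ≠ 0) :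
    Function.Injective (rmul (n := n) H) := by
  rw [← LinearMap.ker_eq_bot]
  by_contra h
  have := LinearMap.bot_lt_ker_of_det_eq_zero (f := rmul (n := n) H)
  unfold rmul at h
  rw [Matrix.ker_toLin'_eq_bot_iff] at h
  push Not at h
  obtain ⟨v, hv, hv0⟩ := h
  have h2 := (Matrix.exists_mulVec_eq_zero_iff
    (M := (1 : Matrix (Fin n) (Fin n) ℤ) ⊗ₖ Hᵀ)).mp ⟨v, hv0, hv⟩
  rw [Matrix.det_kronecker, Matrix.det_one, Matrix.det_transpose] at h2
  simp [hH] at h2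

lemma rmul_index (H : Matrix (Fin k) (Fin k) ℤ) (hH : H.det ≠ 0) :
    (rmul (n := n) H).toAddMonoidHom.range.index = H.det.natAbs ^ n := by
  let e := LinearEquiv.ofInjective (rmul (n := n) H) (rmul_inj H hH)
  have := Submodule.natAbs_det_equiv (LinearMap.range (rmul (n := n) H)) e
  rw [← Int.natAbs_pow, ← rmul_det (n := n)]
  have h2 : (Submodule.subtype (LinearMap.range (rmul (n := n) H))) ∘ₗ
      AddMonoidHom.toIntLinearMap (e : (Fin n × Fin k → ℤ) →+ LinearMap.range (rmul (n := n) H)) =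
      rmul H := by
    ext; rfl
  rw [h2] at this
  rw [this]
  rfl

/-- Density of `Prim * H`. -/
lemma hasD_prim_mul (n k : ℕ) (hk : k < n) (H : Matrix (Fin k) (Fin k) ℤ) (hH : H.det ≠ 0) :
    HasD (rmul H '' PrimSet n k)
      ((∏ i : Fin k, (zetaR (n - (i : ℕ)))⁻¹) / (H.det.natAbs ^ n : ℕ)) := by
  refine hasD_sandwich _ (fun T => rmul H '' PrimT n k (T + 1)) (fun T => BadSet n k T)
    (fun T => (∏ i : Fin k, ∏ p ∈ Nat.primesBelow (T + 1), (1 - ((p : ℝ) ^ (n - (i : ℕ)))⁻¹)) /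
      (H.det.natAbs ^ n : ℕ)) _ ?_ ?_ ?_ ?_ (bad_small n k hk)
  · intro T
    have := hasD_image (resHom n k (T + 1)) (resHom_surj n k (T + 1))
      (rmul H).toAddMonoidHom (rmul_inj H hH) (by
        rw [rmul_index H hH]; exact pow_ne_zero _ (by simpa using hH))
      {c : ResG n k (T + 1) | ∀ p, LinearIndependent (ZMod p.1) (c p)}
    rw [rmul_index H hH, ← div_div, card_ratio n k (T + 1) hk.le] at this
    have hset : PrimT n k (T + 1) = resHom n k (T + 1) ⁻¹'
        {c : ResG n k (T + 1) | ∀ p, LinearIndependent (ZMod p.1) (c p)} := by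
      refine Set.ext fun A => ⟨fun h p => ?_, fun h p hp hT => ?_⟩
      · exact h p.1 (Nat.prime_of_mem_primesBelow p.2) (Nat.lt_of_mem_primesBelow p.2)
      · exact h ⟨p, Nat.mem_primesBelow.mpr ⟨hT, hp⟩⟩
    rw [hset]
    exact this
  · exact ((ratio_tendsto n k hk).comp (tendsto_add_atTop_nat 1)).div_const _
  · intro T
    exact Set.image_mono fun A hA p hp _ => hA p hp
  · rintro T _ ⟨A, hA, rfl⟩
    by_cases h : A ∈ PrimSet n k
    · left; exact ⟨A, h, rfl⟩
    · right
      simp only [PrimSet, Set.mem_ofPred_eq] at h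
      push Not at h
      obtain ⟨p, hp, hpA⟩ := h
      have hTp : T < p := by
        by_contra hc
        exact hpA (hA p hp (by omega))
      refine ⟨p, hp, hTp, fun hli => hpA ?_⟩
      have : Fact p.Prime := ⟨hp⟩
      -- columns of `A * H` independent implies the columns of `A` independent
      have hsub : Submodule.span (ZMod p) (Set.range (colMod p (rmul H A))) ≤
          Submodule.span (ZMod p) (Set.range (colMod p A)) := by
        rw [Submodule.span_le]
        rintro _ ⟨j, rfl⟩
        rw [SetLike.mem_coe, Submodule.mem_span_range_iff_exists_fun]
        refine ⟨fun b => (H b j : ZMod p), ?_⟩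
        funext i
        simp only [Finset.sum_apply, Pi.smul_apply, smul_eq_mul, colMod, rmul_apply]
        push_cast
        exact Finset.sum_congr rfl fun _ _ => mul_comm _ _
      rw [linearIndependent_iff_card_le_finrank_span] at hli ⊢
      exact hli.trans (Submodule.finrank_mono hsub)
end Prim

section HNFExists
open Matrix

/-- Unimodular matrices acting only on the rows `≥ r`. -/
def LowG (n r : ℕ) : Submonoid (Matrix (Fin n) (Fin n) ℤ) where
  carrier := {U | IsUnit U.det ∧ ∀ i l : Fin n, ((i : ℕ) < r ∨ (l : ℕ) < r) →
    U i l = (1 : Matrix (Fin n) (Fin n) ℤ) i l}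
  one_mem' := ⟨by simp, fun _ _ _ => rfl⟩
  mul_mem' := by
    rintro U V ⟨hU, hU'⟩ ⟨hV, hV'⟩
    refine ⟨by rw [det_mul]; exact hU.mul hV, fun i l h => ?_⟩
    rw [mul_apply]
    rcases h with h | h
    · rw [Finset.sum_congr rfl fun b _ => by rw [hU' i b (Or.inl h)], ← mul_apply, one_mul,
        hV' i l (Or.inl h)]
    · rw [Finset.sum_congr rfl fun b _ => by rw [hV' b l (Or.inr h)], ← mul_apply, mul_one,
        hU' i l (Or.inr h)]

lemma lowG_transvection {n r : ℕ} (a b : Fin n) (hab : a ≠ b) (ha : r ≤ a) (hb : r ≤ b) (c : ℤ) :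
    transvection a b c ∈ LowG n r := by
  refine ⟨by rw [det_transvection_of_ne _ _ hab]; exact isUnit_one, fun i l h => ?_⟩
  rw [transvection, Matrix.add_apply, single_apply, if_neg, add_zero]
  rintro ⟨rfl, rfl⟩
  omega

lemma transvection_mulVec' {n : ℕ} (a b : Fin n) (c : ℤ) (v : Fin n → ℤ) (i : Fin n) :
    (transvection a b c *ᵥ v) i = v i + if i = a then c * v b else 0 := by
  rw [transvection, add_mulVec, one_mulVec, Pi.add_apply, single_mulVec]
  by_cases h : i = a
  · subst h; simp
  · simp [h]

lemma clear_col {n r : ℕ} (hr : r < n) : ∀ (N : ℕ) (v : Fin n → ℤ),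
    (∑ i : Fin n, if r ≤ i then (v i).natAbs else 0) = N →
    ∃ U ∈ LowG n r, 0 ≤ (U *ᵥ v) ⟨r, hr⟩ ∧ ∀ i : Fin n, r < i → (U *ᵥ v) i = 0 := by
  intro N
  induction N using Nat.strong_induction_on with
  | _ N ih =>
  intro v hv
  by_cases h : ∃ a b : Fin n, a ≠ b ∧ r ≤ a ∧ r ≤ b ∧ v b ≠ 0 ∧ (v b).natAbs ≤ (v a).natAbs
  · obtain ⟨a, b, hab, ha, hb, hvb, hle⟩ := h
    have hT := lowG_transvection a b hab ha hb (-(v a / v b))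
    set w := transvection a b (-(v a / v b)) *ᵥ v with hw
    have hwa : w a = v a % v b := by
      rw [hw, transvection_mulVec', if_pos rfl, Int.emod_def]; ring
    have hwi : ∀ i, i ≠ a → w i = v i := fun i hi => by
      rw [hw, transvection_mulVec', if_neg hi, add_zero]
    have hlt : (w a).natAbs < (v a).natAbs := by
      rw [hwa]
      have h1 := Int.emod_nonneg (v a) hvb
      have h2 := Int.emod_lt_abs (v a) hvb
      rw [Int.abs_eq_natAbs] at h2
      omega
    obtain ⟨U, hU, h1, h2⟩ := ih _ (by
      rw [← hv]
      refine Finset.sum_lt_sum (fun i _ => ?_) ⟨a, Finset.mem_univ _, ?_⟩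
      · by_cases hi : i = a
        · subst hi; simp only [ha, if_true]; exact hlt.le
        · rw [hwi i hi]
      · simp only [ha, if_true]; exact hlt) w rfl
    refine ⟨U * transvection a b (-(v a / v b)), (LowG n r).mul_mem hU hT, ?_⟩
    rw [← mulVec_mulVec]
    exact ⟨h1, h2⟩
  · push Not at h
    -- at most one nonzero entry
    have huniq : ∀ a b : Fin n, a ≠ b → r ≤ a → r ≤ b → v b ≠ 0 → v a = 0 := by
      intro a b hab ha hb hvb
      by_contra hva
      have h1 := h a b hab ha hb hvb
      have h2 := h b a hab.symm hb ha hva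
      omega
    obtain ⟨U, hU, hU2⟩ : ∃ U ∈ LowG n r, ∀ i : Fin n, r < i → (U *ᵥ v) i = 0 := by
      by_cases hz : ∃ a : Fin n, r < a ∧ v a ≠ 0
      · obtain ⟨a, ha, hva⟩ := hz
        have hne : (⟨r, hr⟩ : Fin n) ≠ a := by
          intro h; rw [← h] at ha; simp at ha
        refine ⟨transvection a ⟨r, hr⟩ (-1) * transvection ⟨r, hr⟩ a 1,
          (LowG n r).mul_mem (lowG_transvection _ _ hne.symm ha.le le_rfl _)
            (lowG_transvection _ _ hne le_rfl ha.le _), fun i hi => ?_⟩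
        have hr0 := huniq ⟨r, hr⟩ a hne le_rfl ha.le hva
        have hir : i ≠ ⟨r, hr⟩ := by rintro rfl; simp at hi
        rw [← mulVec_mulVec, transvection_mulVec', transvection_mulVec', transvection_mulVec',
          if_neg hir, if_pos rfl, hr0]
        by_cases hia : i = a
        · subst hia; simp
        · simp [hia, huniq i a hia hi.le ha.le hva]
      · push Not at hz
        exact ⟨1, (LowG n r).one_mem, by simpa using hz⟩
    by_cases hs : 0 ≤ (U *ᵥ v) ⟨r, hr⟩
    · exact ⟨U, hU, hs, hU2⟩
    · let D : Matrix (Fin n) (Fin n) ℤ := diagonal (fun i => if i = ⟨r, hr⟩ then -1 else 1)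
      have hD : D ∈ LowG n r := by
        refine ⟨?_, fun i l h => ?_⟩
        · simp [D, det_diagonal]
        · by_cases hil : i = l
          · subst hil
            have : i ≠ ⟨r, hr⟩ := by rintro rfl; simp at h
            simp [D, this]
          · simp [D, hil]
      refine ⟨D * U, (LowG n r).mul_mem hD hU, ?_, fun i hi => ?_⟩
      · rw [← mulVec_mulVec, mulVec_diagonal]
        simp only [if_true]; omega
      · rw [← mulVec_mulVec, mulVec_diagonal, hU2 i hi, mul_zero]

lemma hnf_extend_same {n m r : ℕ} (hr : r ≤ n) (j : Fin r → Fin m)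
    (M : Matrix (Fin n) (Fin (m + 1)) ℤ)
    (h : IsHNFWith (M.submatrix id Fin.castSucc) r hr j)
    (h0 : ∀ i : Fin n, r ≤ i → M i (Fin.last m) = 0) : IsHNF M := by
  obtain ⟨h1, h2, h3, h4, h5⟩ := h
  refine ⟨r, hr, fun i => (j i).castSucc, ?_, ?_, h3, ?_, h5⟩
  · intro a b hab; exact Fin.castSucc_lt_castSucc_iff.mpr (h1 hab)
  · intro i hi l
    refine Fin.lastCases (h0 i hi) (fun l => h2 i hi l) l
  · intro i l
    refine Fin.lastCases (fun hl => ?_) (fun l hl => h4 i l (by simpa using hl)) l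
    simp at hl; omega

lemma hnf_extend_new {n m r : ℕ} (hr : r ≤ n) (hr' : r < n) (j : Fin r → Fin m)
    (M : Matrix (Fin n) (Fin (m + 1)) ℤ)
    (h : IsHNFWith (M.submatrix id Fin.castSucc) r hr j)
    (h0 : ∀ i : Fin n, r < i → M i (Fin.last m) = 0)
    (hg : 0 < M ⟨r, hr'⟩ (Fin.last m))
    (hred : ∀ i : Fin n, (i : ℕ) < r → 0 ≤ M i (Fin.last m) ∧
      M i (Fin.last m) < M ⟨r, hr'⟩ (Fin.last m)) : IsHNF M := by
  obtain ⟨h1, h2, h3, h4, h5⟩ := h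
  refine ⟨r + 1, hr', Fin.snoc (α := fun _ => Fin (m + 1)) (fun i => (j i).castSucc) (Fin.last m),
    ?_, ?_, ?_, ?_, ?_⟩
  · intro a b
    refine Fin.lastCases ?_ (fun b => ?_) b
    · refine Fin.lastCases (fun h => absurd h (lt_irrefl _)) (fun a _ => ?_) a
      simp [Fin.castSucc_lt_last]
    · refine Fin.lastCases (fun h => ?_) (fun a h => ?_) a
      · exact absurd h (not_lt.mpr (Fin.le_last _))
      · simpa using h1 (Fin.castSucc_lt_castSucc_iff.mp h)
  · intro i hi l
    refine Fin.lastCases (h0 i hi) (fun l => h2 i (by omega) l) l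
  · intro i
    refine Fin.lastCases ?_ (fun i => ?_) i
    · rw [Fin.snoc_last]; exact hg
    · rw [Fin.snoc_castSucc]; exact h3 i
  · intro i
    refine Fin.lastCases ?_ (fun i => ?_) i
    · rw [Fin.snoc_last]
      intro l
      refine Fin.lastCases (fun hl => ?_) (fun l hl => ?_) l
      · exact absurd hl (lt_irrefl _)
      · exact h2 ⟨r, hr'⟩ le_rfl l
    · rw [Fin.snoc_castSucc]
      intro l
      refine Fin.lastCases (fun hl => ?_) (fun l hl => h4 i l (by simpa using hl)) l
      simp at hl; omega
  · intro i
    refine Fin.lastCases ?_ (fun i => ?_) i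
    · rw [Fin.snoc_last]
      intro k hk
      exact hred k (by simpa using hk)
    · rw [Fin.snoc_castSucc]
      intro k hk
      exact h5 i k (by simpa using hk)

lemma hnf_step {n m r : ℕ} (hr : r ≤ n) (j : Fin r → Fin m)
    (A : Matrix (Fin n) (Fin (m + 1)) ℤ)
    (h : IsHNFWith (A.submatrix id Fin.castSucc) r hr j) :
    ∃ U : Matrix (Fin n) (Fin n) ℤ, IsUnit U.det ∧ IsHNF (U * A) := by
  rcases hr.eq_or_lt with rfl | hr'
  · refine ⟨1, by simp, ?_⟩
    rw [Matrix.one_mul]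
    exact hnf_extend_same hr j A h fun i hi => absurd i.2 (by omega)
  obtain ⟨U, ⟨hUdet, hU⟩, hpos, hz⟩ := clear_col hr' _ (fun i => A i (Fin.last m)) rfl
  have hlast : ∀ i, (U * A) i (Fin.last m) = (U *ᵥ fun i => A i (Fin.last m)) i := fun i => rfl
  have hz0 : ∀ i : Fin n, r ≤ i → ∀ l : Fin m, A i l.castSucc = 0 := h.2.1
  have hcast : (U * A).submatrix id Fin.castSucc = A.submatrix id Fin.castSucc := by
    ext i l
    simp only [submatrix_apply, id]
    by_cases hi : (i : ℕ) < r
    · rw [mul_apply, Finset.sum_congr rfl fun b _ => by rw [hU i b (Or.inl hi)], ← mul_apply,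
        Matrix.one_mul]
    · rw [hz0 i (by omega) l, mul_apply]
      refine Finset.sum_eq_zero fun b _ => ?_
      by_cases hb : (b : ℕ) < r
      · rw [hU i b (Or.inr hb), one_apply_ne (by rintro rfl; exact hi hb), zero_mul]
      · rw [hz0 b (by omega) l, mul_zero]
  set M := U * A with hM
  have hMh : IsHNFWith (M.submatrix id Fin.castSucc) r hr j := by rw [hcast]; exact h
  have hM0 : ∀ i : Fin n, r < i → M i (Fin.last m) = 0 := fun i hi => by rw [hlast, hz i hi]
  rcases (show 0 ≤ M ⟨r, hr'⟩ (Fin.last m) from by rw [hlast]; exact hpos).eq_or_lt with hg | hg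
  · refine ⟨U, hUdet, hnf_extend_same hr j M hMh fun i hi => ?_⟩
    rcases hi.eq_or_lt with h' | h'
    · have : i = ⟨r, hr'⟩ := Fin.ext h'.symm
      rw [this, ← hg]
    · exact hM0 i h'
  · let q : Fin n → ℤ := fun i => if (i : ℕ) < r then
      -(M i (Fin.last m) / M ⟨r, hr'⟩ (Fin.last m)) else 0
    let V : Matrix (Fin n) (Fin n) ℤ := fun i l => (1 : Matrix (Fin n) (Fin n) ℤ) i l +
      if l = ⟨r, hr'⟩ then q i else 0
    have hVM : ∀ i l, (V * M) i l = M i l + q i * M ⟨r, hr'⟩ l := by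
      intro i l
      rw [mul_apply]
      simp only [V, add_mul, Finset.sum_add_distrib, ite_mul, zero_mul]
      rw [← mul_apply, Matrix.one_mul]
      simp
    have hVdet : V.det = 1 := by
      rw [det_of_isUpperTriangular]
      · refine Finset.prod_eq_one fun i _ => ?_
        by_cases hi : i = ⟨r, hr'⟩
        · simp [V, q, hi]
        · simp [V, hi]
      · intro a b hab
        have hab' : b < a := hab
        have hne : a ≠ b := hab'.ne'
        simp only [V, one_apply_ne hne, zero_add]
        split_ifs with hb
        · simp only [q]
          rw [if_neg]
          rw [hb] at hab'
          have : r < (a : ℕ) := hab'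
          omega
        · rfl
    refine ⟨V * U, by rw [det_mul, hVdet, one_mul]; exact hUdet, ?_⟩
    rw [Matrix.mul_assoc, ← hM]
    have hqr : q ⟨r, hr'⟩ = 0 := by simp [q]
    have hVr : ∀ l, (V * M) ⟨r, hr'⟩ l = M ⟨r, hr'⟩ l := fun l => by rw [hVM, hqr]; ring
    refine hnf_extend_new hr hr' j _ ?_ ?_ ?_ ?_
    · have : (V * M).submatrix id Fin.castSucc = M.submatrix id Fin.castSucc := by
        ext i l
        simp only [submatrix_apply, id]
        rw [hVM, hMh.2.1 ⟨r, hr'⟩ le_rfl l |> fun (h : M ⟨r, hr'⟩ l.castSucc = 0) => h]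
        ring
      rw [this]; exact hMh
    · intro i hi
      rw [hVM, hM0 i hi]
      have : q i = 0 := by simp only [q]; rw [if_neg (by omega)]
      rw [this]; ring
    · rw [hVr]; exact hg
    · intro i hi
      rw [hVr, hVM]
      have : M i (Fin.last m) + q i * M ⟨r, hr'⟩ (Fin.last m) =
          M i (Fin.last m) % M ⟨r, hr'⟩ (Fin.last m) := by
        simp only [q]; rw [if_pos hi, Int.emod_def]; ring
      rw [this]
      exact ⟨Int.emod_nonneg _ hg.ne', Int.emod_lt_of_pos _ hg⟩

lemma exists_hnf_mul {n : ℕ} : ∀ {m : ℕ} (A : Matrix (Fin n) (Fin m) ℤ),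
    ∃ U : Matrix (Fin n) (Fin n) ℤ, IsUnit U.det ∧ IsHNF (U * A) := by
  intro m
  induction m with
  | zero =>
    intro A
    exact ⟨1, by simp, 0, Nat.zero_le _, Fin.elim0, fun a => a.elim0, fun _ _ l => l.elim0,
      fun a => a.elim0, fun a => a.elim0, fun a => a.elim0⟩
  | succ m ih =>
    intro A
    obtain ⟨U, hU, r, hr, j, hj⟩ := ih (A.submatrix id Fin.castSucc)
    have : (U * A).submatrix id Fin.castSucc = U * A.submatrix id Fin.castSucc := rfl
    rw [← this] at hj
    obtain ⟨V, hV, hVH⟩ := hnf_step hr j _ hj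
    exact ⟨V * U, by rw [det_mul]; exact hV.mul hU, by rw [Matrix.mul_assoc]; exact hVH⟩

lemma exists_hnf {n m : ℕ} (A : Matrix (Fin n) (Fin m) ℤ) : ∃ H, IsHNFOf H A := by
  obtain ⟨U, hU, h⟩ := exists_hnf_mul A
  refine ⟨U * A, h, U⁻¹, ?_, ?_⟩
  · exact Int.isUnit_iff.mp (Matrix.isUnit_nonsing_inv_det U hU)
  · rw [← Matrix.mul_assoc, nonsing_inv_mul U hU, Matrix.one_mul]
end HNFExists

section HNFAlg
open Matrix

def PrimM {n k : ℕ} (P : Matrix (Fin n) (Fin k) ℤ) : Prop :=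
  ∀ p : ℕ, p.Prime → Function.Injective (P.map (Int.cast : ℤ → ZMod p)).mulVec

lemma map_mul_cast {a b c : ℕ} (p : ℕ) (M : Matrix (Fin a) (Fin b) ℤ) (N : Matrix (Fin b) (Fin c) ℤ) :
    (M * N).map (Int.cast : ℤ → ZMod p) =
      (M.map (Int.cast : ℤ → ZMod p) : Matrix (Fin a) (Fin b) (ZMod p)) *
      (N.map (Int.cast : ℤ → ZMod p) : Matrix (Fin b) (Fin c) (ZMod p)) :=
  Matrix.map_mul (f := Int.castRingHom (ZMod p))

lemma PrimM.of_mul {a b c : ℕ} {M : Matrix (Fin a) (Fin b) ℤ} {N : Matrix (Fin b) (Fin c) ℤ}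
    (h : PrimM (M * N)) : PrimM N := by
  intro p hp x y hxy
  apply h p hp
  change _ *ᵥ x = _ *ᵥ y
  rw [map_mul_cast, ← mulVec_mulVec, ← mulVec_mulVec]
  exact congrArg _ hxy

lemma PrimM.one {k : ℕ} : PrimM (1 : Matrix (Fin k) (Fin k) ℤ) := by
  intro p hp x y hxy
  have : (1 : Matrix (Fin k) (Fin k) ℤ).map (Int.cast : ℤ → ZMod p) = 1 := by
    simp
  change _ *ᵥ x = _ *ᵥ y at hxy
  rwa [this, one_mulVec, one_mulVec] at hxy

lemma primM_of_leftInv {n k : ℕ} {P : Matrix (Fin n) (Fin k) ℤ} {R : Matrix (Fin k) (Fin n) ℤ}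
    (h : R * P = 1) : PrimM P :=
  PrimM.of_mul (M := R) (h ▸ PrimM.one)

def UpTri {n k : ℕ} (Q : Matrix (Fin n) (Fin k) ℤ) : Prop :=
  ∀ (i : Fin n) (j : Fin k), (j : ℕ) < i → Q i j = 0

lemma mul_upTri {n k l : ℕ} (hkn : k ≤ n) (V : Matrix (Fin l) (Fin n) ℤ)
    (Q : Matrix (Fin n) (Fin k) ℤ) (hQ : UpTri Q) :
    V * Q = V.submatrix id (Fin.castLE hkn) * Q.submatrix (Fin.castLE hkn) id := by
  ext i j
  rw [mul_apply, mul_apply]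
  symm
  refine Fintype.sum_of_injective (Fin.castLE hkn) (Fin.castLE_injective hkn) _ _ (fun b hb => ?_)
    (fun b => rfl)
  rw [hQ b j, mul_zero]
  by_contra hc
  exact hb ⟨⟨b, by omega⟩, rfl⟩

lemma diag_unit {n k : ℕ} (hkn : k ≤ n) (Q : Matrix (Fin n) (Fin k) ℤ) (hQ : UpTri Q)
    (hP : PrimM Q) (i : Fin k) : IsUnit (Q (Fin.castLE hkn i) i) := by
  by_contra h
  rw [Int.isUnit_iff_natAbs_eq] at h
  obtain ⟨p, hp, hdvd⟩ := Nat.exists_prime_and_dvd h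
  have : Fact p.Prime := ⟨hp⟩
  let T : Matrix (Fin k) (Fin k) (ZMod p) :=
    (Q.map (Int.cast : ℤ → ZMod p)).submatrix (Fin.castLE hkn) id
  have hT : T.det = 0 := by
    rw [det_of_isUpperTriangular]
    · refine Finset.prod_eq_zero (Finset.mem_univ i) ?_
      change ((Q (Fin.castLE hkn i) i : ℤ) : ZMod p) = 0
      rw [ZMod.intCast_zmod_eq_zero_iff_dvd]
      exact Int.natCast_dvd.mpr hdvd
    · intro a b hab
      have hab' : b < a := hab
      change ((Q (Fin.castLE hkn a) b : ℤ) : ZMod p) = 0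
      rw [hQ _ _ hab', Int.cast_zero]
  obtain ⟨v, hv, hTv⟩ := exists_mulVec_eq_zero_iff.mpr hT
  apply hv
  apply hP p hp
  change _ *ᵥ v = _ *ᵥ 0
  rw [mulVec_zero]
  funext r
  by_cases hr : (r : ℕ) < k
  · exact congrFun hTv ⟨r, hr⟩
  · change ∑ b, ((Q r b : ℤ) : ZMod p) * v b = 0
    refine Finset.sum_eq_zero fun b _ => ?_
    rw [hQ r b (by omega), Int.cast_zero, zero_mul]

lemma pivot_ge {r m : ℕ} (j : Fin r → Fin m) (hj : StrictMono j) :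
    ∀ (a : ℕ) (h : a < r), a ≤ (j ⟨a, h⟩ : ℕ) := by
  intro a
  induction a with
  | zero => intro _; exact Nat.zero_le _
  | succ a ih =>
    intro h
    have h1 := ih (by omega)
    have h2 : j ⟨a, by omega⟩ < j ⟨a + 1, h⟩ := hj (by simp [Fin.lt_def])
    have h3 : (j ⟨a, by omega⟩ : ℕ) < j ⟨a + 1, h⟩ := h2
    omega

lemma hnf_upTri {n m : ℕ} {H : Matrix (Fin n) (Fin m) ℤ} (h : IsHNF H) : UpTri H := by
  obtain ⟨r, hr, j, h1, h2, h3, h4, h5⟩ := h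
  intro i l hl
  by_cases hi : (i : ℕ) < r
  · exact h4 ⟨i, hi⟩ l (lt_of_lt_of_le hl (pivot_ge j h1 i hi))
  · exact h2 i (by omega) l

lemma hnf_diag_nonneg {n m : ℕ} {H : Matrix (Fin n) (Fin m) ℤ} (h : IsHNF H)
    (i : Fin n) (l : Fin m) (hil : (i : ℕ) = l) : 0 ≤ H i l := by
  obtain ⟨r, hr, j, h1, h2, h3, h4, h5⟩ := h
  by_cases hi : (i : ℕ) < r
  · rcases (pivot_ge j h1 i hi).eq_or_lt with h | h
    · have : l = j ⟨i, hi⟩ := Fin.ext (by omega)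
      rw [this]; exact (h3 ⟨i, hi⟩).le
    · exact (h4 ⟨i, hi⟩ l (by omega)).ge
  · exact (h2 i (by omega) l).ge

lemma hnf_reduced {n m : ℕ} {H : Matrix (Fin n) (Fin m) ℤ} (h : IsHNF H)
    (i : Fin n) (l : Fin m) (hil : (i : ℕ) = l) (hpos : 0 < H i l) (a : Fin n) (ha : a < i) :
    0 ≤ H a l ∧ H a l < H i l := by
  obtain ⟨r, hr, j, h1, h2, h3, h4, h5⟩ := h
  by_cases hi : (i : ℕ) < r
  · rcases (pivot_ge j h1 i hi).eq_or_lt with h | h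
    · have : l = j ⟨i, hi⟩ := Fin.ext (by omega)
      rw [this]; exact h5 ⟨i, hi⟩ a ha
    · exact absurd (h4 ⟨i, hi⟩ l (by omega)) hpos.ne'
  · exact absurd (h2 i (by omega) l) hpos.ne'

lemma primM_leftInv {n k : ℕ} (hkn : k ≤ n) {P : Matrix (Fin n) (Fin k) ℤ} (hP : PrimM P) :
    ∃ R : Matrix (Fin k) (Fin n) ℤ, R * P = 1 := by
  obtain ⟨H, hH, V, hV, rfl⟩ := exists_hnf P
  have hV' : IsUnit V.det := Int.isUnit_iff.mpr hV
  have hu := hnf_upTri hH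
  have hd := diag_unit hkn H hu hP.of_mul
  let T := H.submatrix (Fin.castLE hkn) id
  have hT : IsUnit T.det := by
    rw [det_of_isUpperTriangular]
    · exact (IsUnit.prod_univ_iff).mpr hd
    · intro a b hab
      exact hu _ _ (show (b : ℕ) < a from hab)
  refine ⟨T⁻¹ * (V⁻¹.submatrix (Fin.castLE hkn) id), ?_⟩
  have : V⁻¹.submatrix (Fin.castLE hkn) id * (V * H) = T := by
    change (V⁻¹ * (V * H)).submatrix (Fin.castLE hkn) id = T
    rw [← Matrix.mul_assoc, nonsing_inv_mul V hV', Matrix.one_mul]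
  rw [Matrix.mul_assoc, this, nonsing_inv_mul T hT]

/-- Reduced upper triangular matrices with diagonal `d`. -/
def IsRed {k : ℕ} (d : Fin k → ℕ) (H : Matrix (Fin k) (Fin k) ℤ) : Prop :=
  UpTri H ∧ (∀ a, H a a = d a) ∧ ∀ a b, a < b → 0 ≤ H a b ∧ H a b < d b

lemma upTri_of_mul {n k : ℕ} {d : Fin k → ℕ} (hd : ∀ i, 0 < d i) (Q : Matrix (Fin n) (Fin k) ℤ)
    (H : Matrix (Fin k) (Fin k) ℤ) (hH : IsRed d H) (h : UpTri (Q * H)) : UpTri Q := by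
  have key : ∀ (t : ℕ) (i : Fin n) (ht : t < k), t < i → Q i ⟨t, ht⟩ = 0 := by
    intro t
    induction t using Nat.strong_induction_on with
    | _ t ih =>
    intro i ht hti
    have h1 := h i ⟨t, ht⟩ hti
    rw [mul_apply, Finset.sum_eq_single ⟨t, ht⟩, hH.2.1] at h1
    · have := hd ⟨t, ht⟩
      rcases mul_eq_zero.mp h1 with h | h
      · exact h
      · omega
    · intro b _ hb
      rcases lt_or_gt_of_ne (fun h => hb (Fin.ext h) : (b : ℕ) ≠ t) with h | h
      · rw [ih b h i b.2 (by omega), zero_mul]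
      · rw [hH.1 b _ h, mul_zero]
    · simp
  exact fun i j hij => key j i j.2 hij

lemma diag_mul {n k : ℕ} (Q : Matrix (Fin n) (Fin k) ℤ) (hQ : UpTri Q)
    (H : Matrix (Fin k) (Fin k) ℤ) (hH : UpTri H) (i : Fin n) (j : Fin k) (hij : (i : ℕ) = j) :
    (Q * H) i j = Q i j * H j j := by
  rw [mul_apply, Finset.sum_eq_single j]
  · intro b _ hb
    rcases lt_or_gt_of_ne (fun h => hb (Fin.ext h) : (b : ℕ) ≠ j) with h | h
    · rw [hQ i b (by omega), zero_mul]
    · rw [hH b _ h, mul_zero]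
  · simp

lemma red_unique {k : ℕ} {d : Fin k → ℕ} (hd : ∀ i, 0 < d i) (N H H' : Matrix (Fin k) (Fin k) ℤ)
    (hH : IsRed d H) (hH' : IsRed d H') (h : N * H' = H) : H' = H := by
  have hN : UpTri N := upTri_of_mul hd N H' hH' (by rw [h]; exact hH.1)
  have hdiag : ∀ a, N a a = 1 := by
    intro a
    have h1 := diag_mul N hN H' hH'.1 a a rfl
    rw [h, hH.2.1, hH'.2.1] at h1
    have := hd a
    have h2 : (d a : ℤ) ≠ 0 := by omega
    exact mul_right_cancel₀ h2 (by rw [← h1, one_mul])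
  have key : ∀ (t : ℕ) (a : Fin k) (ht : t < k), a < t → N a ⟨t, ht⟩ = 0 := by
    intro t
    induction t using Nat.strong_induction_on with
    | _ t ih =>
    intro a ht hat
    have h1 : (N * H') a ⟨t, ht⟩ = H' a ⟨t, ht⟩ + N a ⟨t, ht⟩ * d ⟨t, ht⟩ := by
      have hne : a ≠ ⟨t, ht⟩ := by rintro rfl; simp at hat
      rw [mul_apply, Finset.sum_eq_add a ⟨t, ht⟩ hne, hdiag, one_mul, hH'.2.1]
      · intro c _ hc
        rcases lt_or_gt_of_ne (fun h => hc.2 (Fin.ext h) : (c : ℕ) ≠ t) with h | h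
        · rcases lt_or_gt_of_ne (fun h => hc.1 (Fin.ext h) : (c : ℕ) ≠ a) with h' | h'
          · rw [hN a c h', zero_mul]
          · rw [ih c h a c.2 h', zero_mul]
        · rw [hH'.1 c _ h, mul_zero]
      · simp
      · simp
    rw [h] at h1
    have e1 := hH.2.2 a ⟨t, ht⟩ hat
    have e2 := hH'.2.2 a ⟨t, ht⟩ hat
    by_contra hc
    rcases lt_or_gt_of_ne hc with h' | h'
    · nlinarith [e1.1, e2.2]
    · nlinarith [e1.2, e2.1]
  have : N = 1 := by
    ext a b
    rcases lt_trichotomy a b with h | h | h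
    · rw [key b a b.2 h, one_apply_ne h.ne]
    · subst h; rw [hdiag, one_apply_eq]
    · rw [hN a b h, one_apply_ne h.ne']
  rw [this, Matrix.one_mul] at h
  exact h

lemma red_disjoint {n k : ℕ} (hkn : k ≤ n) {d : Fin k → ℕ} (hd : ∀ i, 0 < d i)
    {H H' : Matrix (Fin k) (Fin k) ℤ} (hH : IsRed d H) (hH' : IsRed d H')
    {P P' : Matrix (Fin n) (Fin k) ℤ} (hP : PrimM P) (h : P * H = P' * H') : H = H' := by
  obtain ⟨R, hR⟩ := primM_leftInv hkn hP
  have : (R * P') * H' = H := by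
    rw [Matrix.mul_assoc, ← h, ← Matrix.mul_assoc, hR, Matrix.one_mul]
  exact (red_unique hd _ _ _ hH hH' this).symm

lemma hnf_iff {n m k : ℕ} (hkn : k ≤ n) (hkm : k ≤ m) {d : Fin k → ℕ} (hd : ∀ i, 0 < d i)
    (A : Matrix (Fin n) (Fin m) ℤ) :
    (∃ H, IsHNFOf H A ∧ ∀ i : Fin k, H (Fin.castLE hkn i) (Fin.castLE hkm i) = (d i : ℤ)) ↔
    ∃ H0, IsRed d H0 ∧ ∃ P : Matrix (Fin n) (Fin k) ℤ, PrimM P ∧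
      P * H0 = A.submatrix id (Fin.castLE hkm) := by
  constructor
  · rintro ⟨H, ⟨hH, V, hV, rfl⟩, hdiag⟩
    have hV' : IsUnit V.det := Int.isUnit_iff.mpr hV
    have hu := hnf_upTri hH
    have hu' : UpTri (H.submatrix id (Fin.castLE hkm)) := fun i j hij => hu i _ hij
    refine ⟨H.submatrix (Fin.castLE hkn) (Fin.castLE hkm), ⟨?_, hdiag, ?_⟩,
      V.submatrix id (Fin.castLE hkn), ?_, ?_⟩
    · intro a b hab
      exact hu _ _ hab
    · intro a b hab
      have hpos : 0 < H (Fin.castLE hkn b) (Fin.castLE hkm b) := by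
        rw [hdiag]; exact_mod_cast hd b
      have := hnf_reduced hH (Fin.castLE hkn b) (Fin.castLE hkm b) rfl hpos (Fin.castLE hkn a) hab
      rw [hdiag] at this
      exact this
    · refine primM_of_leftInv (R := V⁻¹.submatrix (Fin.castLE hkn) id) ?_
      change (V⁻¹ * V).submatrix (Fin.castLE hkn) (Fin.castLE hkn) = 1
      rw [nonsing_inv_mul V hV', submatrix_one _ (Fin.castLE_injective hkn)]
    · exact (mul_upTri hkn V _ hu').symm
  · rintro ⟨H0, hH0, P, hP, hPA⟩
    obtain ⟨H, hHA⟩ := exists_hnf A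
    refine ⟨H, hHA, ?_⟩
    obtain ⟨hH, V, hV, rfl⟩ := hHA
    have hV' : IsUnit V.det := Int.isUnit_iff.mpr hV
    have hu := hnf_upTri hH
    have hQH : (V⁻¹ * P) * H0 = H.submatrix id (Fin.castLE hkm) := by
      rw [Matrix.mul_assoc, hPA]
      change (V⁻¹ * (V * H)).submatrix id _ = _
      rw [← Matrix.mul_assoc, nonsing_inv_mul V hV', Matrix.one_mul]
    have hQP : PrimM (V⁻¹ * P) := by
      apply PrimM.of_mul (M := V)
      rw [← Matrix.mul_assoc, mul_nonsing_inv V hV', Matrix.one_mul]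
      exact hP
    have hQ : UpTri (V⁻¹ * P) := upTri_of_mul hd _ H0 hH0 (by
      rw [hQH]; exact fun i j hij => hu i _ hij)
    intro i
    have h1 := diag_mul _ hQ H0 hH0.1 (Fin.castLE hkn i) i rfl
    rw [hQH, hH0.2.1] at h1
    change H (Fin.castLE hkn i) (Fin.castLE hkm i) = _ at h1
    have h2 := hnf_diag_nonneg hH (Fin.castLE hkn i) (Fin.castLE hkm i) rfl
    have h3 := hd i
    rcases Int.isUnit_iff.mp (diag_unit hkn _ hQ hQP i) with h | h
    · rw [h1, h, one_mul]
    · rw [h1, h] at h2; omega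

/-- The finset of reduced matrices. -/
noncomputable def redFin {k : ℕ} (d : Fin k → ℕ) : Finset (Fin k → Fin k → ℤ) :=
  Fintype.piFinset fun a => Fintype.piFinset fun b =>
    if a < b then Finset.Ico 0 (d b : ℤ) else if a = b then {(d b : ℤ)} else {0}

lemma mem_redFin {k : ℕ} (d : Fin k → ℕ) (H : Fin k → Fin k → ℤ) :
    H ∈ redFin d ↔ IsRed d (Matrix.of H) := by
  simp only [redFin, Fintype.mem_piFinset, IsRed, UpTri, of_apply]
  constructor
  · intro h
    refine ⟨fun i j hij => ?_, fun a => ?_, fun a b hab => ?_⟩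
    · have hij' : j < i := hij
      have := h i j
      rw [if_neg hij'.not_gt, if_neg hij'.ne'] at this
      simpa using this
    · simpa using h a a
    · have := h a b
      rw [if_pos hab] at this
      simpa using this
  · rintro ⟨h1, h2, h3⟩ a b
    split_ifs with hab hab'
    · simpa using h3 a b hab
    · subst hab'; simpa using h2 a
    · simpa using h1 a b (show b < a from lt_of_le_of_ne (not_lt.mp hab) (Ne.symm hab'))

lemma card_redFin {k : ℕ} (d : Fin k → ℕ) : (redFin d).card = ∏ b, d b ^ (b : ℕ) := by
  simp only [redFin, Fintype.card_piFinset]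
  rw [Finset.prod_comm]
  refine Finset.prod_congr rfl fun b _ => ?_
  have : ∀ a : Fin k, (if a < b then Finset.Ico 0 (d b : ℤ) else if a = b then {(d b : ℤ)}
      else {0}).card = if a < b then d b else 1 := by
    intro a
    split_ifs <;> simp
  simp only [this]
  rw [Finset.prod_ite, Finset.prod_const, Finset.prod_const_one, mul_one]
  congr 1
  rw [show (Finset.univ.filter fun a : Fin k => a < b) = Finset.Iio b by ext; simp]
  simp

lemma det_red {k : ℕ} (d : Fin k → ℕ) (H : Matrix (Fin k) (Fin k) ℤ) (h : IsRed d H) :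
    H.det = ∏ b, (d b : ℤ) := by
  rw [det_of_isUpperTriangular]
  · exact Finset.prod_congr rfl fun b _ => h.2.1 b
  · intro a b hab
    exact h.1 a b hab
end HNFAlg

section Final
open Matrix

lemma matCubeCount_eq {n m : ℕ} (S : Set (Matrix (Fin n) (Fin m) ℤ))
    (z : Matrix (Fin n) (Fin m) ℤ) (B : ℕ) :
    matCubeCount S z B = cnt {f : Fin n × Fin m → ℤ | Matrix.of (fun i l => f (i, l)) ∈ S}
      (fun x => z x.1 x.2) B := by
  classical
  unfold matCubeCount cnt zbox
  refine Finset.card_bij' (fun A _ => fun x => A x.1 x.2) (fun f _ => fun i l => f (i, l)) ?_ ?_ ?_ ?_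
  · intro A hA
    rw [Finset.mem_filter, Fintype.mem_piFinset] at hA ⊢
    exact ⟨fun x => (Fintype.mem_piFinset.mp (hA.1 x.1)) x.2, hA.2⟩
  · intro f hf
    rw [Finset.mem_filter, Fintype.mem_piFinset] at hf ⊢
    exact ⟨fun i => Fintype.mem_piFinset.mpr fun l => hf.1 (i, l), hf.2⟩
  · intro A _; rfl
  · intro f _; rfl

lemma hasMatDensity_iff {n m : ℕ} (S : Set (Matrix (Fin n) (Fin m) ℤ)) (δ : ℝ)
    (h : HasD {f : Fin n × Fin m → ℤ | Matrix.of (fun i l => f (i, l)) ∈ S} δ) :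
    HasMatDensity S δ := by
  intro z
  have := h (fun x => z x.1 x.2)
  simp only [Fintype.card_prod, Fintype.card_fin] at this
  simpa only [matCubeCount_eq] using this

lemma primSet_iff {n k : ℕ} (f : Fin n × Fin k → ℤ) :
    f ∈ PrimSet n k ↔ PrimM (Matrix.of fun i j => f (i, j)) := by
  unfold PrimM PrimSet
  refine forall₂_congr fun p hp => ?_
  rw [Matrix.mulVec_injective_iff]
  rfl

lemma mem_image_iff {n k : ℕ} (H : Matrix (Fin k) (Fin k) ℤ) (f : Fin n × Fin k → ℤ) :
    f ∈ rmul H '' PrimSet n k ↔ ∃ P : Matrix (Fin n) (Fin k) ℤ, PrimM P ∧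
      P * H = Matrix.of fun i j => f (i, j) := by
  constructor
  · rintro ⟨g, hg, rfl⟩
    refine ⟨_, (primSet_iff g).mp hg, ?_⟩
    ext i j
    rw [of_apply, rmul_apply, mul_apply]
    rfl
  · rintro ⟨P, hP, h⟩
    refine ⟨fun x => P x.1 x.2, (primSet_iff _).mpr hP, ?_⟩
    funext ⟨i, j⟩
    rw [rmul_apply]
    exact congrFun (congrFun h i) j

lemma final_arith (n k : ℕ) (hk : k < n) (d : Fin k → ℕ) (hd : ∀ i, 0 < d i) :
    ((redFin d).card : ℝ) * ((∏ i : Fin k, (zetaR (n - (i : ℕ)))⁻¹) /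
      (((∏ b, (d b : ℤ)).natAbs ^ n : ℕ) : ℝ)) =
    (∏ i : Fin k, zetaR (n - (i : ℕ)) * (d i : ℝ) ^ (n - (i : ℕ)))⁻¹ := by
  have h1 : (∏ b, (d b : ℤ)).natAbs = ∏ b, d b := by
    rw [← Nat.cast_prod, Int.natAbs_natCast]
  rw [h1, card_redFin, ← Finset.prod_pow]
  push_cast
  rw [← Finset.prod_div_distrib, ← Finset.prod_mul_distrib, ← Finset.prod_inv_distrib]
  refine Finset.prod_congr rfl fun i _ => ?_
  have hd0 : (d i : ℝ) ≠ 0 := by exact_mod_cast (hd i).ne'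
  have hz : zetaR (n - (i : ℕ)) ≠ 0 := (zetaR_pos _ (by omega)).ne'
  have : (d i : ℝ) ^ n = (d i : ℝ) ^ (n - (i : ℕ)) * (d i : ℝ) ^ (i : ℕ) := by
    rw [← pow_add]; congr 1; omega
  rw [this]
  field_simp

end Final

/-- Density of `n × m` integer matrices whose HNF diagonal begins with
`(d_1, …, d_k)`, all positive. -/
theorem density_hnf_diag_prefix (n m k : ℕ) (hn : 2 ≤ n)
    (hcond : if m < n then k ≤ m else k < n) (hkn : k ≤ n) (hkm : k ≤ m)
    (d : Fin k → ℕ) (hd : ∀ i, 0 < d i) :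
    HasMatDensity
      {A : Matrix (Fin n) (Fin m) ℤ | ∃ H, IsHNFOf H A ∧
        ∀ i : Fin k, H (Fin.castLE hkn i) (Fin.castLE hkm i) = (d i : ℤ)}
      (∏ i : Fin k, zetaR (n - (i : ℕ)) * (d i : ℝ) ^ (n - (i : ℕ)))⁻¹ := by
  have hk : k < n := by
    split_ifs at hcond with h <;> omega
  apply hasMatDensity_iff
  have hdet : ∀ H ∈ redFin d, (Matrix.of H).det = ∏ b, (d b : ℤ) := fun H hH =>
    det_red d _ ((mem_redFin d H).mp hH)
  have hprod : (∏ b, (d b : ℤ)) ≠ 0 :=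
    Finset.prod_ne_zero_iff.mpr fun b _ => by exact_mod_cast (hd b).ne'
  have hU := HasD.biUnion (redFin d) (fun H => rmul (n := n) (Matrix.of H) '' PrimSet n k)
    (fun _ => (∏ i : Fin k, (zetaR (n - (i : ℕ)))⁻¹) /
      (((∏ b, (d b : ℤ)).natAbs ^ n : ℕ) : ℝ)) (by
      intro H hH H' hH' hne
      rw [Set.disjoint_left]
      intro f hf hf'
      obtain ⟨P, hP, h⟩ := (mem_image_iff _ f).mp hf
      obtain ⟨P', hP', h'⟩ := (mem_image_iff _ f).mp hf'
      apply hne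
      exact Matrix.of.injective (red_disjoint hkn hd ((mem_redFin d H).mp hH)
        ((mem_redFin d H').mp hH') hP (h.trans h'.symm))) (by
      intro H hH
      have := hasD_prim_mul n k hk (Matrix.of H) (by rw [hdet H hH]; exact hprod)
      rw [hdet H hH] at this
      exact this)
  rw [Finset.sum_const, nsmul_eq_mul, final_arith n k hk d hd] at hU
  let e : Fin n × Fin k → Fin n × Fin m := fun x => (x.1, Fin.castLE hkm x.2)
  have he : Function.Injective e := by
    rintro ⟨a, b⟩ ⟨a', b'⟩ h
    simp only [e, Prod.mk.injEq] at h
    exact Prod.ext h.1 (Fin.castLE_injective hkm h.2)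
  have hfin := hU.comap e he
  convert hfin using 1
  refine Set.ext fun f => ?_
  rw [Set.mem_ofPred_eq, Set.mem_ofPred_eq, Set.mem_ofPred_eq, hnf_iff hkn hkm hd, Set.mem_iUnion₂]
  constructor
  · rintro ⟨H0, hH0, P, hP, h⟩
    exact ⟨H0, (mem_redFin d H0).mpr hH0, (mem_image_iff _ _).mpr ⟨P, hP, h⟩⟩
  · rintro ⟨H0, hH0, h⟩
    obtain ⟨P, hP, h⟩ := (mem_image_iff _ _).mp h
    exact ⟨Matrix.of H0, (mem_redFin d H0).mp hH0, P, hP, h⟩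
end

section
/- Let n ≤ m, d_1,...,d_{n−1} positive integers, d ≥ 1 and 0 ≤ r < d. The natural density of n×m integer matrices A with diag(HNF(A)) = (d_1,...,d_{n−1}, a) for some a ≡ r (mod d) equals (1/d) times the natural density of matrices with diag(HNF(A)) beginning with (d_1,...,d_{n−1}). -/
open Filter

/-- box -/
noncomputable def hbox {n m : ℕ} (z : Matrix (Fin n) (Fin m) ℤ) (B : ℕ) :
    Finset (Fin n → Fin m → ℤ) :=
  Fintype.piFinset fun i =>
      Fintype.piFinset fun l => Finset.Ico (z i l - (B : ℤ)) (z i l + (B : ℤ))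

lemma mem_hbox {n m : ℕ} (z : Matrix (Fin n) (Fin m) ℤ) (B : ℕ) (A : Fin n → Fin m → ℤ) :
    A ∈ hbox z B ↔ ∀ i l, z i l - (B : ℤ) ≤ A i l ∧ A i l < z i l + (B : ℤ) := by
  simp [hbox, Fintype.mem_piFinset]

lemma int_finset_card_le (T : Finset ℤ) (M : ℕ) (h : ∀ x ∈ T, ∀ y ∈ T, x < y + M) :
    T.card ≤ M := by
  rcases T.eq_empty_or_nonempty with rfl | hne
  · simp
  · have : T ⊆ Finset.Ico (T.min' hne) (T.min' hne + M) := by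
      intro x hx
      rw [Finset.mem_Ico]
      exact ⟨T.min'_le x hx, h x hx _ (T.min'_mem hne)⟩
    have := Finset.card_le_card this
    simpa using this

lemma fiber_bound {n m : ℕ} (z : Matrix (Fin n) (Fin m) ℤ) (B : ℕ) (i : Fin n) (c : Fin m)
    (T : Finset (Fin n → Fin m → ℤ)) (hT : T ⊆ hbox z B) (M : ℕ)
    (h : ∀ u ∈ T, ∀ v ∈ T, (∀ k l, (k, l) ≠ (i, c) → u k l = v k l) → u i c < v i c + M) :
    2 * B * T.card ≤ M * (2 * B) ^ (n * m) := by
  classical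
  let f : (Fin n → Fin m → ℤ) → (Fin n → Fin m → ℤ) := fun v k l =>
    if (k, l) = (i, c) then 0 else v k l
  let bx : Finset (Fin n → Fin m → ℤ) := Fintype.piFinset fun k =>
      Fintype.piFinset fun l => if (k, l) = (i, c) then {0} else
        Finset.Ico (z k l - (B : ℤ)) (z k l + (B : ℤ))
  have h1 : T.card ≤ M * (T.image f).card := by
    apply Finset.card_le_mul_card_image
    intro b hb
    have hinj : Set.InjOn (fun A : Fin n → Fin m → ℤ => A i c)
        (T.filter (fun a => f a = b) : Finset _) := by
      intro u hu v hv huv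
      simp only [Finset.coe_filter, Set.mem_ofPred_eq] at hu hv
      funext k l
      by_cases hkl : (k, l) = (i, c)
      · simp only [Prod.mk.injEq] at hkl
        obtain ⟨rfl, rfl⟩ := hkl
        exact huv
      · have := congrFun (congrFun (hu.2.trans hv.2.symm) k) l
        simpa only [f, if_neg hkl] using this
    rw [← Finset.card_image_of_injOn hinj]
    apply int_finset_card_le
    intro x hx y hy
    simp only [Finset.mem_image, Finset.mem_filter] at hx hy
    obtain ⟨u, ⟨hu, hu2⟩, rfl⟩ := hx
    obtain ⟨v, ⟨hv, hv2⟩, rfl⟩ := hy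
    apply h u hu v hv
    intro k l hkl
    have := congrFun (congrFun (hu2.trans hv2.symm) k) l
    simpa only [f, if_neg hkl] using this
  have h2 : (T.image f).card ≤ bx.card := by
    apply Finset.card_le_card
    intro x hx
    rw [Finset.mem_image] at hx
    obtain ⟨u, hu, rfl⟩ := hx
    have hu' := (mem_hbox z B u).1 (hT hu)
    simp only [bx, Fintype.mem_piFinset]
    intro k l
    by_cases hkl : (k, l) = (i, c)
    · simp only [f, if_pos hkl, Finset.mem_singleton]
    · rw [if_neg hkl, Finset.mem_Ico]
      simp only [f, if_neg hkl]
      exact hu' k l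
  have h3 : 2 * B * bx.card = (2 * B) ^ (n * m) := by
    have e1 : bx.card = ∏ p : Fin n × Fin m, if p = (i, c) then 1 else 2 * B := by
      simp only [bx, Fintype.card_piFinset]
      rw [Fintype.prod_prod_type]
      refine Finset.prod_congr rfl fun k _ => Finset.prod_congr rfl fun l _ => ?_
      split_ifs
      · simp
      · rw [Int.card_Ico]; omega
    have e2 : (2 * B) ^ (n * m) = ∏ p : Fin n × Fin m, 2 * B := by
      simp
    rw [e1, e2, ← Finset.mul_prod_erase Finset.univ _ (Finset.mem_univ (i, c)),
      ← Finset.mul_prod_erase Finset.univ (fun _ => 2 * B) (Finset.mem_univ (i, c))]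
    simp only [if_true, one_mul]
    congr 1
    refine Finset.prod_congr rfl fun p hp => ?_
    rw [if_neg (Finset.ne_of_mem_erase hp)]
  calc 2 * B * T.card ≤ 2 * B * (M * bx.card) := by
        gcongr; exact h1.trans (by gcongr)
    _ = M * (2 * B * bx.card) := by ring
    _ = _ := by rw [h3]

/-- pairing of w with column c -/
def hdot {n m : ℕ} (c : Fin m) (w : Fin n → ℤ) (A : Fin n → Fin m → ℤ) : ℤ :=
  ∑ i, w i * A i c

open scoped Classical in
/-- counted set -/
noncomputable def hF {n m : ℕ} (z : Matrix (Fin n) (Fin m) ℤ) (B : ℕ) (c : Fin m)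
    (Q : (Fin n → Fin m → ℤ) → Prop) (w : (Fin n → Fin m → ℤ) → Fin n → ℤ) (t : ℕ) (k s : ℤ) :
    Finset (Fin n → Fin m → ℤ) :=
  (hbox z B).filter fun A => Q A ∧ k ≤ hdot c (w A) A ∧ (t : ℤ) ∣ hdot c (w A) A - s

open scoped Classical in
/-- counted set -/
noncomputable def hG {n m : ℕ} (z : Matrix (Fin n) (Fin m) ℤ) (B : ℕ) (c : Fin m)
    (Q : (Fin n → Fin m → ℤ) → Prop) (w : (Fin n → Fin m → ℤ) → Fin n → ℤ) (k : ℤ) :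
    Finset (Fin n → Fin m → ℤ) :=
  (hbox z B).filter fun A => Q A ∧ k ≤ hdot c (w A) A

lemma exists_res {n : ℕ} (t : ℕ) (ht : 0 < t) : ∃ E : (Fin n → ℤ) → (Fin n → ℤ),
    (∀ w i, 0 ≤ E w i ∧ E w i < t) ∧
    ∀ w : Fin n → ℤ, (∃ x : Fin n → ℤ, ∑ i, w i * x i = 1) → (t : ℤ) ∣ ∑ i, w i * E w i - 1 := by
  have : ∀ w : Fin n → ℤ, ∃ e : Fin n → ℤ, (∀ i, 0 ≤ e i ∧ e i < t) ∧
    ((∃ x : Fin n → ℤ, ∑ i, w i * x i = 1) → (t : ℤ) ∣ ∑ i, w i * e i - 1) := by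
    intro w
    have ht' : (0 : ℤ) < t := by exact_mod_cast ht
    by_cases h : ∃ x : Fin n → ℤ, ∑ i, w i * x i = 1
    · obtain ⟨x, hx⟩ := h
      refine ⟨fun i => x i % t, fun i => ⟨Int.emod_nonneg _ ht'.ne', Int.emod_lt_of_pos _ ht'⟩,
        fun _ => ?_⟩
      rw [← hx, ← Finset.sum_sub_distrib]
      apply Finset.dvd_sum
      intro i _
      rw [← mul_sub]
      apply Dvd.dvd.mul_left
      rw [← dvd_neg, neg_sub]
      exact Int.dvd_self_sub_emod
    · exact ⟨fun _ => 0, fun i => ⟨le_rfl, ht'⟩, fun h' => absurd h' h⟩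
  choose E hE using this
  exact ⟨E, fun w => (hE w).1, fun w => (hE w).2⟩

section
variable {n m : ℕ} (z : Matrix (Fin n) (Fin m) ℤ) (B : ℕ) (c : Fin m)
    (Q : (Fin n → Fin m → ℤ) → Prop) (w : (Fin n → Fin m → ℤ) → Fin n → ℤ) (t : ℕ)

lemma step_bound (ht : 0 < t) 
    (hQ : ∀ A A' : Fin n → Fin m → ℤ, (∀ i l, l ≠ c → A i l = A' i l) → Q A → Q A')
    (hw : ∀ A A' : Fin n → Fin m → ℤ, (∀ i l, l ≠ c → A i l = A' i l) → w A = w A')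
    (hx : ∀ A, Q A → ∃ x : Fin n → ℤ, ∑ i, w A i * x i = 1) (k s : ℤ) :
    2 * B * (hF z B c Q w t k s).card ≤ 2 * B * (hF z B c Q w t k (s + 1)).card +
      (n * t + n * (n * t)) * (2 * B) ^ (n * m) := by
  classical
  obtain ⟨E, hE1, hE2⟩ := exists_res (n := n) t ht
  let sh : (Fin n → Fin m → ℤ) → (Fin n → Fin m → ℤ) := fun A i l =>
    A i l + if l = c then E (w A) i else 0
  have hsh : ∀ A i l, l ≠ c → A i l = sh A i l := fun A i l hl => by simp [sh, hl]
  have hshw : ∀ A, w (sh A) = w A := fun A => (hw A (sh A) (hsh A)).symm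
  have hshd : ∀ A, hdot c (w (sh A)) (sh A) = hdot c (w A) A + ∑ i, w A i * E (w A) i := by
    intro A
    rw [hshw]
    simp [hdot, sh, mul_add, Finset.sum_add_distrib]
  let T1 : Fin n → Finset (Fin n → Fin m → ℤ) := fun i =>
    (hbox z B).filter fun A => z i c + B - t ≤ A i c
  let T2 : Fin n → Finset (Fin n → Fin m → ℤ) := fun i =>
    (hbox z B).filter fun A => w A i ≠ 0 ∧ k ≤ hdot c (w A) A ∧
      hdot c (w A) A < k + n * t * |w A i|
  have hT1 : ∀ i, 2 * B * (T1 i).card ≤ t * (2 * B) ^ (n * m) := by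
    intro i
    apply fiber_bound z B i c (T1 i) (Finset.filter_subset _ _)
    intro u hu v hv _
    simp only [T1, Finset.mem_filter, mem_hbox] at hu hv
    have := (hu.1 i c).2
    linarith [hv.2]
  have hT2 : ∀ i, 2 * B * (T2 i).card ≤ (n * t) * (2 * B) ^ (n * m) := by
    intro i
    apply fiber_bound z B i c (T2 i) (Finset.filter_subset _ _)
    intro u hu v hv huv
    simp only [T2, Finset.mem_filter, mem_hbox] at hu hv
    have hwe : w u = w v := hw u v fun k l hl => huv k l (by simp [hl])
    rw [hwe] at hu
    have hd : hdot c (w v) u - hdot c (w v) v = w v i * (u i c - v i c) := by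
      simp only [hdot]
      rw [← Finset.sum_sub_distrib, Finset.sum_eq_single i]
      · ring
      · intro b _ hb
        rw [huv b c (by simp [hb])]; ring
      · simp
    have hlt : |w v i * (u i c - v i c)| < n * t * |w v i| := by
      rw [← hd, abs_lt]
      constructor <;> linarith [hu.2.2.1, hu.2.2.2, hv.2.2.1, hv.2.2.2]
    rw [abs_mul, mul_comm] at hlt
    have hlt2 := lt_of_mul_lt_mul_right hlt (abs_nonneg _)
    have := (abs_lt.1 hlt2).2
    push_cast
    linarith
  let Gd := (hF z B c Q w t k s).filter fun A => sh A ∈ hF z B c Q w t k (s + 1)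
  have hGd : Gd.card ≤ (hF z B c Q w t k (s + 1)).card := by
    apply Finset.card_le_card_of_injOn sh
    · intro A hA
      exact (Finset.mem_filter.1 hA).2
    · intro A _ A' _ hAA
      have hww : w A = w A' := by rw [← hshw A, ← hshw A', hAA]
      funext i l
      have := congrFun (congrFun hAA i) l
      simpa [sh, hww] using this
  have hsub : hF z B c Q w t k s ⊆ Gd ∪ (Finset.univ.biUnion T1 ∪ Finset.univ.biUnion T2) := by
    intro A hA
    have hA' := hA
    simp only [hF, Finset.mem_filter] at hA'
    obtain ⟨hbx, hQA, hk, hdv⟩ := hA'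
    by_cases h1 : sh A ∈ hbox z B
    swap
    · have : ∃ i, z i c + B - t ≤ A i c := by
        by_contra! hcon
        apply h1
        rw [mem_hbox] at hbx ⊢
        intro i l
        by_cases hl : l = c
        · subst hl
          have := hbx i l
          have := hE1 (w A) i
          have := hcon i
          simp only [sh, if_true]
          omega
        · rw [← hsh A i l hl]; exact hbx i l
      obtain ⟨i, hi⟩ := this
      have : A ∈ T1 i := Finset.mem_filter.2 ⟨hbx, hi⟩
      simp only [Finset.mem_union, Finset.mem_biUnion, Finset.mem_univ, true_and]
      exact Or.inr (Or.inl ⟨i, this⟩)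
    have hQ' : Q (sh A) := hQ A _ (hsh A) hQA
    have hdv' : (t : ℤ) ∣ hdot c (w (sh A)) (sh A) - (s + 1) := by
      rw [hshd]
      have := dvd_add hdv (hE2 (w A) (hx A hQA))
      rwa [show hdot c (w A) A - s + (∑ i, w A i * E (w A) i - 1) =
        hdot c (w A) A + ∑ i, w A i * E (w A) i - (s + 1) by ring] at this
    by_cases h2 : k ≤ hdot c (w (sh A)) (sh A)
    · refine Finset.mem_union_left _ (Finset.mem_filter.2 ⟨hA, Finset.mem_filter.2 ⟨h1, hQ', h2, hdv'⟩⟩)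
    · push Not at h2
      rw [hshd] at h2
      obtain ⟨x, hxx⟩ := hx A hQA
      have hne : (Finset.univ : Finset (Fin n)).Nonempty := by
        by_contra hcon
        rw [Finset.not_nonempty_iff_eq_empty] at hcon
        rw [hcon] at hxx
        simp at hxx
      obtain ⟨i, _, hi⟩ := Finset.exists_max_image Finset.univ (fun i => |w A i|) hne
      have hi0 : w A i ≠ 0 := by
        intro h0
        have : ∀ j, w A j = 0 := fun j => by
          have := hi j (Finset.mem_univ _)
          simpa [h0] using this
        simp [this] at hxx
      have hbd : -(∑ j, w A j * E (w A) j) ≤ n * t * |w A i| := by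
        rw [← Finset.sum_neg_distrib]
        have : ∀ j ∈ Finset.univ, -(w A j * E (w A) j) ≤ t * |w A i| := by
          intro j hj
          have h1 := hE1 (w A) j
          calc -(w A j * E (w A) j) ≤ |w A j * E (w A) j| := neg_le_abs _
            _ = E (w A) j * |w A j| := by rw [abs_mul, abs_of_nonneg h1.1, mul_comm]
            _ ≤ t * |w A i| := mul_le_mul h1.2.le (hi j hj) (abs_nonneg _) (by positivity)
        have := Finset.sum_le_card_nsmul _ _ _ this
        simpa [mul_assoc] using this
      have : A ∈ T2 i := Finset.mem_filter.2 ⟨hbx, hi0, hk, by linarith⟩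
      simp only [Finset.mem_union, Finset.mem_biUnion, Finset.mem_univ, true_and]
      exact Or.inr (Or.inr ⟨i, this⟩)
  have hc1 : 2 * B * (Finset.univ.biUnion T1).card ≤ n * (t * (2 * B) ^ (n * m)) := by
    calc _ ≤ 2 * B * ∑ i, (T1 i).card := by gcongr; exact Finset.card_biUnion_le
      _ = ∑ i, 2 * B * (T1 i).card := by rw [Finset.mul_sum]
      _ ≤ _ := by simpa using Finset.sum_le_card_nsmul Finset.univ _ _ fun i _ => hT1 i
  have hc2 : 2 * B * (Finset.univ.biUnion T2).card ≤ n * (n * t * (2 * B) ^ (n * m)) := by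
    calc _ ≤ 2 * B * ∑ i, (T2 i).card := by gcongr; exact Finset.card_biUnion_le
      _ = ∑ i, 2 * B * (T2 i).card := by rw [Finset.mul_sum]
      _ ≤ _ := by simpa using Finset.sum_le_card_nsmul Finset.univ _ _ fun i _ => hT2 i
  have hc : (hF z B c Q w t k s).card ≤ (hF z B c Q w t k (s + 1)).card +
      ((Finset.univ.biUnion T1).card + (Finset.univ.biUnion T2).card) := by
    refine (Finset.card_le_card hsub).trans ((Finset.card_union_le _ _).trans ?_)
    exact Nat.add_le_add hGd (Finset.card_union_le _ _)
  have := Nat.mul_le_mul_left (2 * B) hc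
  nlinarith

lemma sum_bound (ht : 0 < t) 
    (hQ : ∀ A A' : Fin n → Fin m → ℤ, (∀ i l, l ≠ c → A i l = A' i l) → Q A → Q A')
    (hw : ∀ A A' : Fin n → Fin m → ℤ, (∀ i l, l ≠ c → A i l = A' i l) → w A = w A')
    (hx : ∀ A, Q A → ∃ x : Fin n → ℤ, ∑ i, w A i * x i = 1) (k s : ℤ) :
    |2 * (B : ℝ) * (t * ((hF z B c Q w t k s).card : ℝ) - (hG z B c Q w k).card)| ≤
      t * (t * (n * t + n * (n * t))) * (2 * (B : ℝ)) ^ (n * m) := by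
  classical
  set f : ℤ → ℝ := fun s => 2 * (B : ℝ) * (hF z B c Q w t k s).card with hf
  set C : ℝ := (n * t + n * (n * t)) * (2 * (B : ℝ)) ^ (n * m) with hC
  have hC0 : 0 ≤ C := by positivity
  have h1 : ∀ s, f s ≤ f (s + 1) + C := by
    intro s
    have := step_bound z B c Q w t ht hQ hw hx k s
    simp only [hf, hC]
    exact_mod_cast this
  have h2 : ∀ (j : ℕ) s, f s ≤ f (s + j) + j * C := by
    intro j
    induction j with
    | zero => intro s; simp
    | succ j ih =>
      intro s
      have a := ih s
      have b := h1 (s + j)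
      rw [add_assoc] at b
      push_cast
      linarith
  have hper : ∀ s u, (t : ℤ) ∣ s - u → f s = f u := by
    intro s u h
    have : hF z B c Q w t k s = hF z B c Q w t k u := by
      unfold hF
      refine Finset.filter_congr fun A _ => ?_
      have : (t : ℤ) ∣ hdot c (w A) A - s ↔ (t : ℤ) ∣ hdot c (w A) A - u := by
        constructor
        · intro h'
          have := dvd_add h' h
          rwa [show hdot c (w A) A - s + (s - u) = hdot c (w A) A - u by ring] at this
        · intro h'
          have := dvd_sub h' h
          rwa [show hdot c (w A) A - u - (s - u) = hdot c (w A) A - s by ring] at this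
      rw [this]
    simp only [hf, this]
  have ht' : (0 : ℤ) < t := by exact_mod_cast ht
  have h3 : ∀ s u, f s ≤ f u + t * C := by
    intro s u
    have hnn := Int.emod_nonneg (u - s) ht'.ne'
    have hlt := Int.emod_lt_of_pos (u - s) ht'
    obtain ⟨j, hj⟩ := Int.eq_ofNat_of_zero_le hnn
    have hjt : j ≤ t := by omega
    have e : f (s + j) = f u := by
      apply hper
      rw [← hj, ← dvd_neg]
      have := Int.dvd_self_sub_emod (x := u - s) (m := t)
      rwa [show u - s - (u - s) % (t : ℤ) = -(s + (u - s) % (t : ℤ) - u) by ring] at this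
    have := h2 j s
    rw [e] at this
    have : (j : ℝ) * C ≤ t * C := by gcongr
    linarith
  have h4 : 2 * (B : ℝ) * (hG z B c Q w k).card = ∑ u ∈ Finset.range t, f u := by
    have : (hG z B c Q w k).card = ∑ u ∈ Finset.range t, (hF z B c Q w t k u).card := by
      rw [Finset.card_eq_sum_card_fiberwise (t := Finset.range t)
        (f := fun A => (hdot c (w A) A % t).toNat)]
      · refine Finset.sum_congr rfl fun u hu => ?_
        congr 1
        ext A
        simp only [hG, hF, Finset.mem_filter, and_assoc]
        refine and_congr_right fun _ => and_congr_right fun _ => and_congr_right fun _ => ?_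
        have hu' := Finset.mem_range.1 hu
        have hnn := Int.emod_nonneg (hdot c (w A) A) ht'.ne'
        have : (hdot c (w A) A % t).toNat = u ↔ hdot c (w A) A % t = u := by omega
        rw [this, dvd_sub_comm, ← Int.modEq_iff_dvd, Int.ModEq,
          Int.emod_eq_of_lt (a := (u : ℤ)) (by omega) (by omega), eq_comm]
      · intro A _
        have hnn := Int.emod_nonneg (hdot c (w A) A) ht'.ne'
        have hlt := Int.emod_lt_of_pos (hdot c (w A) A) ht'
        simp only [Finset.coe_range, Set.mem_Iio]
        omega
    rw [this]
    push_cast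
    rw [Finset.mul_sum]
  have h5 : t * f s ≤ (∑ u ∈ Finset.range t, f u) + t * (t * C) := by
    have := Finset.card_nsmul_le_sum (Finset.range t) (fun u => f u + t * C) (f s)
      fun u _ => h3 s u
    simpa [Finset.sum_add_distrib] using this
  have h6 : (∑ u ∈ Finset.range t, f u) ≤ t * f s + t * (t * C) := by
    have := Finset.sum_le_card_nsmul (Finset.range t) (fun u : ℕ => f u) (f s + t * C)
      fun u _ => h3 u s
    simpa [mul_add] using this
  have e : 2 * (B : ℝ) * (t * ((hF z B c Q w t k s).card : ℝ) - (hG z B c Q w k).card) =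
    t * f s - ∑ u ∈ Finset.range t, f u := by
    rw [← h4]; simp only [hf]; ring
  rw [e, abs_le]
  have e2 : (t : ℝ) * (t * (n * t + n * (n * t))) * (2 * (B : ℝ)) ^ (n * m) = t * (t * C) := by
    simp only [hC]; ring
  rw [e2]
  constructor <;> linarith

end

lemma density_transfer {n m : ℕ} (c : Fin m)
    (S S' : Set (Matrix (Fin n) (Fin m) ℤ)) (w : (Fin n → Fin m → ℤ) → Fin n → ℤ) (t r : ℕ)
    (hrt : r < t)
    (hQ : ∀ A A' : Fin n → Fin m → ℤ, (∀ i l, l ≠ c → A i l = A' i l) →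
      Matrix.of A ∈ S → Matrix.of A' ∈ S)
    (hw : ∀ A A' : Fin n → Fin m → ℤ, (∀ i l, l ≠ c → A i l = A' i l) → w A = w A')
    (hx : ∀ A, Matrix.of A ∈ S → ∃ x : Fin n → ℤ, ∑ i, w A i * x i = 1)
    (hS' : ∀ A, Matrix.of A ∈ S' ↔ Matrix.of A ∈ S ∧ |hdot c (w A) A| % (t : ℤ) = r)
    (δ : ℝ) (hδ : HasMatDensity S δ) : HasMatDensity S' (δ / t) := by
  classical
  intro z
  have ht : 0 < t := by omega
  have htR : (0 : ℝ) < t := by exact_mod_cast ht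
  have hneg : ∀ A, hdot c (-w A) A = - hdot c (w A) A := by
    intro A; simp [hdot]
  let Q : (Fin n → Fin m → ℤ) → Prop := fun A => Matrix.of A ∈ S
  let w' : (Fin n → Fin m → ℤ) → Fin n → ℤ := fun A => - w A
  have hw' : ∀ A A' : Fin n → Fin m → ℤ, (∀ i l, l ≠ c → A i l = A' i l) → w' A = w' A' :=
    fun A A' h => by simp [w', hw A A' h]
  have hx' : ∀ A, Q A → ∃ x : Fin n → ℤ, ∑ i, w' A i * x i = 1 := by
    intro A hA
    obtain ⟨x, hxx⟩ := hx A hA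
    exact ⟨-x, by simpa [w'] using hxx⟩
  have hN : ∀ B, matCubeCount S z B = (hG z B c Q w 0).card + (hG z B c Q w' 1).card := by
    intro B
    rw [← Finset.card_union_of_disjoint]
    · unfold matCubeCount hG
      congr 1
      ext A
      simp only [Finset.mem_filter, Finset.mem_union, w', hneg, Q]
      change A ∈ hbox z B ∧ _ ↔ _
      have : 0 ≤ hdot c (w A) A ∨ 1 ≤ -hdot c (w A) A := by omega
      tauto
    · rw [Finset.disjoint_left]
      intro A hA hA'
      simp only [hG, Finset.mem_filter, w', hneg] at hA hA'
      omega
  have hN' : ∀ B, matCubeCount S' z B = (hF z B c Q w t 0 r).card + (hF z B c Q w' t 1 r).card := by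
    intro B
    rw [← Finset.card_union_of_disjoint]
    · unfold matCubeCount hF
      congr 1
      ext A
      simp only [Finset.mem_filter, Finset.mem_union, w', hneg, Q, hS']
      change A ∈ hbox z B ∧ _ ↔ _
      have hr : ∀ x : ℤ, x % (t : ℤ) = r ↔ (t : ℤ) ∣ x - r := by
        intro x
        rw [dvd_sub_comm, ← Int.modEq_iff_dvd, Int.ModEq,
          Int.emod_eq_of_lt (a := (r : ℤ)) (by omega) (by omega), eq_comm]
      rw [hr]
      rcases le_or_gt 0 (hdot c (w A) A) with h | h
      · rw [abs_of_nonneg h]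
        have : ¬ 1 ≤ -hdot c (w A) A := by omega
        tauto
      · rw [abs_of_neg h]
        have h1 : 1 ≤ -hdot c (w A) A := by omega
        have h2 : ¬ 0 ≤ hdot c (w A) A := by omega
        tauto
    · rw [Finset.disjoint_left]
      intro A hA hA'
      simp only [hF, Finset.mem_filter, w', hneg] at hA hA'
      omega
  set K : ℝ := 2 * (t * (t * (n * t + n * (n * t)))) with hK
  have hK0 : 0 ≤ K := by positivity
  have hb : ∀ B : ℕ, 1 ≤ B → |(matCubeCount S' z B : ℝ) / (2 * (B : ℝ)) ^ (n * m) -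
      (matCubeCount S z B : ℝ) / (2 * (B : ℝ)) ^ (n * m) / t| ≤ K / t / 2 / B := by
    intro B hB
    have hBR : (0 : ℝ) < B := by exact_mod_cast hB
    have h1 := sum_bound z B c Q w t ht hQ hw hx 0 r
    have h2 := sum_bound z B c Q w' t ht hQ hw' hx' 1 r
    rw [hN, hN']
    push_cast
    set a : ℝ := ((hF z B c Q w t 0 r).card : ℝ)
    set b : ℝ := ((hF z B c Q w' t 1 r).card : ℝ)
    set a' : ℝ := ((hG z B c Q w 0).card : ℝ)
    set b' : ℝ := ((hG z B c Q w' 1).card : ℝ)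
    set P : ℝ := (2 * (B : ℝ)) ^ (n * m) with hP
    have hP0 : 0 < P := by positivity
    have h3 : |2 * (B : ℝ) * (t * (a + b) - (a' + b'))| ≤ K * P := by
      have := abs_add_le (2 * (B : ℝ) * (t * a - a')) (2 * (B : ℝ) * (t * b - b'))
      rw [show 2 * (B : ℝ) * (t * (a + b) - (a' + b')) = 2 * (B : ℝ) * (t * a - a') +
        2 * (B : ℝ) * (t * b - b') by ring]
      simp only [hK]
      linarith
    have e : (a + b) / P - (a' + b') / P / t =
      2 * (B : ℝ) * (t * (a + b) - (a' + b')) / (2 * B * P * t) := by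
      field_simp
    have hpos : 0 < 2 * (B : ℝ) * P * t := by positivity
    rw [e, abs_div, abs_of_pos hpos, div_le_iff₀ hpos]
    refine h3.trans (le_of_eq ?_)
    field_simp
  have hlim0 : Tendsto (fun B : ℕ => K / t / 2 / (B : ℝ)) atTop (nhds 0) :=
    tendsto_const_div_atTop_nhds_zero_nat _
  have hd := squeeze_zero_norm' (f := fun B : ℕ => (matCubeCount S' z B : ℝ) / (2 * (B : ℝ)) ^ (n * m) -
      (matCubeCount S z B : ℝ) / (2 * (B : ℝ)) ^ (n * m) / t)
    (Filter.eventually_atTop.2 ⟨1, fun B hB => by rw [Real.norm_eq_abs]; exact hb B hB⟩) hlim0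
  have := hd.add ((hδ z).div_const (t : ℝ))
  simpa using this

/-- first columns are in Hermite shape -/
def hPre {N m : ℕ} (hNm : N ≤ m) (d : Fin N → ℕ) (G : Matrix (Fin (N + 1)) (Fin m) ℤ) : Prop :=
  ∀ i : Fin N, G i.castSucc (Fin.castLE hNm i) = d i ∧
    (∀ k : Fin (N + 1), (i : ℕ) < k → G k (Fin.castLE hNm i) = 0) ∧
    (∀ k : Fin (N + 1), (k : ℕ) < i → 0 ≤ G k (Fin.castLE hNm i) ∧ G k (Fin.castLE hNm i) < d i)

lemma le_of_sm {r m : ℕ} (j : Fin r → Fin m) (hj : StrictMono j) (a : ℕ) (ha : a < r) :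
    a ≤ (j ⟨a, ha⟩ : ℕ) := by
  induction a with
  | zero => omega
  | succ a ih =>
    have h1 := ih (by omega)
    have h2 : j ⟨a, by omega⟩ < j ⟨a + 1, ha⟩ := hj (by simp [Fin.lt_def])
    rw [Fin.lt_def] at h2
    omega

lemma pre_of_hnf {N m : ℕ} (hNm : N + 1 ≤ m) (d : Fin N → ℕ) (hd : ∀ i, 0 < d i)
    (H : Matrix (Fin (N + 1)) (Fin m) ℤ) (hH : IsHNF H)
    (hdiag : ∀ i : Fin N, H i.castSucc (Fin.castLE (by omega) i) = d i) :
    hPre (by omega) d H ∧ 0 ≤ H (Fin.last N) ⟨N, hNm⟩ := by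
  obtain ⟨r, hr, j, hj, hz, hpos, hl, hred⟩ := hH
  have hNr : ∀ i : Fin N, (i : ℕ) < r := by
    intro i
    by_contra hcon
    have := hz i.castSucc (by simpa using hcon) (Fin.castLE (by omega) i)
    rw [hdiag] at this
    have := hd i
    omega
  have hji : ∀ i : Fin N, j ⟨i, hNr i⟩ = Fin.castLE (by omega) i := by
    intro i
    have h1 := le_of_sm j hj i (hNr i)
    by_contra hne
    have hne' : (j ⟨i, hNr i⟩ : ℕ) ≠ i := fun h => hne (Fin.ext (by simpa using h))
    have := hl ⟨i, hNr i⟩ (Fin.castLE (by omega) i) (by simp; omega)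
    have h2 := hdiag i
    have h3 := hd i
    have e : Fin.castLE hr ⟨i, hNr i⟩ = i.castSucc := Fin.ext (by simp)
    rw [e] at this
    omega
  constructor
  · intro i
    refine ⟨hdiag i, ?_, ?_⟩
    · intro k hk
      by_cases hkr : r ≤ k
      · exact hz k hkr _
      · push Not at hkr
        have h1 := le_of_sm j hj k hkr
        exact hl ⟨k, hkr⟩ (Fin.castLE (by omega) i) (by simp; omega)
    · intro k hk
      have := hred ⟨i, hNr i⟩ k hk
      rw [hji] at this
      have e : Fin.castLE hr ⟨i, hNr i⟩ = i.castSucc := Fin.ext (by simp)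
      rw [e, hdiag i] at this
      exact this
  · by_cases hNr : r ≤ N
    · rw [hz (Fin.last N) (by simpa using hNr)]
    · push Not at hNr
      have h1 := le_of_sm j hj N hNr
      rcases h1.eq_or_lt with h | h
      · have := hpos ⟨N, hNr⟩
        have e : j ⟨N, hNr⟩ = ⟨N, hNm⟩ := Fin.ext (by simpa using h.symm)
        rw [e] at this
        exact this.le
      · exact (hl ⟨N, hNr⟩ ⟨N, hNm⟩ h).ge

lemma hnf_of_pre {N m : ℕ} (hNm : N + 1 ≤ m) (d : Fin N → ℕ) (hd : ∀ i, 0 < d i)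
    (G : Matrix (Fin (N + 1)) (Fin m) ℤ) (hG : hPre (by omega) d G) :
    ∃ W : Matrix (Fin (N + 1)) (Fin (N + 1)) ℤ, IsUnimodular W ∧ IsHNF (W * G) ∧
      ∀ i : Fin N, (W * G) i.castSucc (Fin.castLE (by omega) i) = d i := by
  have hlast : ∀ l : Fin m, (l : ℕ) < N → G (Fin.last N) l = 0 := by
    intro l hl
    have := (hG ⟨l, hl⟩).2.1 (Fin.last N) (by simpa using hl)
    exact this
  by_cases h0 : ∀ l, G (Fin.last N) l = 0
  · refine ⟨1, Or.inl (by simp), ?_, ?_⟩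
    · rw [Matrix.one_mul]
      refine ⟨N, by omega, Fin.castLE (by omega), ?_, ?_, ?_, ?_, ?_⟩
      · exact Fin.strictMono_castLE _
      · intro i hi l
        have : i = Fin.last N := Fin.ext (by simp; omega)
        rw [this, h0]
      · intro i
        have := (hG i).1
        have h2 := hd i
        change 0 < G i.castSucc _
        rw [this]
        exact_mod_cast h2
      · intro i l hl
        have hl' : (l : ℕ) < i := by simpa using hl
        exact (hG ⟨l, by omega⟩).2.1 i.castSucc (by simpa using hl')
      · intro i k hk
        have := (hG i).2.2 k hk
        rw [← (hG i).1] at this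
        exact this
    · intro i
      rw [Matrix.one_mul]
      exact (hG i).1
  · push Not at h0
    classical
    obtain ⟨p, hp0, hpmin⟩ : ∃ p : Fin m, G (Fin.last N) p ≠ 0 ∧
        ∀ l, l < p → G (Fin.last N) l = 0 := by
      have hne : (Finset.univ.filter fun l => G (Fin.last N) l ≠ 0).Nonempty := by
        obtain ⟨l, hl⟩ := h0
        exact ⟨l, by simp [hl]⟩
      refine ⟨Finset.min' _ hne, (Finset.mem_filter.1 (Finset.min'_mem _ hne)).2, ?_⟩
      intro l hl
      by_contra hcon
      exact absurd (Finset.min'_le _ l (by simp [hcon])) (not_le.2 hl)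
    have hpN : N ≤ (p : ℕ) := by
      by_contra hcon
      exact hp0 (hlast p (by omega))
    set x := G (Fin.last N) p with hx
    let b : Fin (N + 1) → ℤ := fun k => if k = Fin.last N then x.sign else - (G k p / x)
    let W : Matrix (Fin (N + 1)) (Fin (N + 1)) ℤ := (1 : Matrix _ _ ℤ).updateCol (Fin.last N) b
    have hdet : W.det = x.sign := by
      have : W.det = Matrix.cramer (1 : Matrix (Fin (N + 1)) (Fin (N + 1)) ℤ) b (Fin.last N) := rfl
      rw [this, Matrix.cramer_one]
      simp [b]
    have hWG : ∀ k l, (W * G) k l = if k = Fin.last N then x.sign * G (Fin.last N) l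
        else G k l - (G k p / x) * G (Fin.last N) l := by
      intro k l
      rw [Matrix.mul_apply, Fin.sum_univ_castSucc]
      have e1 : ∀ i : Fin N, W k i.castSucc = (1 : Matrix (Fin (N + 1)) (Fin (N + 1)) ℤ) k i.castSucc := by
        intro i
        simp only [W]
        rw [Matrix.updateCol_ne]
        exact (Fin.castSucc_lt_last i).ne
      have e2 : W k (Fin.last N) = b k := by simp [W]
      simp only [e1, e2, b]
      induction k using Fin.lastCases with
      | last =>
        simp [Matrix.one_apply, (Fin.castSucc_lt_last _).ne']
      | cast k =>
        simp [Matrix.one_apply, (Fin.castSucc_lt_last _).ne, Fin.castSucc_inj]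
        ring
    have hWk : ∀ (k : Fin (N + 1)) (l : Fin m), (l : ℕ) < N → (W * G) k l = G k l := by
      intro k l hl
      rw [hWG, hlast l hl]
      split_ifs with h
      · rw [h, hlast l hl]; simp
      · simp
    have hxpos : 0 < x.sign * x := by
      rw [Int.sign_mul_self_eq_abs]; exact abs_pos.2 hp0
    refine ⟨W, ?_, ?_, ?_⟩
    · unfold IsUnimodular
      rw [hdet]
      rcases lt_trichotomy x 0 with h | h | h
      · right; exact Int.sign_eq_neg_one_of_neg h
      · exact absurd h hp0
      · left; exact Int.sign_eq_one_of_pos h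
    · let j : Fin (N + 1) → Fin m := fun i => if h : (i : ℕ) < N then Fin.castLE hNm i else p
      have hj1 : ∀ i : Fin N, j i.castSucc = Fin.castLE (by omega) i := by
        intro i
        simp only [j]
        rw [dif_pos (by simp)]
        exact Fin.ext (by simp)
      have hj2 : j (Fin.last N) = p := by simp [j]
      have hc : ∀ i : Fin (N + 1), Fin.castLE (le_refl (N + 1)) i = i := fun i => Fin.ext (by simp)
      refine ⟨N + 1, le_rfl, j, ?_, ?_, ?_, ?_, ?_⟩
      · intro a b hab
        induction a using Fin.lastCases with
        | last => exact absurd hab (not_lt.2 (Fin.le_last b))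
        | cast a =>
          rw [hj1]
          induction b using Fin.lastCases with
          | last => rw [hj2, Fin.lt_def]; simp; omega
          | cast b => rw [hj1]; exact hab
      · intro i hi; omega
      · intro i
        rw [hc]
        induction i using Fin.lastCases with
        | last => rw [hj2, hWG, if_pos rfl]; exact hxpos
        | cast i =>
          rw [hj1, hWk _ _ (by simp), (hG i).1]
          exact_mod_cast hd i
      · intro i l hl
        rw [hc]
        induction i using Fin.lastCases with
        | last =>
          rw [hj2] at hl
          rw [hWG, if_pos rfl, hpmin l hl, mul_zero]
        | cast i =>
          rw [hj1] at hl
          have hl' : (l : ℕ) < i := by simpa using hl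
          rw [hWk _ _ (by omega)]
          exact (hG ⟨l, by omega⟩).2.1 i.castSucc (by simpa using hl')
      · intro i k hk
        rw [hc]
        induction i using Fin.lastCases with
        | last =>
          have hk' : k ≠ Fin.last N := fun h => by rw [h] at hk; omega
          rw [hj2, hWG k, if_neg hk', hWG, if_pos rfl, Int.sign_mul_self_eq_abs]
          have e : G k p - G k p / x * G (Fin.last N) p = G k p % x := by
            rw [← hx, Int.emod_def]; ring
          rw [e]
          exact ⟨Int.emod_nonneg _ hp0, Int.emod_lt_abs _ hp0⟩
        | cast i =>
          rw [hj1, hWk _ _ (by simp), hWk _ _ (by simp), (hG i).1]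
          exact (hG i).2.2 k (by simpa using hk)
    · intro i
      rw [hWk _ _ (by simp)]
      exact (hG i).1

lemma last_row {N m : ℕ} (hNm : N ≤ m) (d : Fin N → ℕ) (hd : ∀ i, 0 < d i)
    (G : Matrix (Fin (N + 1)) (Fin m) ℤ) (hG : hPre hNm d G)
    (V : Matrix (Fin (N + 1)) (Fin (N + 1)) ℤ) (hV : IsUnimodular V)
    (hVG : hPre hNm d (V * G)) (l : Fin m) :
    |(V * G) (Fin.last N) l| = |G (Fin.last N) l| := by
  have h0 : ∀ a : ℕ, ∀ ha : a < N, V (Fin.last N) (Fin.castSucc ⟨a, ha⟩) = 0 := by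
    intro a
    induction a using Nat.strong_induction_on with
    | _ a ih =>
      intro ha
      have h1 := (hVG ⟨a, ha⟩).2.1 (Fin.last N) (by simpa using ha)
      rw [Matrix.mul_apply, Finset.sum_eq_single (Fin.castSucc ⟨a, ha⟩)] at h1
      · rw [(hG ⟨a, ha⟩).1] at h1
        have := hd ⟨a, ha⟩
        rcases mul_eq_zero.1 h1 with h | h
        · exact h
        · exfalso; omega
      · intro b _ hb
        have hb' : (b : ℕ) ≠ a := fun h => hb (Fin.ext (by simpa using h))
        rcases lt_or_gt_of_ne hb' with h | h
        · have := ih b h (by omega)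
          have e : Fin.castSucc ⟨(b : ℕ), by omega⟩ = b := Fin.ext (by simp)
          rw [e] at this
          rw [this, zero_mul]
        · rw [(hG ⟨a, ha⟩).2.1 b h, mul_zero]
      · simp
  have hu : IsUnit (V (Fin.last N) (Fin.last N)) := by
    have hdv : V (Fin.last N) (Fin.last N) ∣ V.det := by
      rw [Matrix.det_succ_row V (Fin.last N)]
      apply Finset.dvd_sum
      intro i _
      induction i using Fin.lastCases with
      | last => exact Dvd.dvd.mul_right (Dvd.dvd.mul_left (dvd_refl _) _) _
      | cast i => rw [h0 i i.2]; simp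
    have : IsUnit V.det := by
      rcases hV with h | h <;> rw [h] <;> simp
    exact isUnit_of_dvd_unit hdv this
  rw [Matrix.mul_apply, Fin.sum_univ_castSucc, Finset.sum_eq_zero, zero_add, abs_mul,
    Int.isUnit_iff_abs_eq.1 hu, one_mul]
  intro i _
  rw [h0 i i.2, zero_mul]

lemma unimod_mul {n : ℕ} {U V : Matrix (Fin n) (Fin n) ℤ} (hU : IsUnimodular U)
    (hV : IsUnimodular V) : IsUnimodular (U * V) := by
  unfold IsUnimodular at *
  rw [Matrix.det_mul]
  rcases hU with h | h <;> rcases hV with h' | h' <;> simp [h, h']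

lemma unimod_inv {n : ℕ} {U : Matrix (Fin n) (Fin n) ℤ} (hU : IsUnimodular U) :
    ∃ V : Matrix (Fin n) (Fin n) ℤ, IsUnimodular V ∧ U * V = 1 ∧ V * U = 1 := by
  have hu : IsUnit U.det := by
    rcases hU with h | h <;> rw [h] <;> simp
  have h1 : U * U⁻¹ = 1 := Matrix.mul_nonsing_inv U hu
  refine ⟨U⁻¹, ?_, h1, Matrix.nonsing_inv_mul U hu⟩
  have h2 : U.det * (U⁻¹).det = 1 := by rw [← Matrix.det_mul, h1, Matrix.det_one]
  unfold IsUnimodular at *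
  rcases hU with h | h <;> rw [h] at h2 <;> omega

/-- the first columns can be brought to Hermite shape -/
def hQ {N m : ℕ} (hNm : N ≤ m) (d : Fin N → ℕ) (A : Matrix (Fin (N + 1)) (Fin m) ℤ) : Prop :=
  ∃ U : Matrix (Fin (N + 1)) (Fin (N + 1)) ℤ, IsUnimodular U ∧ hPre hNm d (U * A)

lemma pre_congr {N m : ℕ} (hNm : N + 1 ≤ m) (d : Fin N → ℕ)
    (A A' : Matrix (Fin (N + 1)) (Fin m) ℤ) (h : ∀ i l, l ≠ ⟨N, hNm⟩ → A i l = A' i l)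
    (U : Matrix (Fin (N + 1)) (Fin (N + 1)) ℤ) (hA : hPre (by omega) d (U * A)) :
    hPre (by omega) d (U * A') := by
  have e : ∀ k (i : Fin N), (U * A') k (Fin.castLE (by omega) i) =
      (U * A) k (Fin.castLE (by omega) i) := by
    intro k i
    rw [Matrix.mul_apply, Matrix.mul_apply]
    refine Finset.sum_congr rfl fun x _ => ?_
    rw [h x]
    intro h
    have := congrArg Fin.val h
    simp at this
    omega
  intro i
  simp only [e]
  exact hA i

lemma key {N m : ℕ} (hNm : N + 1 ≤ m)
    (d : Fin N → ℕ) (hd : ∀ i, 0 < d i) (t r : ℕ) (hrt : r < t)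
    (δ : ℝ)
    (hδ : HasMatDensity
      {A : Matrix (Fin (N + 1)) (Fin m) ℤ | ∃ H, IsHNFOf H A ∧
        ∀ i : Fin N, H i.castSucc (Fin.castLE (by omega) i) = (d i : ℤ)} δ) :
    HasMatDensity
      {A : Matrix (Fin (N + 1)) (Fin m) ℤ | ∃ H, IsHNFOf H A ∧
        (∀ i : Fin N, H i.castSucc (Fin.castLE (by omega) i) = (d i : ℤ)) ∧
        H (Fin.last N) ⟨N, hNm⟩ % (t : ℤ) = (r : ℤ)}
      (δ / (t : ℝ)) := by
  classical
  have hN : N ≤ m := by omega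
  set c : Fin m := ⟨N, hNm⟩ with hc
  -- existence
  have hex : ∀ A : Matrix (Fin (N + 1)) (Fin m) ℤ, hQ hN d A → ∃ H, IsHNFOf H A ∧
        ∀ i : Fin N, H i.castSucc (Fin.castLE (by omega) i) = (d i : ℤ) := by
    rintro A ⟨U, hU, hP⟩
    obtain ⟨W, hW, hH, hdi⟩ := hnf_of_pre hNm d hd (U * A) hP
    obtain ⟨V, hV, -, hVU⟩ := unimod_inv (unimod_mul hW hU)
    refine ⟨W * (U * A), ⟨hH, V, hV, ?_⟩, hdi⟩
    rw [← Matrix.mul_assoc W, ← Matrix.mul_assoc V, hVU, Matrix.one_mul]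
  have hex' : ∀ A H : Matrix (Fin (N + 1)) (Fin m) ℤ, IsHNFOf H A →
        (∀ i : Fin N, H i.castSucc (Fin.castLE (by omega) i) = (d i : ℤ)) →
        hQ hN d A ∧ ∀ U : Matrix (Fin (N + 1)) (Fin (N + 1)) ℤ, IsUnimodular U →
          hPre hN d (U * A) → H (Fin.last N) c = |(U * A) (Fin.last N) c| := by
    rintro A H ⟨hH, U, hU, rfl⟩ hdi
    obtain ⟨hP, h0⟩ := pre_of_hnf hNm d hd H hH hdi
    obtain ⟨V, hV, -, hVU⟩ := unimod_inv hU
    refine ⟨⟨V, hV, by rw [← Matrix.mul_assoc, hVU, Matrix.one_mul]; exact hP⟩, ?_⟩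
    intro U' hU' hP'
    rw [← Matrix.mul_assoc] at hP' ⊢
    rw [last_row hN d hd H hP _ (unimod_mul hU' hU) hP', abs_of_nonneg h0]
  let A0 : (Fin (N + 1) → Fin m → ℤ) → Matrix (Fin (N + 1)) (Fin m) ℤ := fun A =>
    Matrix.of fun i l => if l = c then 0 else A i l
  have hA0 : ∀ A i l, l ≠ c → A0 A i l = Matrix.of A i l := fun A i l hl => by simp [A0, hl]
  have hA0' : ∀ A A' : Fin (N + 1) → Fin m → ℤ, (∀ i l, l ≠ c → A i l = A' i l) →
      A0 A = A0 A' := by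
    intro A A' h
    ext i l
    by_cases hl : l = c
    · simp [A0, hl]
    · simp [A0, hl, h i l hl]
  let UU : (Fin (N + 1) → Fin m → ℤ) → Matrix (Fin (N + 1)) (Fin (N + 1)) ℤ := fun A =>
    if h : hQ hN d (A0 A) then h.choose else 1
  have hQc : ∀ A A' : Matrix (Fin (N + 1)) (Fin m) ℤ, (∀ i l, l ≠ c → A i l = A' i l) →
      hQ hN d A → hQ hN d A' := by
    rintro A A' h ⟨U, hU, hP⟩
    exact ⟨U, hU, pre_congr hNm d A A' h U hP⟩
  have hUU : ∀ A, hQ hN d (Matrix.of A) → IsUnimodular (UU A) ∧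
      hPre hN d (UU A * Matrix.of A) := by
    intro A hA
    have h : hQ hN d (A0 A) := hQc _ _ (fun i l hl => (hA0 A i l hl).symm) hA
    simp only [UU, dif_pos h]
    exact ⟨h.choose_spec.1, pre_congr hNm d _ _ (hA0 A) _ h.choose_spec.2⟩
  have hdotU : ∀ A, hdot c (UU A (Fin.last N)) A = (UU A * Matrix.of A) (Fin.last N) c := by
    intro A
    simp [hdot, Matrix.mul_apply]
  refine density_transfer c _ _ (fun A => UU A (Fin.last N)) t r hrt ?_ ?_ ?_ ?_ δ hδ
  · rintro A A' h ⟨H, hH, hdi⟩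
    exact hex _ (hQc _ _ h (hex' _ H hH hdi).1)
  · intro A A' h
    simp only [UU, hA0' A A' h]
  · rintro A ⟨H, hH, hdi⟩
    obtain ⟨V, -, hUV, -⟩ := unimod_inv (hUU A (hex' _ H hH hdi).1).1
    refine ⟨fun i => V i (Fin.last N), ?_⟩
    have := congrFun (congrFun hUV (Fin.last N)) (Fin.last N)
    rw [Matrix.mul_apply] at this
    simpa using this
  · intro A
    constructor
    · rintro ⟨H, hH, hdi, hr⟩
      obtain ⟨h1, h2⟩ := hex' _ H hH hdi
      refine ⟨⟨H, hH, hdi⟩, ?_⟩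
      rw [hdotU, ← h2 _ (hUU A h1).1 (hUU A h1).2]
      exact hr
    · rintro ⟨⟨H, hH, hdi⟩, hr⟩
      obtain ⟨h1, h2⟩ := hex' _ H hH hdi
      refine ⟨H, hH, hdi, ?_⟩
      rw [hdotU, ← h2 _ (hUU A h1).1 (hUU A h1).2] at hr
      exact hr

/-- For `n ≤ m` and a residue class `r mod t`, the density of matrices whose HNF
diagonal is `(d_1, …, d_{n-1}, a)` with `a ≡ r (mod t)` is `1/t` times the density
of matrices whose HNF diagonal begins with `(d_1, …, d_{n-1})`. -/
theorem density_hnf_last_diag_residue (n m : ℕ) (hn : 2 ≤ n) (hnm : n ≤ m)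
    (d : Fin (n - 1) → ℕ) (hd : ∀ i, 0 < d i) (t r : ℕ) (hrt : r < t)
    (δ : ℝ)
    (hδ : HasMatDensity
      {A : Matrix (Fin n) (Fin m) ℤ | ∃ H, IsHNFOf H A ∧
        ∀ i : Fin (n - 1),
          H (Fin.castLE (Nat.sub_le n 1) i)
            (Fin.castLE (le_trans (Nat.sub_le n 1) hnm) i) = (d i : ℤ)} δ) :
    HasMatDensity
      {A : Matrix (Fin n) (Fin m) ℤ | ∃ H, IsHNFOf H A ∧
        (∀ i : Fin (n - 1),
          H (Fin.castLE (Nat.sub_le n 1) i)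
            (Fin.castLE (le_trans (Nat.sub_le n 1) hnm) i) = (d i : ℤ)) ∧
        H ⟨n - 1, Nat.sub_lt (lt_of_lt_of_le Nat.zero_lt_two hn) Nat.one_pos⟩
            ⟨n - 1, lt_of_lt_of_le (Nat.sub_lt (lt_of_lt_of_le Nat.zero_lt_two hn) Nat.one_pos) hnm⟩
          % (t : ℤ) = (r : ℤ)}
      (δ / (t : ℝ)) := by
  obtain ⟨N, rfl⟩ : ∃ N, n = N + 1 := ⟨n - 1, by omega⟩
  exact key hnm d hd t r hrt δ hδ
end
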